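/- Assume that g : U' → U has no polynomial-like restriction to a neighborhood of its postcritical set P_g, i.e. there are no topological disks V', V ⊂ U with P_g ⊂ V', V' = g⁻¹(V), closure(V') ⊂ V. Let R_g be the closure in the Riemann sphere of the set of repelling periodic points of g : U' → U. Then the compact set R_g contains a nontrivial continuum which has common points with the range U as well as with its boundary ∂U. -/

import Mathlib

open Set Function Metric Topology Filter

noncomputable section

/-- A topological disk: a (nonempty, connected) simply connected planar domain. -/
def IsTopDisk (V : Set ℂ) : Prop :=
  IsOpen V ∧ IsConnected V ∧ SimplyConnectedSpace V

/-- Critical points of `g` lying in `U'`. -/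
def critPts (g : ℂ → ℂ) (U' : Set ℂ) : Set ℂ := {z | z ∈ U' ∧ deriv g z = 0}

/-- The postcritical set of `g : U' → U`. -/
def postCrit (g : ℂ → ℂ) (U' : Set ℂ) : Set ℂ :=
  closure (⋃ n : ℕ, g^[n] '' critPts g U')

/-- `g : U' → U` is a proper map: preimages of compact subsets of `U` are compact. -/
def ProperOn (g : ℂ → ℂ) (U' U : Set ℂ) : Prop :=
  ∀ K : Set ℂ, K ⊆ U → IsCompact K → IsCompact (U' ∩ g ⁻¹' K)

/-- `g : U' → U` has degree `d`: every point of `U` has a preimage, and every point of `U`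
which is not a critical value has exactly `d` preimages in `U'`. -/
def HasDeg (g : ℂ → ℂ) (U' U : Set ℂ) (d : ℕ) : Prop :=
  (∀ w ∈ U, (U' ∩ g ⁻¹' {w}).Nonempty) ∧
  ∀ w ∈ U, w ∉ g '' critPts g U' → (U' ∩ g ⁻¹' {w}).ncard = d

/-- Standing assumptions: `U' ⊆ U` are simply connected domains in `ℂ` with `U' ≠ U`,
`g : U' → U` is a proper holomorphic map of degree `d ≥ 2`, all forward iterates of the
critical points are defined, the postcritical set is a compact subset of `U'`, and if the
postcritical set is a singleton `{c}` then `g⁻¹(c) ≠ {c}`. -/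
structure PLSetting (g : ℂ → ℂ) (U' U : Set ℂ) (d : ℕ) : Prop where
  disk' : IsTopDisk U'
  disk : IsTopDisk U
  subset : U' ⊆ U
  ne : U' ≠ U
  two_le_d : 2 ≤ d
  holo : DifferentiableOn ℂ g U'
  mapsTo : MapsTo g U' U
  proper : ProperOn g U' U
  deg : HasDeg g U' U d
  crit_orbit : ∀ c ∈ critPts g U', ∀ n : ℕ, g^[n] c ∈ U'
  postCrit_compact : IsCompact (postCrit g U')
  postCrit_subset : postCrit g U' ⊆ U'
  postCrit_singleton : ∀ c : ℂ, postCrit g U' = {c} → U' ∩ g ⁻¹' {c} ≠ {c}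

/-- Repelling periodic points of `g : U' → U`. -/
def repellingPts (g : ℂ → ℂ) (U' : Set ℂ) : Set ℂ :=
  {a | ∃ p : ℕ, 1 ≤ p ∧ (∀ n : ℕ, g^[n] a ∈ U') ∧ g^[p] a = a ∧ 1 < ‖deriv (g^[p]) a‖}

/-- `R_g`: the closure in the Riemann sphere (one-point compactification of `ℂ`) of the set
of repelling periodic points of `g : U' → U`. -/
def sphereRepClosure (g : ℂ → ℂ) (U' : Set ℂ) : Set (OnePoint ℂ) :=
  closure ((fun z : ℂ => (z : OnePoint ℂ)) '' repellingPts g U')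

set_option linter.unusedVariables false


lemma precon_subset {α : Type*} [TopologicalSpace α] {S A : Set α} (hS : IsPreconnected S)
    (hfr : ∀ x ∈ S, x ∉ frontier A) (hne : (S ∩ A).Nonempty) : S ⊆ A := by
  have h1 : S ⊆ interior A ∪ (closure A)ᶜ := by
    intro x hx
    by_cases hi : x ∈ interior A
    · exact Or.inl hi
    · right
      intro hc
      exact hfr x hx ⟨hc, hi⟩
  have hd : Disjoint (interior A) (closure A)ᶜ := by
    rw [Set.disjoint_left]
    intro x hx hx'
    exact hx' (subset_closure (interior_subset hx))
  obtain ⟨x, hxS, hxA⟩ := hne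
  have hxi : x ∈ interior A := by
    rcases h1 hxS with h | h
    · exact h
    · exact absurd (subset_closure hxA) h
  exact (hS.subset_left_of_subset_union isOpen_interior isClosed_closure.isOpen_compl hd h1
    ⟨x, hxS, hxi⟩).trans interior_subset

/-- polynomial-hull style filling of a planar set -/
def hull (K : Set ℂ) : Set ℂ := {z | Bornology.IsBounded (connectedComponentIn Kᶜ z)}

lemma mem_hull {K : Set ℂ} {z : ℂ} :
    z ∈ hull K ↔ Bornology.IsBounded (connectedComponentIn Kᶜ z) := Iff.rfl

/-- fullness -/
def Full (V : Set ℂ) : Prop := ∀ K : Set ℂ, K ⊆ V → IsCompact K → hull K ⊆ V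

lemma subset_hull (K : Set ℂ) : K ⊆ hull K := by
  intro z hz
  have : connectedComponentIn Kᶜ z = ∅ := connectedComponentIn_eq_empty (by simpa using hz)
  simp [hull, this]

lemma hull_mono {K L : Set ℂ} (h : K ⊆ L) : hull K ⊆ hull L := by
  intro z hz
  exact Bornology.IsBounded.subset (mem_hull.1 hz) (connectedComponentIn_mono z (compl_subset_compl.2 h))

lemma cc_frontier {K : Set ℂ} (hK : IsClosed K) (z : ℂ) :
    frontier (connectedComponentIn Kᶜ z) ⊆ K := by
  intro w hw
  by_contra hwK
  have ho : IsOpen (connectedComponentIn Kᶜ z) := hK.isOpen_compl.connectedComponentIn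
  have ho' : IsOpen (connectedComponentIn Kᶜ w) := hK.isOpen_compl.connectedComponentIn
  have hwm : w ∈ connectedComponentIn Kᶜ w := mem_connectedComponentIn hwK
  have hc : w ∈ closure (connectedComponentIn Kᶜ z) := hw.1
  obtain ⟨x, hx1, hx2⟩ := mem_closure_iff.1 hc _ ho' hwm
  have e1 := connectedComponentIn_eq hx1
  have e2 := connectedComponentIn_eq hx2
  have : w ∈ connectedComponentIn Kᶜ z := by rw [e2, ← e1]; exact hwm
  rw [ho.frontier_eq] at hw
  exact hw.2 this

lemma cc_subset_hull {K : Set ℂ} {z : ℂ} (hz : z ∈ hull K) :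
    connectedComponentIn Kᶜ z ⊆ hull K := by
  intro w hw
  have := connectedComponentIn_eq hw
  rw [mem_hull, ← this]; exact hz

lemma cc_disjoint_hull {K : Set ℂ} {z : ℂ} (hz : z ∉ hull K) :
    connectedComponentIn Kᶜ z ⊆ (hull K)ᶜ := by
  intro w hw hw'
  have := connectedComponentIn_eq hw
  apply hz
  rw [mem_hull, this]; exact hw'

lemma subset_hull_of_frontier {K B : Set ℂ} (hB : Bornology.IsBounded B)
    (hf : frontier B ⊆ K) : B ⊆ hull K := by
  intro z hz
  by_cases hzK : z ∈ K
  · exact subset_hull K hzK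
  refine hB.subset (precon_subset isPreconnected_connectedComponentIn ?_
    ⟨z, mem_connectedComponentIn hzK, hz⟩)
  intro x hx hx'
  exact connectedComponentIn_subset _ _ hx (hf hx')

lemma isConnected_outer {R : ℝ} (hR : 0 < R) : IsConnected {z : ℂ | R < ‖z‖} := by
  have : {z : ℂ | R < ‖z‖} = (fun p : ℝ × ℝ => (p.1 : ℂ) * Complex.exp (p.2 * Complex.I)) ''
      (Ioi R ×ˢ univ) := by
    ext z
    constructor
    · intro hz
      exact ⟨(‖z‖, Complex.arg z), ⟨hz, trivial⟩, Complex.norm_mul_exp_arg_mul_I z⟩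
    · rintro ⟨⟨r, t⟩, ⟨hr, -⟩, rfl⟩
      have hr' : R < r := hr
      simp only [mem_ofPred_eq, norm_mul, Complex.norm_exp_ofReal_mul_I, Complex.norm_real,
        Real.norm_eq_abs, mul_one]
      exact hr'.trans_le (le_abs_self r)
  rw [this]
  refine IsConnected.image ?_ _ (by fun_prop)
  exact isConnected_Ioi.prod isConnected_univ

lemma not_bounded_outer {R : ℝ} : ¬ Bornology.IsBounded {z : ℂ | R < ‖z‖} := by
  intro h
  obtain ⟨C, hC⟩ := h.exists_norm_le
  have h1 := hC ((|R| + |C| + 1 : ℝ) : ℂ) (by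
    simp only [mem_ofPred_eq, Complex.norm_real, Real.norm_eq_abs]
    have := le_abs_self R
    have := abs_nonneg C
    have : |R| + |C| + 1 ≤ |(|R| + |C| + 1)| := le_abs_self _
    linarith)
  simp only [Complex.norm_real, Real.norm_eq_abs] at h1
  have : |R| + |C| + 1 ≤ |(|R| + |C| + 1)| := le_abs_self _
  have := le_abs_self C
  have := abs_nonneg R
  linarith

lemma compl_hull_eq {K : Set ℂ} (hK : IsCompact K) :
    ∃ z0, z0 ∉ hull K ∧ (hull K)ᶜ = connectedComponentIn Kᶜ z0 ∧
      ∃ R : ℝ, 0 < R ∧ {z : ℂ | R < ‖z‖} ⊆ (hull K)ᶜ := by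
  obtain ⟨R, hR0, hR⟩ := hK.isBounded.exists_pos_norm_le
  have hcon := isConnected_outer hR0
  obtain ⟨z0, hz0⟩ := hcon.nonempty
  have hsub : {z : ℂ | R < ‖z‖} ⊆ Kᶜ := by
    intro z hz hzK
    exact absurd (hR z hzK) (not_le.2 hz)
  have h1 : {z : ℂ | R < ‖z‖} ⊆ connectedComponentIn Kᶜ z0 :=
    hcon.2.subset_connectedComponentIn hz0 hsub
  have h0 : z0 ∉ hull K := fun h => not_bounded_outer (Bornology.IsBounded.subset h h1)
  have h2 : (hull K)ᶜ = connectedComponentIn Kᶜ z0 := by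
    apply Subset.antisymm _ (cc_disjoint_hull h0)
    intro z hz
    have : ∃ w ∈ connectedComponentIn Kᶜ z, R < ‖w‖ := by
      by_contra hcon
      push Not at hcon
      apply hz
      exact (isBounded_closedBall (x := (0:ℂ)) (r := R)).subset fun w hw => by
        simpa using hcon w hw
    obtain ⟨w, hw, hwR⟩ := this
    have e1 := connectedComponentIn_eq hw
    have e2 := connectedComponentIn_eq (h1 hwR)
    rw [e2, ← e1]
    exact mem_connectedComponentIn (fun h => hz (subset_hull K h))
  exact ⟨z0, h0, h2, R, hR0, h2 ▸ h1⟩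

lemma isCompact_hull {K : Set ℂ} (hK : IsCompact K) : IsCompact (hull K) := by
  obtain ⟨z0, -, h, R, hR, hsub⟩ := compl_hull_eq hK
  have hcl : IsClosed (hull K) := by
    rw [← isOpen_compl_iff, h]
    exact hK.isClosed.isOpen_compl.connectedComponentIn
  refine Metric.isCompact_of_isClosed_isBounded hcl ?_
  refine (isBounded_closedBall (x := (0:ℂ)) (r := R)).subset fun w hw => ?_
  by_contra hw'
  have : w ∈ {z : ℂ | R < ‖z‖} := by simpa using hw'
  exact hsub this hw

lemma isConnected_compl_hull {K : Set ℂ} (hK : IsCompact K) : IsConnected (hull K)ᶜ := by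
  obtain ⟨z0, h0, h, -⟩ := compl_hull_eq hK
  exact ⟨⟨z0, h0⟩, h ▸ isPreconnected_connectedComponentIn⟩

lemma not_bounded_compl_hull {K : Set ℂ} (hK : IsCompact K) :
    ¬ Bornology.IsBounded (hull K)ᶜ := by
  obtain ⟨z0, -, -, R, hR, hsub⟩ := compl_hull_eq hK
  exact fun h => not_bounded_outer (h.subset hsub)

lemma hull_hull {K : Set ℂ} (hK : IsCompact K) : hull (hull K) = hull K := by
  apply Subset.antisymm _ (subset_hull _)
  intro z hz
  by_contra hz'
  have := (isConnected_compl_hull hK).2.connectedComponentIn hz'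
  exact not_bounded_compl_hull hK (this ▸ hz)

lemma Full.compact_hull {V K : Set ℂ} (hV : Full V) (hK : IsCompact K) (hKV : K ⊆ V) :
    hull K ⊆ V := hV K hKV hK

lemma full_of_hull_eq {K : Set ℂ} (h : hull K = K) : Full K := fun L hL _ =>
  (hull_mono hL).trans h.subset

lemma Full.inter {V W : Set ℂ} (hV : Full V) (hW : Full W) : Full (V ∩ W) := fun K hK hc =>
  subset_inter (hV K (hK.trans inter_subset_left) hc) (hW K (hK.trans inter_subset_right) hc)

lemma full_univ : Full univ := fun _ _ _ => subset_univ _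

lemma cc_nonempty_frontier {K : Set ℂ} {z : ℂ} (hz : z ∉ K) (hne : K.Nonempty) :
    (frontier (connectedComponentIn Kᶜ z)).Nonempty := by
  rw [nonempty_frontier_iff]
  refine ⟨⟨z, mem_connectedComponentIn hz⟩, ?_⟩
  intro h
  obtain ⟨w, hw⟩ := hne
  have : w ∈ connectedComponentIn Kᶜ z := h ▸ mem_univ w
  exact connectedComponentIn_subset _ _ this hw

lemma hull_empty : hull ∅ = ∅ := by
  apply eq_empty_of_forall_notMem
  intro z hz
  have h : Bornology.IsBounded (connectedComponentIn (∅ : Set ℂ)ᶜ z) := hz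
  rw [compl_empty, isPreconnected_univ.connectedComponentIn (mem_univ z)] at h
  exact not_bounded_outer (R := 0) (h.subset (subset_univ _))

lemma isConnected_hull {K : Set ℂ} (hK : IsCompact K) (hc : IsConnected K) :
    IsConnected (hull K) := by
  obtain ⟨x, hx⟩ := hc.nonempty
  refine ⟨⟨x, subset_hull K hx⟩, isPreconnected_of_forall x fun y hy => ?_⟩
  by_cases hyK : y ∈ K
  · exact ⟨K, subset_hull K, hx, hyK, hc.2⟩
  obtain ⟨w, hw⟩ := cc_nonempty_frontier hyK ⟨x, hx⟩
  have hwK := cc_frontier hK.isClosed y hw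
  refine ⟨K ∪ closure (connectedComponentIn Kᶜ y), ?_, Or.inl hx,
    Or.inr (subset_closure (mem_connectedComponentIn hyK)), ?_⟩
  · refine union_subset (subset_hull K) ?_
    exact closure_minimal (cc_subset_hull hy) (isCompact_hull hK).isClosed
  · exact hc.2.union w hwK hw.1 isPreconnected_connectedComponentIn.closure

lemma isOpen_hull_diff {K : Set ℂ} (hK : IsCompact K) : IsOpen (hull K \ K) := by
  rw [isOpen_iff_mem_nhds]
  rintro z ⟨hz, hzK⟩
  refine mem_of_superset (hK.isClosed.isOpen_compl.connectedComponentIn.mem_nhds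
    (mem_connectedComponentIn hzK)) ?_
  exact fun w hw => ⟨cc_subset_hull hz hw, connectedComponentIn_subset _ _ hw⟩

lemma frontier_hull_subset {K : Set ℂ} (hK : IsCompact K) : frontier (hull K) ⊆ frontier K := by
  intro z hz
  have hzh : z ∈ hull K := (isCompact_hull hK).isClosed.frontier_subset hz
  have hzK : z ∈ K := by
    by_contra h
    exact hz.2 (interior_maximal sdiff_subset (isOpen_hull_diff hK) ⟨hzh, h⟩)
  refine ⟨subset_closure hzK, fun h => hz.2 (interior_mono (subset_hull K) h)⟩

/-- images of hulls under holomorphic maps -/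
lemma image_hull_subset {g : ℂ → ℂ} {W K : Set ℂ} (hW : IsOpen W) (hg : DifferentiableOn ℂ g W)
    (hK : IsCompact K) (hKW : hull K ⊆ W) : g '' hull K ⊆ hull (g '' K) := by
  rintro _ ⟨z, hz, rfl⟩
  by_contra hw
  have hgc : ContinuousOn g (hull K) := hg.continuousOn.mono hKW
  have hgK : IsCompact (g '' K) := hK.image_of_continuousOn (hgc.mono (subset_hull K))
  have hgH : IsCompact (g '' hull K) := (isCompact_hull hK).image_of_continuousOn hgc
  have hT := isConnected_compl_hull hgK
  refine not_bounded_compl_hull hgK (hgH.isBounded.subset (precon_subset hT.2 ?_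
    ⟨g z, hw, mem_image_of_mem g hz⟩))
  intro x hx hxf
  obtain ⟨y, hy, rfl⟩ := hgH.isClosed.frontier_subset hxf
  have hyK : y ∉ K := fun h => hx (subset_hull _ (mem_image_of_mem g h))
  have hCo : IsOpen (connectedComponentIn Kᶜ y) := hK.isClosed.isOpen_compl.connectedComponentIn
  have hCs := cc_subset_hull hy
  have hyC : y ∈ connectedComponentIn Kᶜ y := mem_connectedComponentIn hyK
  have han : AnalyticOnNhd ℂ g (connectedComponentIn Kᶜ y) :=
    (hg.mono (hCs.trans hKW)).analyticOnNhd hCo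
  rcases han.is_constant_or_isOpen isPreconnected_connectedComponentIn with ⟨w, hw⟩ | hop
  · have hKne : K.Nonempty := by
      rcases K.eq_empty_or_nonempty with h | h
      · rw [h, hull_empty] at hy; exact absurd hy (notMem_empty _)
      · exact h
    obtain ⟨p, hp⟩ := cc_nonempty_frontier hyK hKne
    have hpK := cc_frontier hK.isClosed y hp
    have : g p = w := by
      have hcl : closure (connectedComponentIn Kᶜ y) ⊆ hull K :=
        closure_minimal hCs (isCompact_hull hK).isClosed
      have h1 : g p ∈ closure (g '' connectedComponentIn Kᶜ y) :=
        (hgc.mono hcl).image_closure (mem_image_of_mem g hp.1)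
      have h2 : g '' connectedComponentIn Kᶜ y ⊆ {w} := by
        rintro _ ⟨t, ht, rfl⟩; exact hw t ht
      simpa using closure_mono h2 h1
    apply hx
    rw [hw y hyC, ← this]
    exact subset_hull _ (mem_image_of_mem g hpK)
  · apply hxf.2
    exact interior_maximal (image_mono hCs) (hop _ Subset.rfl hCo) (mem_image_of_mem g hyC)


lemma exp_one_const {α : Type*} [TopologicalSpace α] {S : Set α} (hS : IsPreconnected S)
    {h : α → ℂ} (hc : ContinuousOn h S) (he : ∀ x ∈ S, Complex.exp (h x) = 1)
    {x y : α} (hx : x ∈ S) (hy : y ∈ S) : h x = h y := by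
  have key : ∀ x ∈ S, ∃ n : ℤ, h x = n * (2 * Real.pi * Complex.I) := fun x hx =>
    Complex.exp_eq_one_iff.1 (he x hx)
  have hpi : (0:ℝ) < 2 * Real.pi := by positivity
  let k : α → ℝ := fun x => (h x).im / (2 * Real.pi)
  have hk : ∀ x ∈ S, ∀ n : ℤ, h x = n * (2 * Real.pi * Complex.I) → k x = n := by
    intro x hx n hn
    simp only [k, hn]
    simp
  have hkc : ContinuousOn k S := (Complex.continuous_im.comp_continuousOn hc).div_const _
  have hintz : ∀ x ∈ S, ∃ n : ℤ, k x = n := fun x hx => by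
    obtain ⟨n, hn⟩ := key x hx
    exact ⟨n, hk x hx n hn⟩
  have hord := (hS.image k hkc).ordConnected
  have main : ∀ x ∈ S, ∀ y ∈ S, ¬ k x < k y := by
    intro x hx y hy hlt
    obtain ⟨m, hm⟩ := hintz x hx
    obtain ⟨n, hn⟩ := hintz y hy
    have hmn : m + 1 ≤ n := by
      have : (m:ℝ) < n := by rw [← hm, ← hn]; exact hlt
      exact_mod_cast this
    have hmn' : (m:ℝ) + 1 ≤ n := by exact_mod_cast hmn
    have : (m:ℝ) + 1/2 ∈ k '' S := hord.out (mem_image_of_mem k hx) (mem_image_of_mem k hy)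
      ⟨by rw [hm]; linarith, by rw [hn]; linarith⟩
    obtain ⟨z, hz, hzk⟩ := this
    obtain ⟨p, hp⟩ := hintz z hz
    have h2 : (2 * p : ℝ) = 2 * m + 1 := by rw [← hp, hzk]; ring
    have h3 : 2 * p = 2 * m + 1 := by exact_mod_cast h2
    omega
  have hkk : k x = k y := le_antisymm (not_lt.1 (main y hy x hx)) (not_lt.1 (main x hx y hy))
  obtain ⟨m, hm⟩ := key x hx
  obtain ⟨n, hn⟩ := key y hy
  have : (m : ℝ) = n := by rw [← hk x hx m hm, ← hk y hy n hn, hkk]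
  have : m = n := by exact_mod_cast this
  rw [hm, hn, this]

lemma exp_eq_const {α : Type*} [TopologicalSpace α] {S : Set α} (hS : IsPreconnected S)
    {h k : α → ℂ} (hc : ContinuousOn h S) (hk : ContinuousOn k S)
    (he : ∀ x ∈ S, Complex.exp (h x) = Complex.exp (k x))
    {x y : α} (hx : x ∈ S) (hy : y ∈ S) : h x - k x = h y - k y := by
  refine exp_one_const (h := fun x => h x - k x) hS (hc.sub hk) ?_ hx hy
  intro z hz
  rw [Complex.exp_sub, he z hz, div_self (Complex.exp_ne_zero _)]

lemma log_on_plane {f : ℂ → ℂ} (hf : Continuous f) (h0 : ∀ z, f z ≠ 0) :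
    ∃ L : ℂ → ℂ, Continuous L ∧ ∀ z, Complex.exp (L z) = f z := by
  have hsc : IsSimplyConnected (univ : Set ℂ) := by
    have : ContractibleSpace (univ : Set ℂ) :=
      (convex_univ (𝕜 := ℝ) (E := ℂ)).contractibleSpace univ_nonempty
    show SimplyConnectedSpace (univ : Set ℂ)
    infer_instance
  obtain ⟨L, hL, he⟩ := Complex.exists_continuousOn_eqOn_exp_comp hsc isOpen_univ
    hf.continuousOn (by rintro ⟨z, -, hz⟩; exact h0 z hz)
  exact ⟨L, continuousOn_univ.1 hL, fun z => he (mem_univ z)⟩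

lemma two_pi_I_ne : (2 * Real.pi * Complex.I : ℂ) ≠ 0 := Complex.two_pi_I_ne_zero

lemma unicoherent_closed {A B : Set ℂ} (hA : IsClosed A) (hB : IsClosed B)
    (hAc : IsPreconnected A) (hBc : IsPreconnected B) (hU : A ∪ B = univ) :
    IsPreconnected (A ∩ B) := by
  rw [isPreconnected_closed_iff]
  intro F0 F1 h0 h1 hsub ⟨x0, hx0, hx0F⟩ ⟨x1, hx1, hx1F⟩
  by_contra hne
  rw [not_nonempty_iff_eq_empty] at hne
  have hd : Disjoint (A ∩ B ∩ F0) (A ∩ B ∩ F1) := by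
    rw [Set.disjoint_left]
    rintro x ⟨hx, hx0⟩ ⟨-, hx1⟩
    have : x ∈ A ∩ B ∩ (F0 ∩ F1) := ⟨hx, hx0, hx1⟩
    rw [hne] at this; exact this
  obtain ⟨l, hl0, hl1, -⟩ := exists_continuous_zero_one_of_isClosed
    ((hA.inter hB).inter h0) ((hA.inter hB).inter h1) hd
  classical
  let e : ℂ → ℂ := fun z => (l z : ℂ) * (2 * Real.pi * Complex.I)
  have he : Continuous e := by fun_prop
  let f : ℂ → ℂ := fun z => if z ∈ A then Complex.exp (e z) else 1
  have hfA : ∀ z ∈ A, f z = Complex.exp (e z) := fun z hz => if_pos hz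
  have hfB : ∀ z ∈ B, f z = 1 := by
    intro z hz
    by_cases hzA : z ∈ A
    · rw [hfA z hzA]
      rcases hsub ⟨hzA, hz⟩ with h | h
      · have : l z = 0 := hl0 ⟨⟨hzA, hz⟩, h⟩
        simp [e, this]
      · have : l z = 1 := hl1 ⟨⟨hzA, hz⟩, h⟩
        simp [e, this, Complex.exp_two_pi_mul_I]
    · exact if_neg hzA
  have hf : Continuous f := by
    rw [← continuousOn_univ, ← hU]
    refine ContinuousOn.union_of_isClosed ?_ ?_ hA hB
    · exact (Complex.continuous_exp.comp he).continuousOn.congr hfA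
    · exact continuousOn_const.congr hfB
  have hf0 : ∀ z, f z ≠ 0 := by
    intro z
    simp only [f]
    split_ifs
    · exact Complex.exp_ne_zero _
    · exact one_ne_zero
  obtain ⟨L, hL, hLe⟩ := log_on_plane hf hf0
  have e1 := exp_eq_const hAc hL.continuousOn he.continuousOn
    (fun z hz => by rw [hLe, hfA z hz]) hx0.1 hx1.1
  have e2 := exp_one_const hBc hL.continuousOn (fun z hz => by rw [hLe, hfB z hz]) hx0.2 hx1.2
  have l0 : l x0 = 0 := hl0 ⟨hx0, hx0F⟩
  have l1 : l x1 = 1 := hl1 ⟨hx1, hx1F⟩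
  rw [e2] at e1
  simp only [e, l0, l1] at e1
  apply two_pi_I_ne
  have := sub_right_injective e1
  simpa using this.symm

lemma unicoherent_open {A B : Set ℂ} (hA : IsOpen A) (hB : IsOpen B)
    (hAc : IsPreconnected A) (hBc : IsPreconnected B) (hU : A ∪ B = univ) :
    IsPreconnected (A ∩ B) := by
  rintro G0 G1 h0 h1 hsub ⟨x0, hx0, hx0F⟩ ⟨x1, hx1, hx1F⟩
  by_contra hne
  rw [not_nonempty_iff_eq_empty] at hne
  have hAB : ∀ z, z ∈ A ∨ z ∈ B := fun z => by
    have : z ∈ A ∪ B := hU ▸ mem_univ z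
    exact this
  have hd : Disjoint Bᶜ Aᶜ := by
    rw [Set.disjoint_left]
    intro x hx hx'
    rcases hAB x with h | h
    · exact hx' h
    · exact hx h
  obtain ⟨l, hl0, hl1, -⟩ := exists_continuous_zero_one_of_isClosed
    hB.isClosed_compl hA.isClosed_compl hd
  classical
  let G : Set ℂ := A ∩ B ∩ G1
  have hG : IsOpen G := (hA.inter hB).inter h1
  have hfr : ∀ z ∈ frontier G, (z ∉ A ∧ z ∈ B) ∨ (z ∈ A ∧ z ∉ B) := by
    intro z hz
    rw [hG.frontier_eq] at hz
    by_cases hzA : z ∈ A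
    · by_cases hzB : z ∈ B
      · exfalso
        rcases hsub ⟨hzA, hzB⟩ with h | h
        · obtain ⟨y, hy1, hy2⟩ := mem_closure_iff.1 hz.1 _ ((hA.inter hB).inter h0)
            ⟨⟨hzA, hzB⟩, h⟩
          have : y ∈ A ∩ B ∩ (G0 ∩ G1) := ⟨hy1.1, hy1.2, hy2.2⟩
          rw [hne] at this; exact this
        · exact hz.2 ⟨⟨hzA, hzB⟩, h⟩
      · exact Or.inr ⟨hzA, hzB⟩
    · exact Or.inl ⟨hzA, (hAB z).resolve_left hzA⟩
  let e : ℂ → ℂ := fun z => (l z : ℂ) * (2 * Real.pi * Complex.I)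
  have he : Continuous e := by fun_prop
  let f : ℂ → ℂ := fun z => if z ∈ G then Complex.exp (e z) else 1
  have hf : Continuous f := by
    refine Continuous.if ?_ (Complex.continuous_exp.comp he) continuous_const
    intro z hz
    rcases hfr z hz with h | h
    · have : l z = 1 := hl1 h.1
      simp [e, this, Complex.exp_two_pi_mul_I]
    · have : l z = 0 := hl0 h.2
      simp [e, this]
  have hf0 : ∀ z, f z ≠ 0 := by
    intro z
    simp only [f]
    split_ifs
    · exact Complex.exp_ne_zero _
    · exact one_ne_zero
  obtain ⟨L, hL, hLe⟩ := log_on_plane hf hf0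
  let m : ℂ → ℂ := fun z => if z ∈ G then e z else 0
  let m' : ℂ → ℂ := fun z => if z ∈ G then e z else 2 * Real.pi * Complex.I
  have hm : ContinuousOn m A := by
    refine ContinuousOn.if ?_ he.continuousOn continuousOn_const
    rintro z ⟨hzA, hz⟩
    rcases hfr z hz with h | h
    · exact absurd hzA h.1
    · have : l z = 0 := hl0 h.2
      simp [e, this]
  have hm' : ContinuousOn m' B := by
    refine ContinuousOn.if ?_ he.continuousOn continuousOn_const
    rintro z ⟨hzA, hz⟩
    rcases hfr z hz with h | h
    · have : l z = 1 := hl1 h.1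
      simp [e, this]
    · exact absurd hzA h.2
  have e1 := exp_eq_const hAc hL.continuousOn hm
    (fun z hz => by rw [hLe]; simp only [f, m]; split_ifs <;> simp) hx0.1 hx1.1
  have e2 := exp_eq_const hBc hL.continuousOn hm'
    (fun z hz => by
      rw [hLe]; simp only [f, m']; split_ifs <;> simp [Complex.exp_two_pi_mul_I]) hx0.2 hx1.2
  have g0 : x0 ∉ G := by
    intro h
    have : x0 ∈ A ∩ B ∩ (G0 ∩ G1) := ⟨hx0, hx0F, h.2⟩
    rw [hne] at this; exact this
  have g1 : x1 ∈ G := ⟨hx1, hx1F⟩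
  simp only [m, m', g0, g1, if_true, if_false] at e1 e2
  apply two_pi_I_ne
  linear_combination e1 - e2

/-- no continuous logarithm of `z - p` on a large circle -/
lemma no_log_circle {M : ℂ → ℂ} {p : ℂ} {R : ℝ} (hR : 0 < R) (hM : ContinuousOn M (sphere p R))
    (he : ∀ z ∈ sphere p R, Complex.exp (M z) = z - p) : False := by
  let c : ℝ → ℂ := fun t => p + R * Complex.exp (t * Complex.I)
  have hc : Continuous c := by fun_prop
  have hmem : ∀ t, c t ∈ sphere p R := by
    intro t
    simp [c, Complex.norm_exp_ofReal_mul_I, abs_of_pos hR]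
  have hcont : ContinuousOn (fun t => M (c t)) (univ : Set ℝ) :=
    hM.comp hc.continuousOn (fun t _ => hmem t)
  have hk : ContinuousOn (fun t : ℝ => (Real.log R : ℂ) + t * Complex.I) univ := by fun_prop
  have := exp_eq_const isPreconnected_univ hcont hk (fun t _ => by
    rw [he _ (hmem t), Complex.exp_add, Complex.ofReal_log hR.le,
      Complex.exp_log (by exact_mod_cast hR.ne')]
    simp [c]) (mem_univ (0:ℝ)) (mem_univ (2 * Real.pi))
  have h2 : c 0 = c (2 * Real.pi) := by simp [c, Complex.exp_two_pi_mul_I]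
  simp only [h2] at this
  apply two_pi_I_ne
  have := sub_right_injective this
  simp at this

lemma full_of_log {V : Set ℂ} (hlog : ∀ p ∉ V, ∃ L : ℂ → ℂ, ContinuousOn L V ∧
    ∀ z ∈ V, Complex.exp (L z) = z - p) : Full V := by
  intro K hKV hK p hp
  by_contra hpV
  obtain ⟨L, hL, hLe⟩ := hlog p hpV
  obtain ⟨T, hT⟩ := ContinuousMap.exists_restrict_eq hK.isClosed
    (⟨fun x : K => L x, (continuousOn_iff_continuous_domRestrict.1 (hL.mono hKV))⟩ : C(K, ℂ))
  have hT' : ∀ x ∈ K, T x = L x := by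
    intro x hx
    exact congrArg (fun F : C(K, ℂ) => F ⟨x, hx⟩) hT
  have hpK : p ∉ K := fun h => hpV (hKV h)
  set B := connectedComponentIn Kᶜ p with hBdef
  have hpB : p ∈ B := mem_connectedComponentIn hpK
  have hfr : frontier B ⊆ K := cc_frontier hK.isClosed p
  have hBb : Bornology.IsBounded B := hp
  classical
  let f : ℂ → ℂ := fun z => if z ∈ B then Complex.exp (T z) else z - p
  have hf : Continuous f := by
    refine Continuous.if ?_ (by fun_prop) (by fun_prop)
    intro z hz
    rw [hT' z (hfr hz), hLe z (hKV (hfr hz))]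
  have hf0 : ∀ z, f z ≠ 0 := by
    intro z
    simp only [f]
    split_ifs with h
    · exact Complex.exp_ne_zero _
    · intro h0
      rw [sub_eq_zero] at h0
      exact h (h0 ▸ hpB)
  obtain ⟨M, hM, hMe⟩ := log_on_plane hf hf0
  obtain ⟨R, hR⟩ := hBb.subset_ball p
  have hR0 : 0 < R := by
    have := hR hpB
    simpa using this
  refine no_log_circle hR0 (M := M) (p := p) hM.continuousOn ?_
  intro z hz
  rw [hMe]
  have : z ∉ B := fun h => by
    have h1 := hR h
    rw [mem_ball] at h1; rw [mem_sphere] at hz; linarith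
  simp [f, this]

lemma full_of_sc {V : Set ℂ} (ho : IsOpen V) (hsc : SimplyConnectedSpace V) : Full V := by
  apply full_of_log
  intro p hp
  obtain ⟨L, hL, he⟩ := Complex.exists_continuousOn_eqOn_exp_comp (U := V) (g := fun z => z - p)
    (show IsSimplyConnected V from hsc) ho (by fun_prop) (by
      rintro ⟨z, hz, hz'⟩
      rw [sub_eq_zero] at hz'
      exact hp (hz' ▸ hz))
  exact ⟨L, hL, fun z hz => he hz⟩

/-- logarithm of `w - a` on a compact set not surrounding `a` -/
def HasLog (K : Set ℂ) (a : ℂ) : Prop :=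
  ∃ L : ℂ → ℂ, ContinuousOn L K ∧ ∀ z ∈ K, Complex.exp (L z) = z - a

lemma HasLog.transfer {K : Set ℂ} {a b : ℂ} (h : HasLog K a)
    (hd : ∀ z ∈ K, ‖a - b‖ < ‖z - a‖) : HasLog K b := by
  obtain ⟨L, hL, he⟩ := h
  have hne : ∀ z ∈ K, z - a ≠ 0 := fun z hz => by
    rw [← he z hz]; exact Complex.exp_ne_zero _
  have hsl : ∀ z ∈ K, 1 + (a - b) / (z - a) ∈ Complex.slitPlane := by
    intro z hz
    apply Complex.mem_slitPlane_of_norm_lt_one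
    rw [norm_div, div_lt_one (norm_pos_iff.2 (hne z hz))]
    exact hd z hz
  refine ⟨fun z => L z + Complex.log (1 + (a - b) / (z - a)), ?_, ?_⟩
  · refine hL.add (ContinuousOn.clog ?_ hsl)
    exact continuousOn_const.add (continuousOn_const.div (by fun_prop) hne)
  · intro z hz
    rw [Complex.exp_add, he z hz, Complex.exp_log (Complex.slitPlane_ne_zero (hsl z hz))]
    have := hne z hz
    field_simp
    ring

lemma hasLog_of_notMem_hull {K : Set ℂ} (hK : IsCompact K) {a : ℂ} (ha : a ∉ hull K) :
    HasLog K a := by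
  obtain ⟨z0, h0, -, R, hR, hsub⟩ := compl_hull_eq hK
  obtain ⟨R', hR'0, hR'⟩ := hK.isBounded.exists_pos_norm_le
  let b : ℂ := ((R + R' + 1 : ℝ) : ℂ)
  have hbn : ‖b‖ = R + R' + 1 := by
    simp only [b, Complex.norm_real, Real.norm_eq_abs]
    exact abs_of_pos (by linarith)
  have hb : b ∈ (hull K)ᶜ := hsub (by
    show R < ‖b‖
    rw [hbn]; linarith)
  have hb0 : b ≠ 0 := by
    intro h; rw [h, norm_zero] at hbn; linarith
  have hbL : HasLog K b := by
    have hsl : ∀ z ∈ K, 1 + (- z / b) ∈ Complex.slitPlane := by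
      intro z hz
      apply Complex.mem_slitPlane_of_norm_lt_one
      rw [norm_div, norm_neg, div_lt_one (norm_pos_iff.2 hb0), hbn]
      have := hR' z hz
      linarith
    refine ⟨fun z => Complex.log (-b) + Complex.log (1 + (- z / b)), ?_, ?_⟩
    · refine continuousOn_const.add (ContinuousOn.clog (by fun_prop) hsl)
    · intro z hz
      rw [Complex.exp_add, Complex.exp_log (neg_ne_zero.2 hb0),
        Complex.exp_log (Complex.slitPlane_ne_zero (hsl z hz))]
      field_simp
      ring
  have key := (isConnected_compl_hull hK).2.induction₂ (fun x y => HasLog K x ↔ HasLog K y)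
    ?_ ?_ ?_ hb ha
  · exact key.1 hbL
  · intro x hx
    have hxK : x ∈ Kᶜ := fun h => hx (subset_hull K h)
    obtain ⟨r, hr, hball⟩ := Metric.isOpen_iff.1 hK.isClosed.isOpen_compl x hxK
    filter_upwards [mem_nhdsWithin_of_mem_nhds (ball_mem_nhds x (half_pos hr))] with y hy
    have hxy : ‖x - y‖ < r / 2 := by rw [← dist_eq_norm, dist_comm]; exact hy
    have hz : ∀ z ∈ K, r ≤ ‖z - x‖ := by
      intro z hz
      by_contra h
      exact hball (by rw [mem_ball, dist_eq_norm]; exact not_le.1 h) hz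
    constructor
    · intro h
      exact h.transfer fun z hz' => by have := hz z hz'; linarith
    · intro h
      refine h.transfer fun z hz' => ?_
      have h1 := hz z hz'
      have h2 : ‖z - x‖ ≤ ‖z - y‖ + ‖x - y‖ := by
        have := norm_sub_le_norm_sub_add_norm_sub z y x
        rwa [norm_sub_rev y x] at this
      rw [norm_sub_rev y x]
      linarith
  · intro x y z _ _ _ h1 h2
    exact h1.trans h2
  · intro x y _ _ h
    exact h.symm

/-- join points of an open connected set by compact connected sets -/
lemma exists_compact_connected_two {W : Set ℂ} (ho : IsOpen W) (hc : IsConnected W) {x y : ℂ}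
    (hx : x ∈ W) (hy : y ∈ W) : ∃ K ⊆ W, IsCompact K ∧ IsConnected K ∧ x ∈ K ∧ y ∈ K := by
  have hp : IsPathConnected W := (ho.isConnected_iff_isPathConnected).1 hc
  obtain ⟨γ, hγ⟩ := hp.joinedIn x hx y hy
  refine ⟨range γ, by rintro _ ⟨t, rfl⟩; exact hγ t, isCompact_range γ.continuous,
    isConnected_range γ.continuous, ⟨0, γ.source⟩, ⟨1, γ.target⟩⟩

lemma exists_compact_connected {W X : Set ℂ} (ho : IsOpen W) (hc : IsConnected W)
    (hX : IsCompact X) (hXW : X ⊆ W) :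
    ∃ K ⊆ W, IsCompact K ∧ IsConnected K ∧ X ⊆ K := by
  obtain ⟨w0, hw0⟩ := hc.nonempty
  refine hX.induction_on (p := fun S => ∃ K ⊆ W, IsCompact K ∧ IsConnected K ∧ w0 ∈ K ∧ S ⊆ K)
    ?_ ?_ ?_ ?_ |>.imp fun K h => ⟨h.1, h.2.1, h.2.2.1, h.2.2.2.2⟩
  · exact ⟨{w0}, by simpa, isCompact_singleton, isConnected_singleton, rfl, empty_subset _⟩
  · rintro s t hst ⟨K, h1, h2, h3, h4, h5⟩
    exact ⟨K, h1, h2, h3, h4, hst.trans h5⟩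
  · rintro s t ⟨K, h1, h2, h3, h4, h5⟩ ⟨K', h1', h2', h3', h4', h5'⟩
    exact ⟨K ∪ K', union_subset h1 h1', h2.union h2', ⟨⟨w0, Or.inl h4⟩, h3.2.union w0 h4 h4' h3'.2⟩,
      Or.inl h4, union_subset_union h5 h5'⟩
  · intro x hx
    obtain ⟨r, hr, hball⟩ := Metric.nhds_basis_closedBall.mem_iff.1 (ho.mem_nhds (hXW hx))
    obtain ⟨K, h1, h2, h3, h4, h5⟩ := exists_compact_connected_two ho hc hw0 (hXW hx)
    refine ⟨closedBall x r, mem_nhdsWithin_of_mem_nhds (closedBall_mem_nhds x hr),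
      K ∪ closedBall x r, union_subset h1 hball, h2.union (isCompact_closedBall x r), ⟨⟨w0, Or.inl h4⟩,
      h3.2.union x h5 (mem_closedBall_self hr.le) (isConnected_closedBall hr.le).2⟩, Or.inl h4,
      subset_union_right⟩

/-- Gluing logarithms from compact connected subsets. -/
lemma log_glue {V : Set ℂ} {f : ℂ → ℂ} (ho : IsOpen V) (hc : IsConnected V)
    (hlog : ∀ K ⊆ V, IsCompact K → ∃ L : ℂ → ℂ, ContinuousOn L K ∧
      ∀ z ∈ K, Complex.exp (L z) = f z) :
    ∃ L : ℂ → ℂ, ContinuousOn L V ∧ ∀ z ∈ V, Complex.exp (L z) = f z := by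
  obtain ⟨z0, hz0⟩ := hc.nonempty
  have hf0 : f z0 ≠ 0 := by
    obtain ⟨L, -, hL⟩ := hlog {z0} (by simpa) isCompact_singleton
    rw [← hL z0 rfl]; exact Complex.exp_ne_zero _
  have hnorm : ∀ K ⊆ V, IsCompact K → ∃ L : ℂ → ℂ, ContinuousOn L K ∧
      (∀ z ∈ K, Complex.exp (L z) = f z) ∧ (z0 ∈ K → L z0 = Complex.log (f z0)) := by
    intro K hK hKc
    obtain ⟨L, hL, hLe⟩ := hlog K hK hKc
    by_cases h : z0 ∈ K
    · refine ⟨fun z => L z + (Complex.log (f z0) - L z0), by fun_prop, ?_, ?_⟩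
      · intro z hz
        rw [Complex.exp_add, Complex.exp_sub, Complex.exp_log hf0, hLe z hz, hLe z0 h,
          div_self hf0, mul_one]
      · intro _; ring
    · exact ⟨L, hL, hLe, fun h' => absurd h' h⟩
  choose! Lk hLc hLe hL0 using hnorm
  have huniq : ∀ K K' : Set ℂ, K ⊆ V → K' ⊆ V → IsCompact K → IsCompact K' → IsConnected K →
      IsConnected K' → z0 ∈ K → z0 ∈ K' → ∀ z ∈ K, z ∈ K' → Lk K z = Lk K' z := by
    have aux : ∀ K K' : Set ℂ, K ⊆ K' → K' ⊆ V → IsCompact K → IsCompact K' → IsConnected K →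
        z0 ∈ K → ∀ z ∈ K, Lk K z = Lk K' z := by
      intro K K' hKK hK' hKc hKc' hKcon h0 z hz
      have := exp_eq_const hKcon.2 (hLc K (hKK.trans hK') hKc) ((hLc K' hK' hKc').mono hKK)
        (fun w hw => by rw [hLe K (hKK.trans hK') hKc w hw, hLe K' hK' hKc' w (hKK hw)]) hz h0
      rw [hL0 K (hKK.trans hK') hKc h0, hL0 K' hK' hKc' (hKK h0)] at this
      rw [sub_self] at this
      exact sub_eq_zero.1 this
    intro K K' hK hK' hKc hKc' hcon hcon' h0 h0' z hz hz'
    rw [aux K (K ∪ K') subset_union_left (union_subset hK hK') hKc (hKc.union hKc') hcon h0 z hz,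
      aux K' (K ∪ K') subset_union_right (union_subset hK hK') hKc' (hKc.union hKc') hcon' h0' z hz']
  have hjoin : ∀ z ∈ V, ∃ K ⊆ V, IsCompact K ∧ IsConnected K ∧ z0 ∈ K ∧ z ∈ K := fun z hz =>
    exists_compact_connected_two ho hc hz0 hz
  choose! J hJV hJc hJcon hJ0 hJz using hjoin
  refine ⟨fun z => Lk (J z) z, ?_, fun z hz => hLe _ (hJV z hz) (hJc z hz) z (hJz z hz)⟩
  intro z hz
  obtain ⟨r, hr, hball⟩ := Metric.nhds_basis_closedBall.mem_iff.1 (ho.mem_nhds hz)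
  apply ContinuousAt.continuousWithinAt
  set K := J z ∪ closedBall z r
  have hKV : K ⊆ V := union_subset (hJV z hz) hball
  have hKc : IsCompact K := (hJc z hz).union (isCompact_closedBall z r)
  have hKcon : IsConnected K := ⟨⟨z0, Or.inl (hJ0 z hz)⟩,
      (hJcon z hz).2.union z (hJz z hz) (mem_closedBall_self hr.le) (isConnected_closedBall hr.le).2⟩
  have h1 : ContinuousAt (Lk K) z := ((hLc K hKV hKc).mono subset_union_right).continuousAt
    (closedBall_mem_nhds z hr)
  refine h1.congr ?_
  filter_upwards [closedBall_mem_nhds z hr] with w hw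
  exact huniq _ _ hKV (hJV w (hball hw)) hKc (hJc w (hball hw)) hKcon (hJcon w (hball hw))
    (Or.inl (hJ0 z hz)) (hJ0 w (hball hw)) w (Or.inr hw) (hJz w (hball hw))


lemma tlu_of_tendsto {ι : Type*} {F : ι → ℂ → ℂ} {f : ℂ → ℂ} {p : Filter ι} {D : Set ℂ}
    (hf : ContinuousOn f D)
    (h : ∀ x ∈ D, Tendsto (fun q : ι × ℂ => F q.1 q.2) (p ×ˢ 𝓝[D] x) (𝓝 (f x))) :
    TendstoLocallyUniformlyOn F f p D := by
  rw [tendstoLocallyUniformlyOn_iff_forall_tendsto]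
  intro x hx
  have h1 : Tendsto (fun q : ι × ℂ => f q.2) (p ×ˢ 𝓝[D] x) (𝓝 (f x)) :=
    (hf x hx).tendsto.comp tendsto_snd
  have h2 := (h1.prodMk_nhds (h x hx))
  have h3 : 𝓝 (f x, f x) ≤ uniformity ℂ := nhds_le_uniformity (f x)
  exact h2.mono_right h3

lemma tendsto_of_tlu {ι : Type*} {F : ι → ℂ → ℂ} {f : ℂ → ℂ} {p : Filter ι} {D : Set ℂ}
    (hf : ContinuousOn f D) (h : TendstoLocallyUniformlyOn F f p D) {x : ℂ} (hx : x ∈ D) :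
    Tendsto (fun q : ι × ℂ => F q.1 q.2) (p ×ˢ 𝓝[D] x) (𝓝 (f x)) := by
  have h1 : Tendsto (fun q : ι × ℂ => f q.2) (p ×ˢ 𝓝[D] x) (𝓝 (f x)) :=
    (hf x hx).tendsto.comp tendsto_snd
  exact h1.congr_uniformity (tendstoLocallyUniformlyOn_iff_forall_tendsto.1 h x hx)

lemma montel {ι : Type*} {v : ι → ℂ → ℂ} (𝒰 : Ultrafilter ι) {D : Set ℂ} (hD : IsOpen D)
    (hv : ∀ i, DifferentiableOn ℂ (v i) D) {C : ℝ} (hC : ∀ i, ∀ z ∈ D, ‖v i z‖ ≤ C) :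
    ∃ f : ℂ → ℂ, TendstoLocallyUniformlyOn v f 𝒰 D := by
  have hlim : ∀ z ∈ D, ∃ y : ℂ, Tendsto (fun i => v i z) 𝒰 (𝓝 y) := by
    intro z hz
    obtain ⟨y, -, hy⟩ := (isCompact_closedBall (0:ℂ) C).ultrafilter_le_nhds (𝒰.map fun i => v i z)
      (by
        rw [Ultrafilter.coe_map, le_principal_iff, mem_map]
        exact univ_mem' fun i => by simpa using hC i z hz)
    exact ⟨y, hy⟩
  choose! f hf using hlim
  refine ⟨f, ?_⟩
  rw [Metric.tendstoLocallyUniformlyOn_iff]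
  intro ε hε z hz
  obtain ⟨r, hr, hball⟩ := Metric.nhds_basis_closedBall.mem_iff.1 (hD.mem_nhds hz)
  have hC0 : 0 ≤ C := by
    obtain ⟨i, -⟩ := (inferInstance : (𝒰 : Filter ι).NeBot).nonempty_of_mem univ_mem
    exact (norm_nonneg _).trans (hC i z hz)
  have hlip : ∀ i, ∀ w ∈ ball z (r/2), ‖v i w - v i z‖ ≤ C / (r/2) * ‖w - z‖ := by
    intro i w hw
    refine Convex.norm_image_sub_le_of_norm_deriv_le (s := ball z (r/2)) ?_ ?_ (convex_ball _ _)
      (mem_ball_self (half_pos hr)) hw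
    · intro x hx
      refine (hv i).differentiableAt (hD.mem_nhds (hball ?_))
      exact ball_subset_closedBall (ball_subset_ball (by linarith) hx)
    · intro x hx
      have hsub : closedBall x (r/2) ⊆ D := by
        refine (closedBall_subset_closedBall' ?_).trans hball
        rw [mem_ball] at hx; linarith
      refine Complex.norm_deriv_le_of_forall_mem_sphere_norm_le (half_pos hr) ?_ ?_
      · exact ((hv i).mono hsub).diffContOnCl_ball (le_refl _) |> fun h => by simpa using h
      · intro y hy
        exact hC i y (hsub (sphere_subset_closedBall hy))
  set K := C / (r/2)
  have hK0 : 0 ≤ K := div_nonneg hC0 (half_pos hr).le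
  have hflip : ∀ w ∈ ball z (r/2), ‖f w - f z‖ ≤ K * ‖w - z‖ := by
    intro w hw
    have hwD : w ∈ D := hball (ball_subset_closedBall (ball_subset_ball (by linarith) hw))
    refine le_of_tendsto ((hf w hwD).sub (hf z hz)).norm (Eventually.of_forall fun i => hlip i w hw)
  set δ := min (r/2) (ε / (3 * (K+1)))
  have hδ : 0 < δ := lt_min (half_pos hr) (by positivity)
  refine ⟨ball z δ, mem_nhdsWithin_of_mem_nhds (ball_mem_nhds z hδ), ?_⟩
  have hev : ∀ᶠ i in (𝒰 : Filter ι), dist (v i z) (f z) < ε / 3 :=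
    (hf z hz).eventually (ball_mem_nhds _ (by positivity))
  filter_upwards [hev] with i hi w hw
  have hw1 : w ∈ ball z (r/2) := ball_subset_ball (min_le_left _ _) hw
  have hw2 : ‖w - z‖ < ε / (3 * (K+1)) := by
    rw [← dist_eq_norm]; exact lt_of_lt_of_le hw (min_le_right _ _)
  have h3 : K * ‖w - z‖ < ε / 3 := by
    have : K * ‖w - z‖ ≤ (K+1) * ‖w - z‖ := by nlinarith [norm_nonneg (w - z)]
    refine this.trans_lt ?_
    calc (K+1) * ‖w - z‖ < (K+1) * (ε / (3 * (K+1))) := by gcongr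
      _ = ε / 3 := by field_simp
  have h1 := hlip i w hw1
  have h2 := hflip w hw1
  rw [dist_eq_norm] at hi ⊢
  have e : f w - v i w = (f w - f z) - (v i w - v i z) - (v i z - f z) := by ring
  calc ‖f w - v i w‖ ≤ ‖f w - f z‖ + ‖v i w - v i z‖ + ‖v i z - f z‖ := by
        rw [e]; exact (norm_sub_le _ _).trans (by gcongr; exact norm_sub_le _ _)
    _ < ε := by linarith

lemma hurwitz {ι : Type*} {F : ι → ℂ → ℂ} {f : ℂ → ℂ} {l : Filter ι} {D : Set ℂ} (hD : IsOpen D)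
    [l.NeBot]
    (hF : ∀ i, DifferentiableOn ℂ (F i) D) (h : TendstoLocallyUniformlyOn F f l D)
    {z : ℂ} (hz : z ∈ D) (hnc : ¬ ∀ᶠ w in 𝓝 z, f w = f z) {r : ℝ} (hr : 0 < r) :
    ∃ δ > 0, ∀ᶠ i in l, ball (f z) δ ⊆ F i '' ball z r := by
  have hfd : DifferentiableOn ℂ f D := h.differentiableOn (Eventually.of_forall hF) hD
  have han : AnalyticAt ℂ f z := hfd.analyticAt (hD.mem_nhds hz)
  have hne : ∀ᶠ w in 𝓝[≠] z, f w ≠ f z :=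
    (han.eventually_eq_or_eventually_ne analyticAt_const).resolve_left hnc
  rw [eventually_nhdsWithin_iff] at hne
  obtain ⟨r1, hr1, hb1⟩ := Metric.eventually_nhds_iff_ball.1 hne
  obtain ⟨r2, hr2, hb2⟩ := Metric.isOpen_iff.1 hD z hz
  set r0 := min r (min r1 r2)
  have hr0 : 0 < r0 := lt_min hr (lt_min hr1 hr2)
  set ρ := r0 / 2
  have hρ : 0 < ρ := half_pos hr0
  have hρ0 : ρ < r0 := half_lt_self hr0
  have hsubD : ball z r0 ⊆ D := (ball_subset_ball ((min_le_right _ _).trans (min_le_right _ _))).trans hb2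
  have hclD : closedBall z ρ ⊆ D := (closedBall_subset_ball hρ0).trans hsubD
  have hsph : ∀ w ∈ sphere z ρ, f w - f z ≠ 0 := by
    intro w hw
    rw [sub_ne_zero]
    refine hb1 w ?_ ?_
    · rw [mem_sphere] at hw
      rw [mem_ball, hw]
      exact hρ0.trans_le ((min_le_right _ _).trans (min_le_left _ _))
    · rintro rfl
      simp at hw
      linarith
  have hcs : ContinuousOn (fun w => ‖f w - f z‖) (sphere z ρ) :=
    ((hfd.continuousOn.mono (sphere_subset_closedBall.trans hclD)).sub continuousOn_const).norm
  obtain ⟨w0, hw0, hmin⟩ := (isCompact_sphere z ρ).exists_isMinOn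
    (NormedSpace.sphere_nonempty.2 hρ.le) hcs
  set ε := ‖f w0 - f z‖ / 4 with hεdef
  have hε : 0 < ε := by
    have := norm_pos_iff.2 (hsph w0 hw0)
    positivity
  have hlow : ∀ w ∈ sphere z ρ, 4 * ε ≤ ‖f w - f z‖ := by
    intro w hw
    have : ‖f w0 - f z‖ ≤ ‖f w - f z‖ := hmin hw
    rw [hεdef]; linarith
  have hunif := (tendstoLocallyUniformlyOn_iff_forall_isCompact hD).1 h _ hclD
    (isCompact_closedBall z ρ)
  rw [Metric.tendstoUniformlyOn_iff] at hunif
  refine ⟨ε / 2, half_pos hε, ?_⟩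
  filter_upwards [hunif (ε/2) (half_pos hε)] with i hi
  have hz' := hi z (mem_closedBall_self hρ.le)
  have hlowF : ∀ w ∈ sphere z ρ, 2 * ε ≤ ‖F i w - F i z‖ := by
    intro w hw
    have h1 := hi w (sphere_subset_closedBall hw)
    have h2 := hlow w hw
    rw [dist_eq_norm] at h1 hz'
    have e : f w - f z = (f w - F i w) + (F i w - F i z) - (f z - F i z) := by ring
    have : ‖f w - f z‖ ≤ ‖f w - F i w‖ + ‖F i w - F i z‖ + ‖f z - F i z‖ := by
      rw [e]; exact (norm_sub_le _ _).trans (by gcongr; exact norm_add_le _ _)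
    linarith
  have hfreq : ∃ᶠ w in 𝓝 z, F i w ≠ F i z := by
    intro hev
    have hev' : F i =ᶠ[𝓝 z] fun _ => F i z := hev.mono fun w hw => not_not.1 hw
    have heq := AnalyticOnNhd.eqOn_of_preconnected_of_eventuallyEq
      (((hF i).mono hsubD).analyticOnNhd isOpen_ball) analyticOnNhd_const
      (convex_ball z r0).isPreconnected (mem_ball_self hr0) hev'
    have hw0b : w0 ∈ ball z r0 := closedBall_subset_ball hρ0 (sphere_subset_closedBall hw0)
    have := hlowF w0 hw0
    rw [heq hw0b] at this
    simp at this
    linarith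
  have hdc : DiffContOnCl ℂ (F i) (ball z ρ) := ((hF i).mono hclD).diffContOnCl_ball (le_refl _)
  have himg := hdc.ball_subset_image_closedBall hρ hlowF hfreq
  intro y hy
  have hy' : y ∈ ball (F i z) (2 * ε / 2) := by
    rw [mem_ball] at hy ⊢
    have := dist_triangle y (f z) (F i z)
    linarith
  obtain ⟨w, hw, rfl⟩ := himg hy'
  exact ⟨w, closedBall_subset_ball (hρ0.trans_le (min_le_left _ _)) hw, rfl⟩

lemma locConst_propagate {f : ℂ → ℂ} {D : Set ℂ} (hD : IsOpen D) (hc : IsPreconnected D)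
    (hf : DifferentiableOn ℂ f D) {z w : ℂ} (hz : z ∈ D) (hw : w ∈ D)
    (h : ∀ᶠ x in 𝓝 z, f x = f z) : f w = f z := by
  have := AnalyticOnNhd.eqOn_of_preconnected_of_eventuallyEq
      (hf.analyticOnNhd hD) analyticOnNhd_const hc hz (g := fun _ => f z) h
  exact this hw

lemma hurwitz_inj {ι : Type*} {F : ι → ℂ → ℂ} {f : ℂ → ℂ} {l : Filter ι} {D : Set ℂ}
    (hD : IsOpen D) (hc : IsPreconnected D)
    [l.NeBot]
    (hF : ∀ i, DifferentiableOn ℂ (F i) D) (h : TendstoLocallyUniformlyOn F f l D)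
    (hinj : ∀ i, InjOn (F i) D) (hnc : ∃ x ∈ D, ∃ y ∈ D, f x ≠ f y) : InjOn f D := by
  have hfd : DifferentiableOn ℂ f D := h.differentiableOn (Eventually.of_forall hF) hD
  obtain ⟨x, hx, y, hy, hxy⟩ := hnc
  have hnl : ∀ z ∈ D, ¬ ∀ᶠ w in 𝓝 z, f w = f z := by
    intro z hz hev
    exact hxy ((locConst_propagate hD hc hfd hz hx hev).trans
      (locConst_propagate hD hc hfd hz hy hev).symm)
  intro a ha b hb hab
  by_contra hne
  have hd : 0 < dist a b / 2 := half_pos (dist_pos.2 hne)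
  obtain ⟨ra, hra, hba⟩ := Metric.isOpen_iff.1 hD a ha
  obtain ⟨rb, hrb, hbb⟩ := Metric.isOpen_iff.1 hD b hb
  obtain ⟨δ1, h1, e1⟩ := hurwitz hD hF h ha (hnl a ha) (lt_min hd hra)
  obtain ⟨δ2, h2, e2⟩ := hurwitz hD hF h hb (hnl b hb) (lt_min hd hrb)
  obtain ⟨i, hi1, hi2⟩ := (e1.and e2).exists
  obtain ⟨p, hp, hpe⟩ := hi1 (mem_ball_self h1)
  obtain ⟨q, hq, hqe⟩ := hi2 (by rw [← hab]; exact mem_ball_self h2 : f a ∈ _)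
  have hpD : p ∈ D := hba (ball_subset_ball (min_le_right _ _) hp)
  have hqD : q ∈ D := hbb (ball_subset_ball (min_le_right _ _) hq)
  have hpq : p = q := hinj i hpD hqD (hpe.trans hqe.symm)
  subst hpq
  have h3 : dist p a < dist a b / 2 := lt_of_lt_of_le hp (min_le_left _ _)
  have h4 : dist p b < dist a b / 2 := lt_of_lt_of_le hq (min_le_left _ _)
  have := dist_triangle_left a b p
  linarith

lemma log_differentiable {V : Set ℂ} (hV : IsOpen V) {f L : ℂ → ℂ} (hf : DifferentiableOn ℂ f V)
    (hL : ContinuousOn L V) (he : ∀ z ∈ V, Complex.exp (L z) = f z) : DifferentiableOn ℂ L V := by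
  intro z hz
  have hf0 : ∀ w ∈ V, f w ≠ 0 := fun w hw => by rw [← he w hw]; exact Complex.exp_ne_zero _
  have hfz : DifferentiableAt ℂ f z := hf.differentiableAt (hV.mem_nhds hz)
  let K : ℂ → ℂ := fun w => Complex.log (f w / f z) + L z
  have hsl : f z / f z ∈ Complex.slitPlane := by
    rw [div_self (hf0 z hz)]; exact Complex.one_mem_slitPlane
  have hK : DifferentiableAt ℂ K z :=
    ((hfz.div_const _).clog hsl).add_const _
  have hKz : K z = L z := by simp [K, div_self (hf0 z hz)]
  have hLz : ContinuousAt L z := hL.continuousAt (hV.mem_nhds hz)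
  have hdiff : ∀ᶠ w in 𝓝 z, ‖L w - K w‖ < 1 := by
    have : Tendsto (fun w => ‖L w - K w‖) (𝓝 z) (𝓝 ‖L z - K z‖) :=
      (hLz.sub hK.continuousAt).norm
    rw [hKz, sub_self, norm_zero] at this
    exact this.eventually (gt_mem_nhds one_pos)
  refine (hK.congr_of_eventuallyEq ?_).differentiableWithinAt
  filter_upwards [hdiff, hV.mem_nhds hz] with w hw hwV
  have hexp : Complex.exp (L w - K w) = 1 := by
    rw [Complex.exp_sub, he w hwV]
    simp only [K]
    rw [Complex.exp_add, Complex.exp_log (div_ne_zero (hf0 w hwV) (hf0 z hz)), he z hz,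
      div_mul_cancel₀ _ (hf0 z hz), div_self (hf0 w hwV)]
  obtain ⟨n, hn⟩ := Complex.exp_eq_one_iff.1 hexp
  have hn0 : n = 0 := by
    by_contra h
    rw [hn, norm_mul, norm_mul, norm_mul, Complex.norm_I, Complex.norm_real, Complex.norm_intCast] at hw
    have h1 : (1:ℝ) ≤ |(n:ℝ)| := by exact_mod_cast Int.one_le_abs h
    have h2 : (1:ℝ) < 2 * Real.pi := by have := Real.pi_gt_three; linarith
    simp [abs_of_pos Real.pi_pos] at hw
    nlinarith
  rw [hn0] at hn
  simp at hn
  exact sub_eq_zero.1 hn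

lemma log_of_full {V : Set ℂ} (ho : IsOpen V) (hc : IsConnected V) (hfull : Full V) {a : ℂ}
    (ha : a ∉ V) : ∃ L : ℂ → ℂ, ContinuousOn L V ∧ ∀ z ∈ V, Complex.exp (L z) = z - a := by
  refine log_glue ho hc fun K hK hKc => ?_
  exact hasLog_of_notMem_hull hKc fun h => ha (hfull K hK hKc h)

/-- square root branch with omitted ball -/
lemma sqrt_omit {V : Set ℂ} (ho : IsOpen V) (hc : IsConnected V) (hfull : Full V) {a : ℂ}
    (ha : a ∉ V) : ∃ s : ℂ → ℂ, ∃ c : ℂ, ∃ ε > 0, DifferentiableOn ℂ s V ∧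
      (∀ z ∈ V, s z ^ 2 = z - a) ∧ ∀ z ∈ V, ε ≤ ‖s z + c‖ := by
  obtain ⟨L, hL, he⟩ := log_of_full ho hc hfull ha
  have hLd := log_differentiable ho (by fun_prop : DifferentiableOn ℂ (fun z => z - a) V) hL he
  let s : ℂ → ℂ := fun z => Complex.exp (L z / 2)
  have hs : DifferentiableOn ℂ s V := (hLd.div_const 2).cexp
  have hs2 : ∀ z ∈ V, s z ^ 2 = z - a := by
    intro z hz
    rw [← he z hz, ← Complex.exp_nat_mul]
    congr 1
    push_cast; ring
  have hinj : InjOn s V := by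
    intro x hx y hy hxy
    have := hs2 x hx
    rw [hxy, hs2 y hy] at this
    exact (sub_left_injective this).symm
  obtain ⟨v, hv⟩ := hc.nonempty
  have hopen : IsOpen (s '' V) := by
    rcases (hs.analyticOnNhd ho).is_constant_or_isOpen hc.2 with ⟨w, hw⟩ | h
    · exfalso
      obtain ⟨r, hr, hb⟩ := Metric.isOpen_iff.1 ho v hv
      have hmem : v + (r/2 : ℝ) ∈ V := hb (by
        simp [abs_of_pos hr]; linarith)
      have := hinj hv hmem ((hw v hv).trans (hw _ hmem).symm)
      have h0 : ((r/2 : ℝ) : ℂ) = 0 := by linear_combination -this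
      have : r / 2 = 0 := by exact_mod_cast h0
      linarith
    · exact h V Subset.rfl ho
  obtain ⟨ε, hε, hb⟩ := Metric.isOpen_iff.1 hopen (s v) (mem_image_of_mem s hv)
  refine ⟨s, s v, ε, hε, hs, hs2, ?_⟩
  intro z hz
  by_contra hlt
  push Not at hlt
  have : - s z ∈ ball (s v) ε := by
    rw [mem_ball, dist_eq_norm, ← norm_neg]
    have e : -(-s z - s v) = s z + s v := by ring
    rw [e]; exact hlt
  obtain ⟨y, hy, hys⟩ := hb this
  have h1 := hs2 y hy
  rw [hys, neg_sq, hs2 z hz] at h1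
  have : y = z := (sub_left_injective h1).symm
  subst this
  have h2 : s y = 0 := by
    have : s y + s y = 0 := by rw [eq_neg_iff_add_eq_zero] at hys; exact hys
    exact add_self_eq_zero.1 this
  exact Complex.exp_ne_zero _ h2

/-- normality -/
lemma factN {ι : Type*} (𝒰 : Ultrafilter ι) {V : Set ℂ} (ho : IsOpen V) (hc : IsConnected V)
    (hfull : Full V) (hV : V ≠ univ) {D : Set ℂ} (hD : IsOpen D) (hDc : IsPreconnected D)
    {h : ι → ℂ → ℂ} (hh : ∀ i, DifferentiableOn ℂ (h i) D) (hmap : ∀ i, MapsTo (h i) D V)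
    {zi : ι → ℂ} {z y : ℂ} (hz : z ∈ D) (hzi : Tendsto zi 𝒰 (𝓝 z))
    (hy : Tendsto (fun i => h i (zi i)) 𝒰 (𝓝 y)) :
    ∃ f : ℂ → ℂ, TendstoLocallyUniformlyOn h f 𝒰 D := by
  obtain ⟨a, ha⟩ := (ne_univ_iff_exists_notMem V).1 hV
  obtain ⟨s, c, ε, hε, hs, hs2, homit⟩ := sqrt_omit ho hc hfull ha
  let v : ι → ℂ → ℂ := fun i w => (s (h i w) + c)⁻¹
  have hne : ∀ i, ∀ w ∈ D, s (h i w) + c ≠ 0 := by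
    intro i w hw h0
    have := homit _ (hmap i hw)
    rw [h0, norm_zero] at this; linarith
  have hvd : ∀ i, DifferentiableOn ℂ (v i) D := fun i =>
    ((hs.comp (hh i) (hmap i)).add_const c).inv (hne i)
  have hvb : ∀ i, ∀ w ∈ D, ‖v i w‖ ≤ ε⁻¹ := by
    intro i w hw
    simp only [v, norm_inv]
    exact inv_anti₀ hε (homit _ (hmap i hw))
  have hv0 : ∀ i, ∀ w ∈ D, v i w ≠ 0 := fun i w hw => inv_ne_zero (hne i w hw)
  obtain ⟨f, hf⟩ := montel 𝒰 hD hvd hvb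
  have hfd : DifferentiableOn ℂ f D := hf.differentiableOn (Eventually.of_forall hvd) hD
  have hziD : ∀ᶠ i in (𝒰 : Filter ι), zi i ∈ D := hzi.eventually (hD.mem_nhds hz)
  have hvz : Tendsto (fun i => v i (zi i)) 𝒰 (𝓝 (f z)) :=
    hf.tendsto_comp (hfd.continuousOn z hz) hz
      (tendsto_nhdsWithin_iff.2 ⟨hzi, hziD⟩)
  have hfz : f z ≠ 0 := by
    intro h0
    -- the quantity `h i (zi i)` is bounded
    obtain ⟨M, hM⟩ : ∃ M : ℝ, ∀ᶠ i in (𝒰 : Filter ι), ‖h i (zi i)‖ ≤ M := by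
      refine ⟨‖y‖ + 1, ?_⟩
      filter_upwards [hy.norm.eventually (gt_mem_nhds (lt_add_one ‖y‖))] with i hi using hi.le
    have hbd : ∀ᶠ i in (𝒰 : Filter ι), (M + ‖a‖ + 1 + ‖c‖)⁻¹ ≤ ‖v i (zi i)‖ := by
      filter_upwards [hM, hziD] with i hi hiD
      have h1 : ‖s (h i (zi i))‖ ^ 2 ≤ M + ‖a‖ := by
        rw [← norm_pow, hs2 _ (hmap i hiD)]
        exact (norm_sub_le _ _).trans (by linarith)
      have h2 : ‖s (h i (zi i))‖ ≤ M + ‖a‖ + 1 := by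
        nlinarith [norm_nonneg (s (h i (zi i)))]
      simp only [v, norm_inv]
      refine inv_anti₀ (norm_pos_iff.2 (hne i _ hiD)) ?_
      exact (norm_add_le _ _).trans (by linarith)
    have hM0 : 0 < M + ‖a‖ + 1 + ‖c‖ := by
      obtain ⟨i, hi⟩ := hM.exists
      have := norm_nonneg (h i (zi i))
      have := norm_nonneg a
      have := norm_nonneg c
      linarith
    have := ge_of_tendsto hvz.norm hbd
    rw [h0, norm_zero] at this
    have := inv_pos.2 hM0
    linarith
  have hf0 : ∀ w ∈ D, f w ≠ 0 := by
    intro w hw h0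
    have hnl : ¬ ∀ᶠ x in 𝓝 w, f x = f w := by
      intro hev
      exact hfz ((locConst_propagate hD hDc hfd hw hz hev).trans h0)
    obtain ⟨r, hr, hb⟩ := Metric.isOpen_iff.1 hD w hw
    obtain ⟨δ, hδ, hev⟩ := hurwitz hD hvd hf hw hnl hr
    obtain ⟨i, hi⟩ := hev.exists
    obtain ⟨x, hx, hx0⟩ := hi (by rw [h0]; exact mem_ball_self hδ : (0:ℂ) ∈ _)
    exact hv0 i x (hb hx) hx0
  refine ⟨fun w => a + ((f w)⁻¹ - c) ^ 2, ?_⟩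
  refine tlu_of_tendsto ?_ ?_
  · exact continuousOn_const.add (((hfd.continuousOn.inv₀ hf0).sub continuousOn_const).pow 2)
  · intro x hx
    have h1 := tendsto_of_tlu hfd.continuousOn hf hx
    have h2 := (((h1.inv₀ (hf0 x hx)).sub_const c).pow 2).const_add a
    refine h2.congr' ?_
    have : ∀ᶠ q : ι × ℂ in (𝒰 : Filter ι) ×ˢ 𝓝[D] x, q.2 ∈ D :=
      tendsto_snd.eventually self_mem_nhdsWithin
    filter_upwards [this] with q hq
    simp only [v, inv_inv]
    rw [add_sub_cancel_right, hs2 _ (hmap q.1 hq)]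
    ring


lemma isOpen_image_inj {V : Set ℂ} {f : ℂ → ℂ} (ho : IsOpen V) (hc : IsPreconnected V)
    (hf : DifferentiableOn ℂ f V) (hinj : InjOn f V) {s : Set ℂ} (hs : s ⊆ V) (hso : IsOpen s) :
    IsOpen (f '' s) := by
  rcases V.eq_empty_or_nonempty with rfl | ⟨v, hv⟩
  · rw [subset_empty_iff.1 hs]; simp
  rcases (hf.analyticOnNhd ho).is_constant_or_isOpen hc with ⟨w, hw⟩ | h
  · exfalso
    obtain ⟨r, hr, hb⟩ := Metric.isOpen_iff.1 ho v hv
    have hmem : v + ((r/2 : ℝ) : ℂ) ∈ V := hb (by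
      rw [mem_ball, dist_eq_norm, add_sub_cancel_left, Complex.norm_real, Real.norm_eq_abs,
        abs_of_pos (by linarith)]; linarith)
    have := hinj hv hmem ((hw v hv).trans (hw _ hmem).symm)
    have h0 : ((r/2 : ℝ) : ℂ) = 0 := by linear_combination -this
    have : r / 2 = 0 := by exact_mod_cast h0
    linarith
  · exact h s hs hso

lemma hull_image_inj {V K : Set ℂ} {ψ : ℂ → ℂ} (ho : IsOpen V) (hc : IsConnected V)
    (hfull : Full V) (hψ : DifferentiableOn ℂ ψ V) (hinj : InjOn ψ V) (hKV : K ⊆ V)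
    (hK : IsCompact K) {a : ℂ} (ha : a ∉ ψ '' V) : a ∉ hull (ψ '' K) := by
  intro haK
  have hK'c : IsCompact (hull K) := isCompact_hull hK
  have hK'V : hull K ⊆ V := hfull K hKV hK
  have hcV : ContinuousOn ψ V := hψ.continuousOn
  have hψK : IsCompact (ψ '' hull K) := hK'c.image_of_continuousOn (hcV.mono hK'V)
  have haK' : a ∈ hull (ψ '' hull K) := hull_mono (image_mono (subset_hull K)) haK
  have haN : a ∉ ψ '' hull K := fun h => ha (image_mono hK'V h)
  have hne : (hull K).Nonempty := by
    by_contra h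
    rw [not_nonempty_iff_eq_empty] at h
    rw [h, image_empty, hull_empty] at haK'; exact haK'
  have hopen : IsOpen (ψ '' V) := isOpen_image_inj ho hc.2 hψ hinj Subset.rfl ho
  have hA : IsPreconnected (V ∩ (hull K)ᶜ) := by
    apply unicoherent_open ho hK'c.isClosed.isOpen_compl hc.2 (isConnected_compl_hull hK).2
    rw [← compl_subset_iff_union]; exact compl_subset_compl.2 hK'V
  have hψA : IsPreconnected (ψ '' (V ∩ (hull K)ᶜ)) := hA.image ψ (hcV.mono inter_subset_left)
  have hsub : ψ '' (V ∩ (hull K)ᶜ) ⊆ (ψ '' hull K)ᶜ := by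
    rintro _ ⟨v, ⟨hv, hvK⟩, rfl⟩ ⟨k, hk, hkv⟩
    exact hvK (hinj (hK'V hk) hv hkv ▸ hk)
  obtain ⟨b, hb⟩ := cc_nonempty_frontier haN (hne.image ψ)
  have hbK := cc_frontier hψK.isClosed a hb
  obtain ⟨_, ⟨v, hv, rfl⟩, hy1⟩ := mem_closure_iff_nhds.1 (frontier_subset_closure hb) _
    (hopen.mem_nhds (image_mono hK'V hbK))
  have hvK : v ∉ hull K := fun h =>
    (connectedComponentIn_subset _ _ hy1) (mem_image_of_mem ψ h)
  have hψAB := hψA.subset_connectedComponentIn (mem_image_of_mem ψ ⟨hv, hvK⟩) hsub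
  rw [← connectedComponentIn_eq hy1] at hψAB
  have hHc := isCompact_hull hψK
  have hfr : (frontier (hull (ψ '' hull K))).Nonempty := by
    rw [nonempty_frontier_iff]
    refine ⟨⟨a, haK'⟩, ?_⟩
    intro h
    exact NormedSpace.unbounded_univ ℝ ℂ (h ▸ hHc.isBounded)
  obtain ⟨e, he⟩ := hfr
  have heK : e ∈ ψ '' hull K := hψK.isClosed.frontier_subset (frontier_hull_subset hψK he)
  have he2 : e ∈ closure (hull (ψ '' hull K))ᶜ := by
    rw [frontier_eq_closure_inter_closure] at he; exact he.2
  obtain ⟨_, ⟨u, hu, rfl⟩, hy2⟩ := mem_closure_iff_nhds.1 he2 _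
    (hopen.mem_nhds (image_mono hK'V heK))
  have huK : u ∉ hull K := fun h => hy2 (subset_hull _ (mem_image_of_mem ψ h))
  exact hy2 (cc_subset_hull haK' (hψAB (mem_image_of_mem ψ ⟨hu, huK⟩)))

lemma log_of_inj {V : Set ℂ} {ψ : ℂ → ℂ} (ho : IsOpen V) (hc : IsConnected V)
    (hfull : Full V) (hψ : DifferentiableOn ℂ ψ V) (hinj : InjOn ψ V) {a : ℂ} (ha : a ∉ ψ '' V) :
    ∃ L : ℂ → ℂ, DifferentiableOn ℂ L V ∧ ∀ z ∈ V, Complex.exp (L z) = ψ z - a := by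
  obtain ⟨L, hL, he⟩ : ∃ L : ℂ → ℂ, ContinuousOn L V ∧ ∀ z ∈ V, Complex.exp (L z) = ψ z - a := by
    refine log_glue ho hc fun K hK hKc => ?_
    have hcK := hψ.continuousOn.mono hK
    obtain ⟨L, hL, he⟩ := hasLog_of_notMem_hull (hKc.image_of_continuousOn hcK)
      (hull_image_inj ho hc hfull hψ hinj hK hKc ha)
    exact ⟨L ∘ ψ, hL.comp hcK (mapsTo_image ψ K), fun z hz => he _ (mem_image_of_mem ψ hz)⟩
  exact ⟨L, log_differentiable ho (hψ.sub_const a) hL he, he⟩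

def mob (a w : ℂ) : ℂ := (w - a) / (1 - (starRingEnd ℂ) a * w)

lemma mob_re {a w : ℂ} (ha : ‖a‖ < 1) (hw : ‖w‖ < 1) : 0 < (1 - (starRingEnd ℂ) a * w).re := by
  have h1 : ((starRingEnd ℂ) a * w).re ≤ ‖(starRingEnd ℂ) a * w‖ := Complex.re_le_norm _
  rw [norm_mul, Complex.norm_conj] at h1
  have : ‖a‖ * ‖w‖ < 1 := by nlinarith [norm_nonneg a, norm_nonneg w]
  rw [Complex.sub_re, Complex.one_re]; linarith

lemma mob_den {a w : ℂ} (ha : ‖a‖ < 1) (hw : ‖w‖ < 1) : 1 - (starRingEnd ℂ) a * w ≠ 0 := by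
  intro h
  have := mob_re ha hw
  rw [h] at this; simp at this

lemma mob_norm {a w : ℂ} (ha : ‖a‖ < 1) (hw : ‖w‖ < 1) : ‖mob a w‖ < 1 := by
  have hd := mob_den ha hw
  rw [mob, norm_div, div_lt_one (norm_pos_iff.2 hd)]
  apply lt_of_pow_lt_pow_left₀ 2 (norm_nonneg _)
  have ha2 : ‖a‖^2 < 1 := by nlinarith [norm_nonneg a]
  have hw2 : ‖w‖^2 < 1 := by nlinarith [norm_nonneg w]
  rw [← Complex.normSq_eq_norm_sq] at *
  rw [← Complex.normSq_eq_norm_sq]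
  rw [Complex.normSq_apply] at *
  simp only [Complex.normSq_apply, Complex.sub_re, Complex.sub_im, Complex.mul_re, Complex.mul_im,
    Complex.conj_re, Complex.conj_im, Complex.one_re, Complex.one_im] at *
  nlinarith [mul_pos (sub_pos.2 ha2) (sub_pos.2 hw2)]

lemma one_sub_ne {a : ℂ} (ha : ‖a‖ < 1) : 1 - (starRingEnd ℂ) a * a ≠ 0 := mob_den ha ha

lemma mob_inj {a w v : ℂ} (ha : ‖a‖ < 1) (hw : ‖w‖ < 1) (hv : ‖v‖ < 1) (h : mob a w = mob a v) :
    w = v := by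
  rw [mob, mob, div_eq_div_iff (mob_den ha hw) (mob_den ha hv)] at h
  have : (w - v) * (1 - (starRingEnd ℂ) a * a) = 0 := by linear_combination h
  rcases mul_eq_zero.1 this with h | h
  · exact sub_eq_zero.1 h
  · exact absurd h (one_sub_ne ha)

lemma mob_deriv {a w : ℂ} (ha : ‖a‖ < 1) (hw : ‖w‖ < 1) :
    HasDerivAt (mob a) ((1 - (starRingEnd ℂ) a * a) / (1 - (starRingEnd ℂ) a * w)^2) w := by
  have h1 : HasDerivAt (fun w : ℂ => w - a) 1 w := (hasDerivAt_id w).sub_const a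
  have h2 : HasDerivAt (fun w : ℂ => 1 - (starRingEnd ℂ) a * w) (-((starRingEnd ℂ) a)) w := by
    simpa using ((hasDerivAt_id w).const_mul ((starRingEnd ℂ) a)).const_sub 1
  have := h1.fun_div h2 (mob_den ha hw)
  have e : (1 - (starRingEnd ℂ) a * a) = 1 * (1 - (starRingEnd ℂ) a * w) -
      (w - a) * (-((starRingEnd ℂ) a)) := by ring
  rw [e]; exact this

def RFam (V : Set ℂ) (v0 : ℂ) : Set (ℂ → ℂ) :=
  {ψ | DifferentiableOn ℂ ψ V ∧ InjOn ψ V ∧ MapsTo ψ V (ball 0 1) ∧ ψ v0 = 0}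

lemma rfam_init {V : Set ℂ} {v0 : ℂ} (ho : IsOpen V) (hc : IsConnected V)
    (hfull : Full V) (hV : V ≠ univ) (hv : v0 ∈ V) : ∃ ψ ∈ RFam V v0, deriv ψ v0 ≠ 0 := by
  obtain ⟨a, ha⟩ := (ne_univ_iff_exists_notMem V).1 hV
  obtain ⟨s, c, ε, hε, hs, hs2, homit⟩ := sqrt_omit ho hc hfull ha
  have hsc : ∀ z ∈ V, s z + c ≠ 0 := fun z hz => by
    have := homit z hz; rw [← norm_pos_iff]; linarith
  have hsd : HasDerivAt s (deriv s v0) v0 :=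
    (hs.differentiableAt (ho.mem_nhds hv)).hasDerivAt
  have hs' : deriv s v0 ≠ 0 := by
    intro h0
    have h1 : HasDerivAt (fun z => s z ^ 2) (2 * s v0 * deriv s v0) v0 := by
      simpa using hsd.fun_pow 2
    have h2 : HasDerivAt (fun z => s z ^ 2) 1 v0 := by
      apply ((hasDerivAt_id v0).sub_const a).congr_of_eventuallyEq
      filter_upwards [ho.mem_nhds hv] with z hz using hs2 z hz
    have := h1.unique h2
    rw [h0] at this; simp at this
  let k : ℂ := ((ε / 3 : ℝ) : ℂ)
  have hk : k ≠ 0 := by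
    have : ε / 3 ≠ 0 := by positivity
    exact Complex.ofReal_ne_zero.2 this
  have hkn : ‖k‖ = ε / 3 := by
    rw [Complex.norm_real, Real.norm_eq_abs, abs_of_pos (by positivity)]
  have hinv : ∀ z ∈ V, ‖(s z + c)⁻¹‖ ≤ ε⁻¹ := fun z hz => by
    rw [norm_inv]; exact inv_anti₀ hε (homit z hz)
  refine ⟨fun z => k * ((s z + c)⁻¹ - (s v0 + c)⁻¹), ⟨?_, ?_, ?_, by simp⟩, ?_⟩
  · exact (((hs.add_const c).fun_inv hsc).sub_const _).const_mul k
  · intro z hz w hw h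
    have h1 := sub_left_injective (mul_left_cancel₀ hk h)
    have h2 : s z = s w := add_left_injective c (inv_injective h1)
    have h3 := hs2 z hz
    rw [h2, hs2 w hw] at h3
    exact (sub_left_injective h3).symm
  · intro z hz
    rw [mem_ball_zero_iff, norm_mul, hkn]
    have h1 := norm_sub_le (s z + c)⁻¹ (s v0 + c)⁻¹
    have h2 := hinv z hz
    have h3 := hinv v0 hv
    calc ε / 3 * ‖(s z + c)⁻¹ - (s v0 + c)⁻¹‖ ≤ ε / 3 * (ε⁻¹ + ε⁻¹) := by gcongr; linarith
      _ = 2 / 3 := by field_simp; norm_num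
      _ < 1 := by norm_num
  · have h1 := (((hsd.add_const c).fun_inv (hsc v0 hv)).sub_const ((s v0 + c)⁻¹)).const_mul k
    rw [h1.deriv]
    exact mul_ne_zero hk (div_ne_zero (neg_ne_zero.2 hs') (pow_ne_zero 2 (hsc v0 hv)))

lemma rfam_koebe {V : Set ℂ} {v0 : ℂ} (ho : IsOpen V) (hc : IsConnected V)
    (hfull : Full V) (hv : v0 ∈ V) {f : ℂ → ℂ} (hf : f ∈ RFam V v0) (hd : deriv f v0 ≠ 0)
    {a : ℂ} (ha : ‖a‖ < 1) (haf : a ∉ f '' V) : ∃ φ ∈ RFam V v0, ‖deriv f v0‖ < ‖deriv φ v0‖ := by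
  obtain ⟨hfd, hfi, hfm, hf0⟩ := hf
  have hfn : ∀ z ∈ V, ‖f z‖ < 1 := fun z hz => mem_ball_zero_iff.1 (hfm hz)
  obtain ⟨L, hL, he⟩ := log_of_inj ho hc hfull hfd hfi haf
  let h : ℂ → ℂ := fun z => Complex.exp ((L z - Complex.log (1 - (starRingEnd ℂ) a * f z)) / 2)
  have hh2 : ∀ z ∈ V, h z ^ 2 = mob a (f z) := by
    intro z hz
    rw [sq, ← Complex.exp_add, add_halves, Complex.exp_sub, he z hz,
      Complex.exp_log (mob_den ha (hfn z hz)), mob]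
  have hhd : DifferentiableOn ℂ h V := by
    refine ((hL.sub ?_).div_const 2).cexp
    refine DifferentiableOn.clog ((hfd.const_mul _).const_sub 1) fun z hz => ?_
    exact Or.inl (mob_re ha (hfn z hz))
  have hhn : ∀ z ∈ V, ‖h z‖ < 1 := by
    intro z hz
    have := mob_norm ha (hfn z hz)
    rw [← hh2 z hz, norm_pow] at this
    nlinarith [norm_nonneg (h z)]
  have hhi : InjOn h V := by
    intro z hz w hw hzw
    have h1 : mob a (f z) = mob a (f w) := by rw [← hh2 z hz, ← hh2 w hw, hzw]
    exact hfi hz hw (mob_inj ha (hfn z hz) (hfn w hw) h1)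
  let b := h v0
  have hb : ‖b‖ < 1 := hhn v0 hv
  have hb2 : b ^ 2 = - a := by
    have := hh2 v0 hv
    rw [hf0] at this; rw [this, mob]; simp
  have hb0 : b ≠ 0 := Complex.exp_ne_zero _
  have hfD : HasDerivAt f (deriv f v0) v0 := (hfd.differentiableAt (ho.mem_nhds hv)).hasDerivAt
  have hhD : HasDerivAt h (deriv h v0) v0 := (hhd.differentiableAt (ho.mem_nhds hv)).hasDerivAt
  have hder : 2 * b * deriv h v0 = (1 - (starRingEnd ℂ) a * a) * deriv f v0 := by
    have h1 : HasDerivAt (fun z => h z ^ 2) (2 * b * deriv h v0) v0 := by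
      simpa using hhD.fun_pow 2
    have h2 : HasDerivAt (fun z => h z ^ 2) ((1 - (starRingEnd ℂ) a * a) * deriv f v0) v0 := by
      have h3 : HasDerivAt (mob a ∘ f)
          ((1 - (starRingEnd ℂ) a * a) / (1 - (starRingEnd ℂ) a * f v0)^2 * deriv f v0) v0 :=
        (mob_deriv ha (hfn v0 hv)).comp v0 hfD
      rw [hf0] at h3
      simp only [mul_zero, sub_zero, one_pow, div_one] at h3
      apply h3.congr_of_eventuallyEq
      filter_upwards [ho.mem_nhds hv] with z hz using hh2 z hz
    exact h1.unique h2
  refine ⟨mob b ∘ h, ⟨?_, ?_, ?_, ?_⟩, ?_⟩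
  · intro z hz
    exact ((mob_deriv hb (hhn z hz)).differentiableAt.comp z
      (hhd.differentiableAt (ho.mem_nhds hz))).differentiableWithinAt
  · intro z hz w hw hzw
    exact hhi hz hw (mob_inj hb (hhn z hz) (hhn w hw) hzw)
  · intro z hz
    exact mem_ball_zero_iff.2 (mob_norm hb (hhn z hz))
  · simp [mob, b]
  · have h3 := (mob_deriv hb hb).comp v0 hhD
    rw [h3.deriv]
    have hbp : 0 < ‖b‖ := norm_pos_iff.2 hb0
    have hfp : 0 < ‖deriv f v0‖ := norm_pos_iff.2 hd
    have e1 : ∀ c : ℂ, (starRingEnd ℂ) c * c = ((‖c‖^2 : ℝ) : ℂ) := fun c => by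
      rw [mul_comm, Complex.mul_conj, Complex.normSq_eq_norm_sq]
    have hab : ‖a‖ = ‖b‖^2 := by rw [← norm_pow, hb2, norm_neg]
    have h4 : 2 * ‖b‖ * ‖deriv h v0‖ = (1 - ‖b‖^4) * ‖deriv f v0‖ := by
      have := congrArg norm hder
      rw [e1 a, hab, norm_mul, norm_mul, norm_mul] at this
      rw [show (1 - ((((‖b‖^2)^2 : ℝ)) : ℂ)) = ((1 - ‖b‖^4 : ℝ) : ℂ) by push_cast; ring,
        Complex.norm_real, Real.norm_eq_abs, abs_of_nonneg] at this
      · simpa using this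
      · have : ‖b‖^4 ≤ 1 := pow_le_one₀ (norm_nonneg b) hb.le
        linarith
    have hq : 0 < 1 - ‖b‖^2 := by nlinarith
    rw [e1 b, show (1 - ((‖b‖^2 : ℝ) : ℂ)) = ((1 - ‖b‖^2 : ℝ) : ℂ) by push_cast; ring, norm_mul,
      norm_div, norm_pow, Complex.norm_real, Real.norm_eq_abs, abs_of_pos hq]
    have h5 : ‖deriv h v0‖ = (1 - ‖b‖^4) * ‖deriv f v0‖ / (2 * ‖b‖) := by
      rw [← h4]; field_simp
    rw [h5]
    have h6 : (1 - ‖b‖ ^ 2) / (1 - ‖b‖ ^ 2) ^ 2 * ((1 - ‖b‖^4) * ‖deriv f v0‖ / (2 * ‖b‖)) =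
        (1 + ‖b‖^2) / (2 * ‖b‖) * ‖deriv f v0‖ := by
      field_simp; ring
    rw [h6]
    have h7 : 1 < (1 + ‖b‖^2) / (2 * ‖b‖) := by
      rw [lt_div_iff₀ (by positivity)]; nlinarith [sq_pos_of_pos (sub_pos.2 hb)]
    nlinarith

/-- Riemann mapping theorem -/
lemma rmt {V : Set ℂ} {v0 : ℂ} (ho : IsOpen V) (hc : IsConnected V)
    (hfull : Full V) (hV : V ≠ univ) (hv : v0 ∈ V) :
    ∃ f : ℂ → ℂ, DifferentiableOn ℂ f V ∧ InjOn f V ∧ f '' V = ball 0 1 := by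
  obtain ⟨ψ0, hψ0, hψ0d⟩ := rfam_init ho hc hfull hV hv
  obtain ⟨r, hr, hb⟩ := Metric.isOpen_iff.1 ho v0 hv
  have hcb : closedBall v0 (r/2) ⊆ V := (closedBall_subset_ball (by linarith)).trans hb
  let S : Set ℝ := (fun ψ : ℂ → ℂ => ‖deriv ψ v0‖) '' RFam V v0
  have hbd : BddAbove S := by
    refine ⟨1 / (r/2), ?_⟩
    rintro _ ⟨ψ, ⟨hd, -, hm, -⟩, rfl⟩
    apply Complex.norm_deriv_le_of_forall_mem_sphere_norm_le (by positivity)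
    · exact (hd.mono (by rw [closure_ball _ (by positivity)]; exact hcb)).diffContOnCl
    · intro z hz
      exact (mem_ball_zero_iff.1 (hm (hcb (sphere_subset_closedBall hz)))).le
  have hSne : S.Nonempty := ⟨_, mem_image_of_mem _ hψ0⟩
  obtain ⟨u, -, hu, huS⟩ := exists_seq_tendsto_sSup hSne hbd
  choose ψ hψ hψu using huS
  let 𝒰 : Ultrafilter ℕ := Filter.hyperfilter ℕ
  have h𝒰 : (𝒰 : Filter ℕ) ≤ atTop := Nat.hyperfilter_le_atTop
  obtain ⟨f, hf⟩ := montel 𝒰 ho (fun i => (hψ i).1) (C := 1)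
    (fun i z hz => (mem_ball_zero_iff.1 ((hψ i).2.2.1 hz)).le)
  have hfd : DifferentiableOn ℂ f V := hf.differentiableOn (Eventually.of_forall fun i => (hψ i).1) ho
  have hder : Tendsto (fun i => deriv (ψ i) v0) 𝒰 (𝓝 (deriv f v0)) :=
    (hf.deriv (Eventually.of_forall fun i => (hψ i).1) ho).tendsto_at hv
  have hM : ‖deriv f v0‖ = sSup S := by
    refine tendsto_nhds_unique hder.norm ((hu.mono_left h𝒰).congr fun i => ?_)
    exact (hψu i).symm
  have hpos : 0 < ‖deriv f v0‖ := by
    rw [hM]; exact (norm_pos_iff.2 hψ0d).trans_le (le_csSup hbd (mem_image_of_mem _ hψ0))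
  have hnc : ∃ x ∈ V, ∃ y ∈ V, f x ≠ f y := by
    by_contra hcon
    push Not at hcon
    have : f =ᶠ[𝓝 v0] fun _ => f v0 := by
      filter_upwards [ho.mem_nhds hv] with z hz using hcon z hz v0 hv
    rw [this.deriv_eq] at hpos
    simp at hpos
  have hfi : InjOn f V := hurwitz_inj ho hc.2 (fun i => (hψ i).1) hf (fun i => (hψ i).2.1) hnc
  have hf0 : f v0 = 0 := by
    refine tendsto_nhds_unique (hf.tendsto_at hv) ?_
    simp only [(hψ _).2.2.2]; exact tendsto_const_nhds
  have hfcl : f '' V ⊆ closedBall 0 1 := by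
    rintro _ ⟨z, hz, rfl⟩
    refine isClosed_closedBall.mem_of_tendsto (hf.tendsto_at hz) (Eventually.of_forall fun i => ?_)
    exact ball_subset_closedBall ((hψ i).2.2.1 hz)
  have hfo : f '' V ⊆ ball 0 1 := by
    rw [← interior_closedBall (0:ℂ) one_ne_zero]
    exact interior_maximal hfcl (isOpen_image_inj ho hc.2 hfd hfi Subset.rfl ho)
  refine ⟨f, hfd, hfi, Subset.antisymm hfo ?_⟩
  intro a ha
  by_contra haf
  obtain ⟨φ, hφ, hlt⟩ := rfam_koebe ho hc hfull hv ⟨hfd, hfi, mapsTo_iff_image_subset.2 hfo, hf0⟩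
    (norm_pos_iff.1 hpos) (mem_ball_zero_iff.1 ha) haf
  rw [hM] at hlt
  exact absurd (le_csSup hbd (mem_image_of_mem (fun ψ : ℂ → ℂ => ‖deriv ψ v0‖) hφ)) (not_le.2 hlt)

lemma fullSC {V : Set ℂ} (ho : IsOpen V) (hc : IsConnected V) (hfull : Full V) :
    SimplyConnectedSpace V := by
  by_cases hV : V = univ
  · subst hV
    haveI : SimplyConnectedSpace ℂ := inferInstance
    exact ContinuousMap.HomotopyEquiv.simplyConnectedSpace
      (Homeomorph.toHomotopyEquiv (Homeomorph.Set.univ ℂ))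
  obtain ⟨v0, hv⟩ := hc.nonempty
  obtain ⟨f, hfd, hfi, him⟩ := rmt ho hc hfull hV hv
  have hbij : BijOn f V (ball 0 1) := ⟨mapsTo_iff_image_subset.2 him.le, hfi, him.ge⟩
  let e : V ≃ ball (0:ℂ) 1 := hbij.equiv f
  have hcont : Continuous e := by
    apply Continuous.subtype_mk
    exact continuousOn_iff_continuous_domRestrict.1 hfd.continuousOn
  have hop : IsOpenMap e := by
    intro s hs
    have h1 : IsOpen (f '' (Subtype.val '' s)) :=
      isOpen_image_inj ho hc.2 hfd hfi (by rintro _ ⟨x, -, rfl⟩; exact x.2)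
        (ho.isOpenMap_subtype_val s hs)
    have h2 : e '' s = Subtype.val ⁻¹' (f '' (Subtype.val '' s)) := by
      ext y
      constructor
      · rintro ⟨x, hx, rfl⟩
        exact ⟨x, ⟨x, hx, rfl⟩, rfl⟩
      · rintro ⟨_, ⟨x, hx, rfl⟩, hxy⟩
        exact ⟨x, hx, Subtype.ext hxy⟩
    rw [h2]; exact h1.preimage continuous_subtype_val
  let E : V ≃ₜ ball (0:ℂ) 1 := e.toHomeomorphOfContinuousOpen hcont hop
  haveI : ContractibleSpace (ball (0:ℂ) 1) :=
    (convex_ball (0:ℂ) 1).contractibleSpace ⟨0, by simp⟩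
  exact ContinuousMap.HomotopyEquiv.simplyConnectedSpace E.toHomotopyEquiv


/-- preimage operator -/
def GG (g : ℂ → ℂ) (U' S : Set ℂ) : Set ℂ := U' ∩ g ⁻¹' S

def pre (g : ℂ → ℂ) (U' : Set ℂ) (n : ℕ) (S : Set ℂ) : Set ℂ := (GG g U')^[n] S

section dyn
variable {g : ℂ → ℂ} {U' U : Set ℂ} {d : ℕ}

lemma GG_mono {S T : Set ℂ} (h : S ⊆ T) : GG g U' S ⊆ GG g U' T :=
  inter_subset_inter_right _ (preimage_mono h)

lemma pre_zero (S : Set ℂ) : pre g U' 0 S = S := rfl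

lemma pre_succ (n : ℕ) (S : Set ℂ) : pre g U' (n+1) S = pre g U' n (GG g U' S) := rfl

lemma pre_succ' (n : ℕ) (S : Set ℂ) : pre g U' (n+1) S = GG g U' (pre g U' n S) :=
  iterate_succ_apply' _ n S

lemma mem_pre_succ {n : ℕ} {S : Set ℂ} {x : ℂ} :
    x ∈ pre g U' (n+1) S ↔ x ∈ U' ∧ g x ∈ pre g U' n S := by
  rw [pre_succ']; rfl

lemma pre_mono {n : ℕ} {S T : Set ℂ} (h : S ⊆ T) : pre g U' n S ⊆ pre g U' n T := by
  induction n with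
  | zero => exact h
  | succ n ih => rw [pre_succ', pre_succ']; exact GG_mono ih

lemma pre_map {n : ℕ} {S : Set ℂ} {x : ℂ} (h : x ∈ pre g U' n S) : g^[n] x ∈ S := by
  induction n generalizing x with
  | zero => exact h
  | succ n ih =>
    rw [iterate_succ_apply]; exact ih (mem_pre_succ.1 h).2

lemma mem_pre {n : ℕ} {S : Set ℂ} {x : ℂ} :
    x ∈ pre g U' n S ↔ (∀ i < n, g^[i] x ∈ U') ∧ g^[n] x ∈ S := by
  induction n generalizing x with
  | zero => simp [pre_zero]
  | succ n ih =>
    rw [mem_pre_succ, ih]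
    constructor
    · rintro ⟨h0, h1, h2⟩
      refine ⟨fun i hi => ?_, by rw [iterate_succ_apply]; exact h2⟩
      cases i with
      | zero => exact h0
      | succ i => rw [iterate_succ_apply]; exact h1 i (by omega)
    · rintro ⟨h1, h2⟩
      refine ⟨h1 0 (by omega), fun i hi => ?_, by rw [← iterate_succ_apply]; exact h2⟩
      rw [← iterate_succ_apply]; exact h1 (i+1) (by omega)

lemma pre_add {a c : ℕ} {S : Set ℂ} {x : ℂ} (h : x ∈ pre g U' (a + c) S) :
    g^[a] x ∈ pre g U' c S := by
  rw [mem_pre] at h ⊢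
  refine ⟨fun i hi => ?_, ?_⟩
  · rw [← iterate_add_apply]; exact h.1 _ (by omega)
  · rw [← iterate_add_apply, add_comm]; exact h.2

lemma GG_isOpen (H : PLSetting g U' U d) {S : Set ℂ} (hS : IsOpen S) : IsOpen (GG g U' S) :=
  H.holo.continuousOn.isOpen_inter_preimage H.disk'.1 hS

lemma pre_isOpen (H : PLSetting g U' U d) {S : Set ℂ} (hS : IsOpen S) (n : ℕ) :
    IsOpen (pre g U' n S) := by
  induction n with
  | zero => exact hS
  | succ n ih => rw [pre_succ']; exact GG_isOpen H ih

lemma GG_subset (H : PLSetting g U' U d) {S : Set ℂ} : GG g U' S ⊆ U := fun x hx => H.subset hx.1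

lemma pre_subset (H : PLSetting g U' U d) {S : Set ℂ} (hS : S ⊆ U) (n : ℕ) :
    pre g U' n S ⊆ U := by
  cases n with
  | zero => exact hS
  | succ n => rw [pre_succ']; exact GG_subset H

lemma GG_compact (H : PLSetting g U' U d) {S : Set ℂ} (hS : IsCompact S) (hSU : S ⊆ U) :
    IsCompact (GG g U' S) := H.proper S hSU hS

lemma pre_compact (H : PLSetting g U' U d) {S : Set ℂ} (hS : IsCompact S) (hSU : S ⊆ U) (n : ℕ) :
    IsCompact (pre g U' n S) := by
  induction n with
  | zero => exact hS
  | succ n ih => rw [pre_succ']; exact GG_compact H ih (pre_subset H hSU n)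

lemma closure_GG (H : PLSetting g U' U d) {S : Set ℂ} (hS : IsCompact (closure S))
    (hSU : closure S ⊆ U) : closure (GG g U' S) ⊆ GG g U' (closure S) :=
  closure_minimal (GG_mono subset_closure) (GG_compact H hS hSU).isClosed

lemma frontier_GG (H : PLSetting g U' U d) {S : Set ℂ} (hS : IsCompact (closure S))
    (hSU : closure S ⊆ U) : frontier (GG g U' S) ⊆ GG g U' (frontier S) := by
  rintro x ⟨hx1, hx2⟩
  have h1 := closure_GG H hS hSU hx1
  refine ⟨h1.1, h1.2, fun hintz => hx2 ?_⟩
  exact interior_maximal (GG_mono interior_subset) (GG_isOpen H isOpen_interior) ⟨h1.1, hintz⟩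

lemma closure_pre (H : PLSetting g U' U d) {S : Set ℂ} (hS : IsCompact (closure S))
    (hSU : closure S ⊆ U) (n : ℕ) : closure (pre g U' n S) ⊆ pre g U' n (closure S) :=
  closure_minimal (pre_mono subset_closure) (pre_compact H hS hSU n).isClosed

lemma frontier_pre (H : PLSetting g U' U d) {S : Set ℂ} (hS : IsCompact (closure S))
    (hSU : closure S ⊆ U) (n : ℕ) : frontier (pre g U' n S) ⊆ pre g U' n (frontier S) := by
  rintro x ⟨hx1, hx2⟩
  have h1 := mem_pre.1 (closure_pre H hS hSU n hx1)
  refine mem_pre.2 ⟨h1.1, h1.2, fun hintz => hx2 ?_⟩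
  exact interior_maximal (pre_mono interior_subset) (pre_isOpen H isOpen_interior n)
    (mem_pre.2 ⟨h1.1, hintz⟩)

lemma fullU (H : PLSetting g U' U d) : Full U := full_of_sc H.disk.1 H.disk.2.2

lemma fullU' (H : PLSetting g U' U d) : Full U' := full_of_sc H.disk'.1 H.disk'.2.2

/-- the filled postcritical set -/
def XX (g : ℂ → ℂ) (U' : Set ℂ) : Set ℂ := hull (postCrit g U')

lemma XX_compact (H : PLSetting g U' U d) : IsCompact (XX g U') := isCompact_hull H.postCrit_compact

lemma XX_subset (H : PLSetting g U' U d) : XX g U' ⊆ U' :=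
  fullU' H _ H.postCrit_subset H.postCrit_compact

lemma XX_hull (H : PLSetting g U' U d) : hull (XX g U') = XX g U' := hull_hull H.postCrit_compact

lemma crit_XX : critPts g U' ⊆ XX g U' := fun c hc =>
  subset_hull _ (subset_closure (mem_iUnion.2 ⟨0, c, hc, rfl⟩))

lemma critVal_XX : g '' critPts g U' ⊆ XX g U' := by
  rintro _ ⟨c, hc, rfl⟩
  exact subset_hull _ (subset_closure (mem_iUnion.2 ⟨1, c, hc, rfl⟩))

lemma g_postCrit (H : PLSetting g U' U d) : g '' postCrit g U' ⊆ postCrit g U' := by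
  refine (H.holo.continuousOn.mono H.postCrit_subset).image_closure.trans (closure_mono ?_)
  rintro _ ⟨x, hx, rfl⟩
  obtain ⟨n, c, hc, rfl⟩ := mem_iUnion.1 hx
  exact mem_iUnion.2 ⟨n+1, c, hc, iterate_succ_apply' g n c⟩

lemma g_XX (H : PLSetting g U' U d) {x : ℂ} (hx : x ∈ XX g U') : g x ∈ XX g U' := by
  have := image_hull_subset H.disk'.1 H.holo H.postCrit_compact (XX_subset H)
    (mem_image_of_mem g hx)
  exact hull_mono (g_postCrit H) this

lemma XX_sub_GG (H : PLSetting g U' U d) {S : Set ℂ} (h : XX g U' ⊆ S) : XX g U' ⊆ GG g U' S :=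
  fun x hx => ⟨XX_subset H hx, h (g_XX H hx)⟩

lemma XX_sub_pre (H : PLSetting g U' U d) {S : Set ℂ} (h : XX g U' ⊆ S) (n : ℕ) :
    XX g U' ⊆ pre g U' n S := by
  induction n with
  | zero => exact h
  | succ n ih => rw [pre_succ']; exact XX_sub_GG H ih

def OO (g : ℂ → ℂ) (U' U : Set ℂ) : Set ℂ := U ∩ (XX g U')ᶜ

lemma OO_open (H : PLSetting g U' U d) : IsOpen (OO g U' U) :=
  H.disk.1.inter (XX_compact H).isClosed.isOpen_compl

lemma OO_precon (H : PLSetting g U' U d) : IsPreconnected (OO g U' U) := by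
  apply unicoherent_open H.disk.1 (XX_compact H).isClosed.isOpen_compl H.disk.2.1.2
    (isConnected_compl_hull H.postCrit_compact).2
  rw [← compl_subset_iff_union]
  exact compl_subset_compl.2 ((XX_subset H).trans H.subset)

lemma GG_OO (H : PLSetting g U' U d) {S : Set ℂ} (hS : S ⊆ OO g U' U) : GG g U' S ⊆ OO g U' U :=
  fun x hx => ⟨H.subset hx.1, fun h => (hS hx.2).2 (g_XX H h)⟩

lemma pre_OO (H : PLSetting g U' U d) {S : Set ℂ} (hS : S ⊆ OO g U' U) (n : ℕ) :
    pre g U' n S ⊆ OO g U' U := by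
  induction n with
  | zero => exact hS
  | succ n ih => rw [pre_succ']; exact GG_OO H ih

lemma exists_q (H : PLSetting g U' U d) : ∃ q, q ∈ U ∧ q ∉ U' := by
  by_contra h
  push Not at h
  exact H.ne (H.subset.antisymm h)

lemma q_OO (H : PLSetting g U' U d) {q : ℂ} (h1 : q ∈ U) (h2 : q ∉ U') : q ∈ OO g U' U :=
  ⟨h1, fun h => h2 (XX_subset H h)⟩

lemma U'_ne_univ (H : PLSetting g U' U d) : U' ≠ univ := by
  obtain ⟨q, -, hq⟩ := exists_q H
  exact fun h => hq (h ▸ mem_univ q)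

lemma g_openMap (H : PLSetting g U' U d) {s : Set ℂ} (hs : s ⊆ U') (hso : IsOpen s) :
    IsOpen (g '' s) := by
  rcases (H.holo.analyticOnNhd H.disk'.1).is_constant_or_isOpen H.disk'.2.1.2 with ⟨w, hw⟩ | h
  · exfalso
    obtain ⟨v, hv⟩ := H.disk.2.1.nonempty
    obtain ⟨r, hr, hb⟩ := Metric.isOpen_iff.1 H.disk.1 v hv
    have hmem : v + ((r/2 : ℝ) : ℂ) ∈ U := hb (by
      rw [mem_ball, dist_eq_norm, add_sub_cancel_left, Complex.norm_real, Real.norm_eq_abs,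
        abs_of_pos (by linarith)]; linarith)
    obtain ⟨x, hx, hx2⟩ := H.deg.1 v hv
    obtain ⟨y, hy, hy2⟩ := H.deg.1 _ hmem
    have h0 : ((r/2 : ℝ) : ℂ) = 0 := by
      have e1 : g x = v := hx2
      have e2 : g y = v + ((r/2 : ℝ) : ℂ) := hy2
      rw [hw x hx] at e1; rw [hw y hy] at e2
      linear_combination e1 - e2
    have : r / 2 = 0 := by exact_mod_cast h0
    linarith
  · exact h s hs hso

lemma F5 (H : PLSetting g U' U d) {V : Set ℂ} (hV : Full V) : Full (GG g U' V) := by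
  intro K hK hKc x hx
  have hKU : hull K ⊆ U' := fullU' H K (hK.trans inter_subset_left) hKc
  refine ⟨hKU hx, ?_⟩
  have h1 := image_hull_subset H.disk'.1 H.holo hKc hKU (mem_image_of_mem g hx)
  refine hV (g '' K) ?_ (hKc.image_of_continuousOn
    (H.holo.continuousOn.mono (hK.trans inter_subset_left))) h1
  rintro _ ⟨y, hy, rfl⟩
  exact (hK hy).2

lemma GG_hull (H : PLSetting g U' U d) {K : Set ℂ} (hK : IsCompact K) (hKU : K ⊆ U) :
    GG g U' (hull K) ⊆ hull (GG g U' K) := by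
  intro x hx
  have hhU : hull K ⊆ U := fullU H K hKU hK
  by_cases hxK : g x ∈ K
  · exact subset_hull _ ⟨hx.1, hxK⟩
  let B := connectedComponentIn Kᶜ (g x)
  have hBh : B ⊆ hull K := cc_subset_hull hx.2
  have hcl : closure B ⊆ hull K := closure_minimal hBh (isCompact_hull hK).isClosed
  have hclc : IsCompact (closure B) := (isCompact_hull hK).of_isClosed_subset isClosed_closure hcl
  have hb : Bornology.IsBounded (GG g U' B) :=
    (GG_compact H hclc (hcl.trans hhU)).isBounded.subset (GG_mono subset_closure)
  have hfr : frontier (GG g U' B) ⊆ GG g U' K :=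
    (frontier_GG H hclc (hcl.trans hhU)).trans (GG_mono (cc_frontier hK.isClosed _))
  exact subset_hull_of_frontier hb hfr ⟨hx.1, mem_connectedComponentIn hxK⟩

/-- the proper map on subtypes -/
lemma covering (H : PLSetting g U' U d) :
    IsCoveringMapOn (fun x : U' => (⟨g x, H.mapsTo x.2⟩ : U)) {w : U | (w : ℂ) ∉ XX g U'} := by
  set p : U' → U := fun x => ⟨g x, H.mapsTo x.2⟩ with hp
  have hcont : Continuous p :=
    Continuous.subtype_mk (continuousOn_iff_continuous_domRestrict.1 H.holo.continuousOn) _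
  have hUlc : LocallyCompactSpace U := H.disk.1.locallyCompactSpace
  have hproper : IsProperMap p := by
    rw [isProperMap_iff_isCompact_preimage]
    refine ⟨hcont, fun {K} hK => ?_⟩
    have h1 : IsCompact (U' ∩ g ⁻¹' (Subtype.val '' K)) :=
      H.proper _ (by rintro _ ⟨x, -, rfl⟩; exact x.2) (hK.image continuous_subtype_val)
    rw [Subtype.isCompact_iff]
    convert h1 using 1
    ext x
    constructor
    · rintro ⟨y, hy, rfl⟩
      exact ⟨y.2, p y, hy, rfl⟩
    · rintro ⟨hx, w, hw, hwx⟩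
      refine ⟨⟨x, hx⟩, ?_, rfl⟩
      have : p ⟨x, hx⟩ = w := Subtype.ext hwx.symm
      rw [mem_preimage, this]; exact hw
  refine hproper.isClosedMap.isCoveringMapOn_of_isLocalHomeomorphOn ?_ ?_
  · intro w hw
    have h1 : (U' ∩ g ⁻¹' {(w : ℂ)}).ncard = d := H.deg.2 w w.2 fun h => hw (critVal_XX h)
    have h2 : (U' ∩ g ⁻¹' {(w : ℂ)}).Finite := by
      apply finite_of_ncard_ne_zero
      rw [h1]; have := H.two_le_d; omega
    refine Set.Finite.of_finite_image (f := Subtype.val) (h2.subset ?_) Subtype.val_injective.injOn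
    rintro _ ⟨x, hx, rfl⟩
    exact ⟨x.2, congrArg Subtype.val hx⟩
  · have hval : IsLocalHomeomorph (Subtype.val : U → ℂ) :=
      H.disk.1.isOpenEmbedding_subtypeVal.isLocalHomeomorph
    have hval' : IsLocalHomeomorph (Subtype.val : U' → ℂ) :=
      H.disk'.1.isOpenEmbedding_subtypeVal.isLocalHomeomorph
    refine IsLocalHomeomorphOn.of_comp_left (g := (Subtype.val : U → ℂ))
      ?_ (fun x _ => hval.isLocalHomeomorphOn x (mem_univ _)) (fun x _ => hcont.continuousAt)
    have hgl : IsLocalHomeomorphOn g {x | x ∈ U' ∧ x ∉ critPts g U'} := by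
      rintro x ⟨hx, hxc⟩
      have hd : deriv g x ≠ 0 := fun h => hxc ⟨hx, h⟩
      have hs : HasStrictDerivAt g (deriv g x) x :=
        (H.holo.analyticAt (H.disk'.1.mem_nhds hx)).hasStrictDerivAt
      refine ⟨(hs.hasStrictFDerivAt_equiv hd).toOpenPartialHomeomorph g,
        (hs.hasStrictFDerivAt_equiv hd).mem_toOpenPartialHomeomorph_source, by simp⟩
    have e : (Subtype.val : U → ℂ) ∘ p = g ∘ (Subtype.val : U' → ℂ) := rfl
    rw [e]
    refine hgl.comp (t := {x | x ∈ U' ∧ x ∉ critPts g U'})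
      (fun x _ => hval'.isLocalHomeomorphOn x (mem_univ _)) ?_
    intro x hx
    exact ⟨x.2, fun hc => hx (critVal_XX (mem_image_of_mem g hc))⟩

lemma deriv_ne (H : PLSetting g U' U d) {x : ℂ} (hx : x ∈ U') (hg : g x ∉ XX g U') :
    deriv g x ≠ 0 := fun h => hg (critVal_XX (mem_image_of_mem g ⟨hx, h⟩))

lemma cover_lift (H : PLSetting g U' U d) {S : Set ℂ} (hS : IsOpen S)
    (hsc : SimplyConnectedSpace S) {f : ℂ → ℂ} (hf : DifferentiableOn ℂ f S)
    (hfm : MapsTo f S (OO g U' U)) {s0 x0 : ℂ} (hs0 : s0 ∈ S) (hx0 : x0 ∈ U') (h0 : g x0 = f s0) :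
    ∃ σ : ℂ → ℂ, DifferentiableOn ℂ σ S ∧ σ s0 = x0 ∧ ∀ s ∈ S, σ s ∈ U' ∧ g (σ s) = f s := by
  classical
  have hlp : LocallyPathConnectedSpace S := hS.locallyPathConnectedSpace
  let F : C(S, U) := ⟨fun s => ⟨f s, (hfm s.2).1⟩, Continuous.subtype_mk
    (continuousOn_iff_continuous_domRestrict.1 hf.continuousOn) _⟩
  obtain ⟨L, ⟨hL0, hL⟩, -⟩ := (covering H).existsUnique_continuousMap_lifts F (a₀ := ⟨s0, hs0⟩)
    (e₀ := ⟨x0, hx0⟩) (Subtype.ext h0) (fun s => (hfm s.2).2)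
  let σ : ℂ → ℂ := fun s => if h : s ∈ S then (L ⟨s, h⟩ : ℂ) else 0
  have hσ : ∀ s (h : s ∈ S), σ s = L ⟨s, h⟩ := fun s h => dif_pos h
  have hσc : ContinuousOn σ S := by
    rw [continuousOn_iff_continuous_domRestrict]
    have : S.domRestrict σ = fun s => (L s : ℂ) := by
      ext s; exact hσ s s.2
    rw [this]; exact continuous_subtype_val.comp L.continuous
  have hprop : ∀ s ∈ S, σ s ∈ U' ∧ g (σ s) = f s := by
    intro s hs
    rw [hσ s hs]
    exact ⟨(L ⟨s, hs⟩).2, congrArg Subtype.val (congrFun hL ⟨s, hs⟩)⟩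
  refine ⟨σ, ?_, by rw [hσ s0 hs0, hL0], hprop⟩
  intro s hs
  have hfs : DifferentiableAt ℂ f s := hf.differentiableAt (hS.mem_nhds hs)
  have hd : deriv g (σ s) ≠ 0 := deriv_ne H (hprop s hs).1 (by
    rw [(hprop s hs).2]; exact (hfm hs).2)
  have hst : HasStrictDerivAt g (deriv g (σ s)) (σ s) :=
    (H.holo.analyticAt (H.disk'.1.mem_nhds (hprop s hs).1)).hasStrictDerivAt
  have hinv := hst.eventually_left_inverse hd
  have hloc := (hst.to_localInverse hd).hasDerivAt.differentiableAt
  rw [(hprop s hs).2] at hloc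
  have hev : ∀ᶠ t in 𝓝 s, σ t = hst.localInverse g _ _ hd (f t) := by
    have h1 : Tendsto σ (𝓝 s) (𝓝 (σ s)) := hσc.continuousAt (hS.mem_nhds hs)
    filter_upwards [h1.eventually hinv, hS.mem_nhds hs] with t ht htS
    rw [← (hprop t htS).2, ht]
  exact ((hloc.comp s hfs).congr_of_eventuallyEq hev).differentiableWithinAt

end dyn


section dyn
variable {g : ℂ → ℂ} {U' U : Set ℂ} {d : ℕ}

def Br (g : ℂ → ℂ) (U' : Set ℂ) (n : ℕ) (D : Set ℂ) (h : ℂ → ℂ) : Prop :=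
  DifferentiableOn ℂ h D ∧ ∀ w ∈ D, h w ∈ pre g U' n {w}

lemma Br.mono {n : ℕ} {D D' : Set ℂ} {h : ℂ → ℂ} (hb : Br g U' n D h) (hD : D' ⊆ D) :
    Br g U' n D' h := ⟨hb.1.mono hD, fun w hw => hb.2 w (hD hw)⟩

lemma Br.iter {n : ℕ} {D : Set ℂ} {h : ℂ → ℂ} (hb : Br g U' n D h) {w : ℂ} (hw : w ∈ D) :
    g^[n] (h w) = w := pre_map (hb.2 w hw)

lemma Br.mem {n : ℕ} {D : Set ℂ} {h : ℂ → ℂ} (hb : Br g U' n D h) (hn : 1 ≤ n) {w : ℂ}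
    (hw : w ∈ D) : h w ∈ U' := (mem_pre.1 (hb.2 w hw)).1 0 (by omega)

lemma iter_diffAt (H : PLSetting g U' U d) {n : ℕ} {x : ℂ} (hx : x ∈ pre g U' n univ) :
    DifferentiableAt ℂ (g^[n]) x := by
  induction n generalizing x with
  | zero => exact differentiableAt_id
  | succ n ih =>
    rw [iterate_succ]
    have h := mem_pre_succ.1 hx
    exact (ih h.2).comp x (H.holo.differentiableAt (H.disk'.1.mem_nhds h.1))

lemma iter_diffOn (H : PLSetting g U' U d) (n : ℕ) :
    DifferentiableOn ℂ (g^[n]) (pre g U' n univ) :=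
  fun x hx => (iter_diffAt H hx).differentiableWithinAt

lemma iter_strict (H : PLSetting g U' U d) {n : ℕ} {x : ℂ} (hx : x ∈ pre g U' n univ) :
    HasStrictDerivAt (g^[n]) (deriv (g^[n]) x) x :=
  ((iter_diffOn H n).analyticAt ((pre_isOpen H isOpen_univ n).mem_nhds hx)).hasStrictDerivAt

lemma Br.deriv_mul (H : PLSetting g U' U d) {n : ℕ} {D : Set ℂ} {h : ℂ → ℂ} (hb : Br g U' n D h)
    (hD : IsOpen D) {w : ℂ} (hw : w ∈ D) : deriv (g^[n]) (h w) * deriv h w = 1 := by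
  have hx : h w ∈ pre g U' n univ := pre_mono (subset_univ _) (hb.2 w hw)
  have h1 := (iter_diffAt H hx).hasDerivAt
  have h2 := (hb.1.differentiableAt (hD.mem_nhds hw)).hasDerivAt
  have h3 := h1.comp w h2
  have h4 : HasDerivAt (g^[n] ∘ h) 1 w := by
    apply (hasDerivAt_id w).congr_of_eventuallyEq
    filter_upwards [hD.mem_nhds hw] with t ht using hb.iter ht
  exact h3.unique h4

lemma Br.uniq (H : PLSetting g U' U d) {n : ℕ} {D : Set ℂ} {h k : ℂ → ℂ} (hb : Br g U' n D h)
    (kb : Br g U' n D k) (hD : IsOpen D) (hc : IsPreconnected D) {w : ℂ} (hw : w ∈ D)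
    (e : h w = k w) : EqOn h k D := by
  refine AnalyticOnNhd.eqOn_of_preconnected_of_eventuallyEq (hb.1.analyticOnNhd hD)
    (kb.1.analyticOnNhd hD) hc hw ?_
  have hx : h w ∈ pre g U' n univ := pre_mono (subset_univ _) (hb.2 w hw)
  have hst := iter_strict H hx
  have hd : deriv (g^[n]) (h w) ≠ 0 := left_ne_zero_of_mul_eq_one (hb.deriv_mul H hD hw)
  have hinv := hst.eventually_left_inverse hd
  have h1 : Tendsto h (𝓝 w) (𝓝 (h w)) := hb.1.continuousOn.continuousAt (hD.mem_nhds hw)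
  have h2 : Tendsto k (𝓝 w) (𝓝 (h w)) := e ▸ kb.1.continuousOn.continuousAt (hD.mem_nhds hw)
  filter_upwards [h1.eventually hinv, h2.eventually hinv, hD.mem_nhds hw] with t ht1 ht2 htD
  rw [← ht1, ← ht2, hb.iter htD, kb.iter htD]

lemma exists_br (H : PLSetting g U' U d) {D : Set ℂ} (hD : IsOpen D) (hsc : SimplyConnectedSpace D)
    (hDO : D ⊆ OO g U' U) {z : ℂ} (hz : z ∈ D) {n : ℕ} {x : ℂ} (hx : x ∈ pre g U' n {z}) :
    ∃ h, Br g U' n D h ∧ h z = x := by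
  induction n generalizing x with
  | zero => exact ⟨id, ⟨differentiableOn_id, fun w hw => rfl⟩, hx.symm⟩
  | succ n ih =>
    have hx' := mem_pre_succ.1 hx
    obtain ⟨h, hb, hh⟩ := ih hx'.2
    have hm : MapsTo h D (OO g U' U) := fun w hw =>
      pre_OO H (singleton_subset_iff.2 (hDO hw)) n (hb.2 w hw)
    obtain ⟨σ, hσ, hσ0, hσp⟩ := cover_lift H hD hsc hb.1 hm hz hx'.1 hh.symm
    refine ⟨σ, ⟨hσ, fun w hw => mem_pre_succ.2 ⟨(hσp w hw).1, ?_⟩⟩, hσ0⟩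
    rw [(hσp w hw).2]; exact hb.2 w hw

lemma ball_sc (z : ℂ) {r : ℝ} (hr : 0 < r) : SimplyConnectedSpace (ball z r) := by
  have : ContractibleSpace (ball z r) := (convex_ball z r).contractibleSpace ⟨z, by simpa using hr⟩
  infer_instance

/-- propagation of limits of branches -/
lemma propagate (H : PLSetting g U' U d) {ι : Type*} (𝒰 : Ultrafilter ι) {m : ι → ℕ}
    (hm : ∀ i, 1 ≤ m i) {φ : ℂ → ℂ} (hφ : Differentiable ℂ φ) {z0 : ℂ} {r0 : ℝ} (hr0 : 0 < r0)
    (hb0 : ball z0 r0 ⊆ OO g U' U) {e0 : ι → ℂ → ℂ} (he0 : ∀ i, Br g U' (m i) (ball z0 r0) (e0 i))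
    (hl0 : TendstoLocallyUniformlyOn e0 φ 𝒰 (ball z0 r0)) {z : ℂ} (hz : z ∈ OO g U' U) :
    ∃ r > 0, ball z r ⊆ OO g U' U ∧ ∃ e : ι → ℂ → ℂ, (∀ i, Br g U' (m i) (ball z r) (e i)) ∧
      TendstoLocallyUniformlyOn e φ 𝒰 (ball z r) := by
  let Q : Set ℂ := {z | ∃ r > 0, ball z r ⊆ OO g U' U ∧ ∃ e : ι → ℂ → ℂ,
    (∀ i, Br g U' (m i) (ball z r) (e i)) ∧ TendstoLocallyUniformlyOn e φ 𝒰 (ball z r)}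
  have hQo : IsOpen Q := by
    rw [Metric.isOpen_iff]
    rintro w ⟨r, hr, hb, e, he, hl⟩
    refine ⟨r, hr, fun v hv => ?_⟩
    have hsub : ball v (r - dist v w) ⊆ ball w r := ball_subset_ball' (by linarith)
    exact ⟨r - dist v w, sub_pos.2 hv, hsub.trans hb, e, fun i => (he i).mono hsub, hl.mono hsub⟩
  suffices h : OO g U' U ⊆ Q from h hz
  refine (OO_precon H).subset_of_closure_inter_subset hQo
    ⟨z0, hb0 (mem_ball_self hr0), r0, hr0, hb0, e0, he0, hl0⟩ ?_
  rintro w ⟨hwQ, hwO⟩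
  obtain ⟨r, hr, hb⟩ := Metric.isOpen_iff.1 (OO_open H) w hwO
  obtain ⟨v, ⟨s, hs, hbs, e, he, hl⟩, hvw⟩ := Metric.mem_closure_iff.1 hwQ r hr
  have hv : v ∈ ball w r := by rw [mem_ball, dist_comm]; exact hvw
  have hvs : v ∈ ball v s := mem_ball_self hs
  choose e' he' hev using fun i => exists_br H isOpen_ball (ball_sc w hr) hb hv ((he i).2 v hvs)
  refine ⟨r, hr, hb, e', he', ?_⟩
  have hcv : Tendsto (fun i => e' i v) 𝒰 (𝓝 (φ v)) := by
    simp only [hev]; exact hl.tendsto_at hvs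
  obtain ⟨f, hf⟩ := factN 𝒰 H.disk'.1 H.disk'.2.1 (fullU' H) (U'_ne_univ H) isOpen_ball
    (convex_ball w r).isPreconnected (fun i => (he' i).1) (fun i x hx => (he' i).mem (hm i) hx)
    hv (tendsto_const_nhds (x := v)) hcv
  have hfd : DifferentiableOn ℂ f (ball w r) :=
    hf.differentiableOn (Eventually.of_forall fun i => (he' i).1) isOpen_ball
  have heq : EqOn f φ (ball w r) := by
    refine AnalyticOnNhd.eqOn_of_preconnected_of_eventuallyEq (hfd.analyticOnNhd isOpen_ball)
      (hφ.differentiableOn.analyticOnNhd isOpen_ball) (convex_ball w r).isPreconnected hv ?_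
    have hn : ball v s ∩ ball w r ∈ 𝓝 v := (isOpen_ball.inter isOpen_ball).mem_nhds ⟨hvs, hv⟩
    filter_upwards [hn] with t ht
    have h1 : ∀ i, e' i t = e i t := fun i =>
      ((he' i).mono inter_subset_right).uniq H ((he i).mono inter_subset_left)
        (isOpen_ball.inter isOpen_ball) ((convex_ball v s).inter (convex_ball w r)).isPreconnected
        ⟨hvs, hv⟩ (hev i) ht
    refine tendsto_nhds_unique (hf.tendsto_at ht.2) ?_
    simp only [h1]; exact hl.tendsto_at ht.1
  exact hf.congr_right heq

lemma no_id (H : PLSetting g U' U d) {ι : Type*} (𝒰 : Ultrafilter ι) {m : ι → ℕ}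
    (hm : ∀ i, 1 ≤ m i) {z0 : ℂ} {r0 : ℝ} (hr0 : 0 < r0)
    (hb0 : ball z0 r0 ⊆ OO g U' U) {e0 : ι → ℂ → ℂ} (he0 : ∀ i, Br g U' (m i) (ball z0 r0) (e0 i))
    (hl0 : TendstoLocallyUniformlyOn e0 (fun z => z) 𝒰 (ball z0 r0)) : False := by
  obtain ⟨q, hq, hq'⟩ := exists_q H
  obtain ⟨r, hr, hb, e, he, hl⟩ := propagate H 𝒰 hm differentiable_id hr0 hb0 he0 hl0 (q_OO H hq hq')
  have hnc : ¬ ∀ᶠ w in 𝓝 q, w = q := by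
    intro h
    have : ({q} : Set ℂ) ∈ 𝓝 q := h
    exact (NormedField.nhdsNE_neBot q).ne (by
      rw [nhdsWithin, inf_principal_eq_bot]; simpa using this)
  obtain ⟨δ, hδ, hev⟩ := hurwitz isOpen_ball (fun i => (he i).1) hl (mem_ball_self hr) hnc hr
  obtain ⟨i, hi⟩ := hev.exists
  obtain ⟨x, hx, hxq⟩ := hi (mem_ball_self hδ)
  have h2 := (he i).mem (hm i) hx
  rw [hxq] at h2
  exact hq' h2

/-- limits of branches are constant -/
lemma claimC (H : PLSetting g U' U d) {ι : Type*} (𝒰 : Ultrafilter ι) {n : ι → ℕ}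
    (hn : Tendsto n 𝒰 atTop) (hn1 : ∀ i, 1 ≤ n i) {c : ℂ} {ρ : ℝ}
    (hD : ball c ρ ⊆ OO g U' U) {h : ι → ℂ → ℂ} (hb : ∀ i, Br g U' (n i) (ball c ρ) (h i))
    {zi : ι → ℂ} {z y : ℂ} (hz : z ∈ ball c ρ) (hzi : Tendsto zi 𝒰 (𝓝 z))
    (hy : Tendsto (fun i => h i (zi i)) 𝒰 (𝓝 y)) :
    TendstoLocallyUniformlyOn h (fun _ => y) 𝒰 (ball c ρ) := by
  classical
  obtain ⟨f, hf⟩ := factN 𝒰 H.disk'.1 H.disk'.2.1 (fullU' H) (U'_ne_univ H) isOpen_ball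
    (convex_ball c ρ).isPreconnected (fun i => (hb i).1) (fun i x hx => (hb i).mem (hn1 i) hx)
    hz hzi hy
  have hfd : DifferentiableOn ℂ f (ball c ρ) :=
    hf.differentiableOn (Eventually.of_forall fun i => (hb i).1) isOpen_ball
  have hfc := hfd.continuousOn
  have hnh : 𝓝[ball c ρ] z = 𝓝 z := isOpen_ball.nhdsWithin_eq hz
  have hfz : f z = y := by
    refine tendsto_nhds_unique ?_ hy
    have h1 := tendsto_of_tlu hfc hf hz
    rw [hnh] at h1
    exact h1.comp (tendsto_id.prodMk hzi)
  by_cases hcon : ∀ᶠ w in 𝓝 z, f w = f z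
  · refine hf.congr_right fun w hw => ?_
    rw [locConst_propagate isOpen_ball (convex_ball c ρ).isPreconnected hfd hz hw hcon, hfz]
  exfalso
  obtain ⟨r, hr, hrb⟩ := Metric.isOpen_iff.1 isOpen_ball z hz
  obtain ⟨δ, hδ, hev⟩ := hurwitz isOpen_ball (fun i => (hb i).1) hf hz hcon hr
  let k : ι → ℂ → ℂ := fun i => if ball (f z) δ ⊆ h i '' ball z r then g^[n i] else fun _ => z
  have hkin : ∀ i, ∀ x ∈ ball (f z) δ, k i x ∈ ball z r := by
    intro i x hx
    by_cases hi : ball (f z) δ ⊆ h i '' ball z r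
    · simp only [k, if_pos hi]
      obtain ⟨w, hw, rfl⟩ := hi hx
      rw [(hb i).iter (hrb hw)]; exact hw
    · simp only [k, if_neg hi]; exact mem_ball_self hr
  have hkd : ∀ i, DifferentiableOn ℂ (k i) (ball (f z) δ) := by
    intro i
    by_cases hi : ball (f z) δ ⊆ h i '' ball z r
    · simp only [k, if_pos hi]
      refine (iter_diffOn H (n i)).mono fun x hx => ?_
      obtain ⟨w, hw, rfl⟩ := hi hx
      exact pre_mono (subset_univ _) ((hb i).2 w (hrb hw))
    · simp only [k, if_neg hi]; exact differentiableOn_const _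
  obtain ⟨κ, hκ⟩ := montel 𝒰 isOpen_ball hkd (C := ‖z‖ + r) (fun i x hx => by
    have := hkin i x hx
    rw [mem_ball, dist_eq_norm] at this
    have h2 : ‖k i x‖ ≤ ‖z‖ + ‖k i x - z‖ := norm_le_norm_add_norm_sub' _ _
    linarith)
  have hκc : ContinuousOn κ (ball (f z) δ) :=
    (hκ.differentiableOn (Eventually.of_forall hkd) isOpen_ball).continuousOn
  -- small ball
  obtain ⟨s, hs, hsb⟩ : ∃ s > 0, ball z s ⊆ ball c ρ ∩ f ⁻¹' ball (f z) δ := by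
    apply Metric.mem_nhds_iff.1
    exact inter_mem (isOpen_ball.mem_nhds hz)
      ((hfc.continuousAt (isOpen_ball.mem_nhds hz)).preimage_mem_nhds (ball_mem_nhds _ hδ))
  have hκf : ∀ w ∈ ball z s, κ (f w) = w := by
    intro w hw
    have hw1 := (hsb hw).1
    have hw2 : f w ∈ ball (f z) δ := (hsb hw).2
    have h1 := tendsto_of_tlu hκc hκ hw2
    rw [isOpen_ball.nhdsWithin_eq hw2] at h1
    have h2 := h1.comp (tendsto_id.prodMk (hf.tendsto_at hw1))
    refine tendsto_nhds_unique h2 ((tendsto_const_nhds (x := w)).congr' ?_)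
    filter_upwards [hev] with i hi
    simp only [comp_apply, id, k, if_pos hi]
    exact ((hb i).iter hw1).symm
  -- the pair index
  let J := {p : ι × ι // n p.1 < n p.2}
  let F : Filter J := comap Subtype.val ((𝒰 : Filter ι) ×ˢ (𝒰 : Filter ι))
  have hF : F.NeBot := by
    refine comap_neBot fun t ht => ?_
    obtain ⟨A, hA, B, hB, hAB⟩ := mem_prod_iff.1 ht
    obtain ⟨i, hi⟩ := 𝒰.neBot.nonempty_of_mem hA
    obtain ⟨l, hl, hl2⟩ := 𝒰.neBot.nonempty_of_mem (inter_mem hB (hn.eventually_gt_atTop (n i)))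
    exact ⟨⟨(i, l), hl2⟩, hAB ⟨hi, hl⟩⟩
  let 𝒱 : Ultrafilter J := Ultrafilter.of F
  have h𝒱 : Tendsto (Subtype.val : J → ι × ι) 𝒱 ((𝒰 : Filter ι) ×ˢ (𝒰 : Filter ι)) :=
    tendsto_comap.mono_left (Ultrafilter.of_le F)
  have h𝒱1 : Tendsto (fun j : J => j.1.1) 𝒱 𝒰 := tendsto_fst.comp h𝒱
  have h𝒱2 : Tendsto (fun j : J => j.1.2) 𝒱 𝒰 := tendsto_snd.comp h𝒱
  let e : J → ℂ → ℂ := fun j w => g^[n j.1.1] (h j.1.2 w)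
  have hsc : ball z s ⊆ ball c ρ := fun w hw => (hsb hw).1
  refine no_id H 𝒱 (m := fun j => n j.1.2 - n j.1.1) (fun j => by have := j.2; omega) hs
    (hsc.trans hD) (e0 := e) ?_ ?_
  · intro j
    have hj : n j.1.2 = n j.1.1 + (n j.1.2 - n j.1.1) := by have := j.2; omega
    refine ⟨?_, fun w hw => ?_⟩
    · intro w hw
      have h1 : h j.1.2 w ∈ pre g U' (n j.1.1) univ := by
        have := (hb j.1.2).2 w (hsc hw)
        rw [mem_pre] at this ⊢
        exact ⟨fun i hi => this.1 i (by have := j.2; omega), mem_univ _⟩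
      exact ((iter_diffAt H h1).comp w ((hb j.1.2).1.differentiableAt
        (isOpen_ball.mem_nhds (hsc hw)))).differentiableWithinAt
    · apply pre_add
      rw [← hj]; exact (hb j.1.2).2 w (hsc hw)
  · apply tlu_of_tendsto continuousOn_id
    intro x hx
    rw [isOpen_ball.nhdsWithin_eq hx]
    have hx1 := hsc hx
    have hx2 : f x ∈ ball (f z) δ := (hsb hx).2
    have h1 := tendsto_of_tlu hκc hκ hx2
    rw [isOpen_ball.nhdsWithin_eq hx2, hκf x hx] at h1
    have h2 := tendsto_of_tlu hfc hf hx1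
    rw [isOpen_ball.nhdsWithin_eq hx1] at h2
    have h3 : Tendsto (fun q : J × ℂ => (q.1.1.2, q.2)) ((𝒱 : Filter J) ×ˢ 𝓝 x)
        ((𝒰 : Filter ι) ×ˢ 𝓝 x) := (h𝒱2.comp tendsto_fst).prodMk tendsto_snd
    have h4 : Tendsto (fun q : J × ℂ => (q.1.1.1, h q.1.1.2 q.2)) ((𝒱 : Filter J) ×ˢ 𝓝 x)
        ((𝒰 : Filter ι) ×ˢ 𝓝 (f x)) := (h𝒱1.comp tendsto_fst).prodMk (h2.comp h3)
    refine (h1.comp h4).congr' ?_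
    have h5 : ∀ᶠ q in (𝒱 : Filter J) ×ˢ 𝓝 x, ball (f z) δ ⊆ h q.1.1.1 '' ball z r :=
      (h𝒱1.comp tendsto_fst).eventually hev
    filter_upwards [h5] with q hq
    simp only [comp_apply, k, if_pos hq, e]

lemma claimR (H : PLSetting g U' U d) {ι : Type*} (𝒰 : Ultrafilter ι) {n : ι → ℕ}
    (hn1 : ∀ i, 1 ≤ n i) {c : ℂ} {ρ : ℝ} (hρ : 0 < ρ)
    (hD : ball c ρ ⊆ OO g U' U) {h : ι → ℂ → ℂ} (hb : ∀ i, Br g U' (n i) (ball c ρ) (h i))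
    {y : ℂ} (hl : TendstoLocallyUniformlyOn h (fun _ => y) 𝒰 (ball c ρ)) (hy : y ∈ OO g U' U) :
    y ∈ closure (repellingPts g U') := by
  obtain ⟨r, hr, hbr, e, he, hle⟩ := propagate H 𝒰 hn1 (differentiable_const y) hρ hD hb hl hy
  rw [Metric.mem_closure_iff]
  intro ε hε
  have hyb : y ∈ ball y r := mem_ball_self hr
  have hder := hle.deriv (Eventually.of_forall fun i => (he i).1) isOpen_ball
  have hd0 : (deriv (fun _ : ℂ => y)) = fun _ => 0 := by ext; simp
  rw [hd0] at hder
  have h1 := tendsto_of_tlu continuousOn_const hder hyb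
  rw [isOpen_ball.nhdsWithin_eq hyb] at h1
  have h2 : ∀ᶠ q in (𝒰 : Filter ι) ×ˢ 𝓝 y, ‖deriv (e q.1) q.2‖ < 1 := by
    have := h1.norm
    rw [norm_zero] at this
    exact this.eventually_lt_const one_pos
  obtain ⟨A, hA, B, hB, hAB⟩ := eventually_prod_iff.1 h2
  obtain ⟨s, hs, hsB⟩ := Metric.mem_nhds_iff.1 (inter_mem hB (ball_mem_nhds y hr))
  have hle' : TendstoLocallyUniformlyOn (fun i w => e i w - w) (fun w => y - w) 𝒰 (ball y r) := by
    apply tlu_of_tendsto (by fun_prop)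
    intro x hx
    exact (tendsto_of_tlu continuousOn_const hle hx).sub
      ((tendsto_nhdsWithin_of_tendsto_nhds tendsto_id).comp tendsto_snd)
  have hnc : ¬ ∀ᶠ w in 𝓝 y, y - w = y - y := by
    intro h
    have : ({y} : Set ℂ) ∈ 𝓝 y := by
      filter_upwards [h] with w hw
      rw [sub_self] at hw
      exact (sub_eq_zero.1 hw).symm
    exact (NormedField.nhdsNE_neBot y).ne (by
      rw [nhdsWithin, inf_principal_eq_bot]; simpa using this)
  obtain ⟨δ, hδ, hev⟩ := hurwitz isOpen_ball (fun i => (he i).1.sub differentiableOn_id) hle' hyb hnc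
    (lt_min hs hε)
  obtain ⟨i, hi, hiA⟩ := (hev.and hA).exists
  have h0 : (0 : ℂ) ∈ ball (y - y) δ := by rw [sub_self]; exact mem_ball_self hδ
  obtain ⟨a, ha, ha0⟩ := hi h0
  have hea : e i a = a := sub_eq_zero.1 ha0
  have ha1 : a ∈ ball y s := ball_subset_ball (min_le_left _ _) ha
  have ha2 : a ∈ ball y ε := ball_subset_ball (min_le_right _ _) ha
  have har : a ∈ ball y r := (hsB ha1).2
  have hda := hAB hiA (hsB ha1).1
  refine ⟨a, ?_, by rw [dist_comm]; exact ha2⟩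
  have hmem := (he i).2 a har
  rw [hea, mem_pre] at hmem
  have hper : g^[n i] a = a := hmem.2
  refine ⟨n i, hn1 i, ?_, hper, ?_⟩
  · intro j
    have h3 : g^[j] a = g^[j % n i] a := by
      have h4 : IsPeriodicPt g (n i) a := hper
      exact (h4.iterate_mod_apply j).symm
    rw [h3]
    exact hmem.1 _ (Nat.mod_lt _ (hn1 i))
  · have hmul := (he i).deriv_mul H isOpen_ball har
    rw [hea] at hmul
    have h5 := congrArg norm hmul
    rw [norm_mul, norm_one] at h5
    have h6 : ‖deriv (e i) a‖ < 1 := hda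
    by_contra h7
    push Not at h7
    have h8 : 0 ≤ ‖deriv (e i) a‖ := norm_nonneg _
    nlinarith [norm_nonneg (deriv g^[n i] a)]

lemma LIM (H : PLSetting g U' U d) {Γ Y : Set ℂ} (hΓ : IsCompact Γ) (hY : IsCompact Y)
    (hΓO : Γ ⊆ OO g U' U) (hYO : Y ⊆ OO g U' U) (hYR : ∀ y ∈ Y, y ∉ closure (repellingPts g U')) :
    ∃ n0, ∀ n ≥ n0, ∀ x ∈ Y, x ∉ pre g U' n Γ := by
  by_contra hcon
  push Not at hcon
  choose n hn x hxY hx using hcon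
  have hzΓ : ∀ i, g^[n i] (x i) ∈ Γ := fun i => pre_map (hx i)
  obtain ⟨⟨y, z⟩, ⟨hy, hz⟩, φ, hφ, hlim⟩ := (hY.prod hΓ).tendsto_subseq
    (x := fun i => (x i, g^[n i] (x i))) (fun i => ⟨hxY i, hzΓ i⟩)
  obtain ⟨r, hr, hb⟩ := Metric.isOpen_iff.1 (OO_open H) z (hΓO hz)
  rw [nhds_prod_eq, tendsto_prod_iff'] at hlim
  obtain ⟨hl1, hl2⟩ := hlim
  have hev := (hl2.eventually (ball_mem_nhds z hr)).and (eventually_ge_atTop 1)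
  obtain ⟨N, hN⟩ := eventually_atTop.1 hev
  let ψ : ℕ → ℕ := fun i => φ (i + N)
  have hψ : Tendsto ψ atTop atTop := hφ.tendsto_atTop.comp (tendsto_add_atTop_nat N)
  have hψ1 : ∀ i, 1 ≤ n (ψ i) := fun i =>
    ((hN (i+N) (by omega)).2.trans (hφ.id_le (i+N))).trans (hn _)
  have hx1 : ∀ i, x (ψ i) ∈ pre g U' (n (ψ i)) {g^[n (ψ i)] (x (ψ i))} := fun i =>
    mem_pre.2 ⟨(mem_pre.1 (hx _)).1, rfl⟩
  choose h hbr hh using fun i => exists_br H isOpen_ball (ball_sc z hr) hb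
    (hN (i+N) (by omega)).1 (hx1 i)
  let 𝒰 : Ultrafilter ℕ := Filter.hyperfilter ℕ
  have h𝒰 : (𝒰 : Filter ℕ) ≤ atTop := Nat.hyperfilter_le_atTop
  have hn' : Tendsto (fun i => n (ψ i)) 𝒰 atTop :=
    ((tendsto_atTop_mono hn tendsto_id).comp hψ).mono_left h𝒰
  have hC := claimC H 𝒰 hn' hψ1 hb hbr (zi := fun i => g^[n (ψ i)] (x (ψ i))) (z := z) (y := y)
    (mem_ball_self hr) ((hl2.comp (tendsto_add_atTop_nat N)).mono_left h𝒰) (by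
      have h1 : (fun i => h i (g^[n (ψ i)] (x (ψ i)))) = fun i => x (ψ i) := funext hh
      rw [h1]
      exact (hl1.comp (tendsto_add_atTop_nat N)).mono_left h𝒰)
  exact hYR y hy (claimR H 𝒰 hψ1 hr hb hbr hC (hYO hy))

lemma postCrit_nonempty (H : PLSetting g U' U d) : (postCrit g U').Nonempty := by
  by_contra hne
  rw [not_nonempty_iff_eq_empty] at hne
  have hX : XX g U' = ∅ := by rw [XX, hne, hull_empty]
  have hO : OO g U' U = U := by rw [OO, hX]; simp
  obtain ⟨w, hw⟩ := H.disk.2.1.nonempty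
  have h1 : (U' ∩ g ⁻¹' {w}).ncard = d := H.deg.2 w hw fun h => by
    have := critVal_XX h; rw [hX] at this; exact this
  obtain ⟨x0, x1, h0, h1, hne01⟩ : ∃ x0 x1, x0 ∈ U' ∩ g ⁻¹' {w} ∧ x1 ∈ U' ∩ g ⁻¹' {w} ∧ x0 ≠ x1 := by
    have h2 : 1 < (U' ∩ g ⁻¹' {w}).ncard := by rw [h1]; have := H.two_le_d; omega
    obtain ⟨a, b, ha, hb, hab⟩ := (one_lt_ncard_iff (finite_of_ncard_pos (by omega))).1 h2
    exact ⟨a, b, ha, hb, hab⟩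
  obtain ⟨σ, hσ, hσ0, hσp⟩ := cover_lift H H.disk.1 H.disk.2.2 (f := id) differentiableOn_id
    (fun z hz => by rw [hO]; exact hz) hw h0.1 h0.2
  have hgx0 : g x0 = w := h0.2
  have hgx1 : g x1 = w := h1.2
  have heq : EqOn (σ ∘ g) id U' := by
    refine AnalyticOnNhd.eqOn_of_preconnected_of_eventuallyEq
      ((hσ.comp H.holo H.mapsTo).analyticOnNhd H.disk'.1)
      (differentiableOn_id.analyticOnNhd H.disk'.1) H.disk'.2.1.2 h0.1 ?_
    have hd : deriv g x0 ≠ 0 := deriv_ne H h0.1 (by rw [hX]; exact fun h => h)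
    have hst : HasStrictDerivAt g (deriv g x0) x0 :=
      (H.holo.analyticAt (H.disk'.1.mem_nhds h0.1)).hasStrictDerivAt
    have hinv := hst.eventually_left_inverse hd
    have ht : Tendsto (σ ∘ g) (𝓝 x0) (𝓝 x0) := by
      have hc := (hσ.comp H.holo H.mapsTo).continuousOn.continuousAt (H.disk'.1.mem_nhds h0.1)
      have : (σ ∘ g) x0 = x0 := by rw [comp_apply, hgx0, hσ0]
      have h3 : Tendsto (σ ∘ g) (𝓝 x0) (𝓝 ((σ ∘ g) x0)) := hc
      rwa [this] at h3
    filter_upwards [hinv, ht.eventually hinv, H.disk'.1.mem_nhds h0.1] with t ht1 ht2 htU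
    rw [comp_apply, (hσp (g t) (H.mapsTo htU)).2] at ht2
    rw [comp_apply, ← ht2]; exact ht1
  have e0 := heq h0.1
  have e1 := heq h1.1
  simp only [comp_apply, id] at e0 e1
  rw [hgx0] at e0; rw [hgx1] at e1
  exact hne01 (e0.symm.trans e1)

end dyn


def ex (p w : ℂ) : ℂ := p + Complex.exp w

lemma ex_diff (p : ℂ) : Differentiable ℂ (ex p) := by unfold ex; fun_prop

lemma ex_ne (p w : ℂ) : ex p w ≠ p := by
  unfold ex
  intro h
  exact Complex.exp_ne_zero w (by linear_combination h)

lemma ex_log {p y : ℂ} (hy : y ≠ p) : ex p (Complex.log (y - p)) = y := by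
  unfold ex
  rw [Complex.exp_log (sub_ne_zero.2 hy)]; ring

lemma branch {p y w0 : ℂ} (hy : y ≠ p) (hw : ex p w0 ∈ ball y ‖y - p‖) :
    ∃ l : ℂ → ℂ, DifferentiableOn ℂ l (ball y ‖y - p‖) ∧ l (ex p w0) = w0 ∧
      ∀ z ∈ ball y ‖y - p‖, ex p (l z) = z := by
  have hyp : y - p ≠ 0 := sub_ne_zero.2 hy
  have hn : 0 < ‖y - p‖ := norm_pos_iff.2 hyp
  have hsl : ∀ z ∈ ball y ‖y - p‖, (z - p) / (y - p) ∈ Complex.slitPlane := by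
    intro z hz
    have : (z - p) / (y - p) = 1 + (z - y) / (y - p) := by field_simp; ring
    rw [this]
    apply Complex.mem_slitPlane_of_norm_lt_one
    rw [norm_div, div_lt_one hn]
    simpa [dist_eq_norm] using hz
  refine ⟨fun z => Complex.log ((z - p) / (y - p)) +
    (w0 - Complex.log ((ex p w0 - p) / (y - p))), ?_, by simp, ?_⟩
  · intro z hz
    apply DifferentiableAt.differentiableWithinAt
    apply DifferentiableAt.add _ (differentiableAt_const _)
    exact DifferentiableAt.clog (by fun_prop) (hsl z hz)
  · intro z hz
    have h1 := Complex.slitPlane_ne_zero (hsl z hz)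
    have h2 := Complex.slitPlane_ne_zero (hsl _ hw)
    unfold ex
    rw [Complex.exp_add, Complex.exp_sub, Complex.exp_log h1]
    change p + (z - p) / (y - p) * (Complex.exp w0 / Complex.exp (Complex.log ((ex p w0 - p) / (y - p)))) = z
    rw [Complex.exp_log h2]
    have h3 : ex p w0 - p = Complex.exp w0 := by unfold ex; ring
    rw [h3]
    have := Complex.exp_ne_zero w0
    field_simp
    ring

lemma exp_precon {G : Set ℂ} {p : ℂ} (hG : IsOpen G) (hc : IsPreconnected G) (hp : p ∉ G)
    {r : ℝ} (hr0 : 0 < r) (hr : sphere p r ⊆ G) : IsPreconnected (ex p ⁻¹' G) := by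
  set T := ex p ⁻¹' G with hT
  have hTo : IsOpen T := hG.preimage (ex_diff p).continuous
  set L : Set ℂ := {w | w.re = Real.log r} with hL
  have hLT : L ⊆ T := by
    intro w hw
    apply hr
    rw [mem_sphere, dist_eq_norm]
    have : ex p w - p = Complex.exp w := by unfold ex; ring
    rw [this, Complex.norm_exp]
    change w.re = _ at hw
    rw [hw, Real.exp_log hr0]
  have hLc : IsPreconnected L := by
    have : L = Complex.reCLM ⁻¹' {Real.log r} := rfl
    rw [this]
    exact ((convex_singleton (𝕜 := ℝ) _).linear_preimage Complex.reCLM.toLinearMap).isPreconnected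
  set a : ℂ := ((Real.log r : ℝ) : ℂ) with ha
  have haL : a ∈ L := by simp [hL, ha]
  set T0 := connectedComponentIn T a with hT0
  have hLT0 : L ⊆ T0 := hLc.subset_connectedComponentIn haL hLT
  have hT0T : T0 ⊆ T := connectedComponentIn_subset _ _
  have hT0c : IsPreconnected T0 := isPreconnected_connectedComponentIn
  have hmax : ∀ Q : Set ℂ, IsPreconnected Q → Q ⊆ T → (Q ∩ T0).Nonempty → Q ⊆ T0 := by
    rintro Q hQ hQT ⟨x, hxQ, hx0⟩
    rw [hT0, connectedComponentIn_eq hx0]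
    exact hQ.subset_connectedComponentIn hxQ hQT
  have himg : G ⊆ ex p '' T0 := by
    apply precon_subset hc
    · intro y hy hfr
      have hyp : y ≠ p := fun h => hp (h ▸ hy)
      obtain ⟨ε, hε, hεG⟩ := Metric.isOpen_iff.1 hG y hy
      set δ := min ε ‖y - p‖ with hδ
      have hδ0 : 0 < δ := lt_min hε (norm_pos_iff.2 (sub_ne_zero.2 hyp))
      have key : ∀ w ∈ T0, ex p w ∈ ball y δ → ball y δ ⊆ ex p '' T0 := by
        intro w hw hwb
        obtain ⟨l, hl, hl0, hl1⟩ := branch hyp (ball_subset_ball (min_le_right _ _) hwb)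
        have hsub : l '' ball y δ ⊆ T0 := by
          apply hmax
          · exact (convex_ball y δ).isPreconnected.image _
              (hl.continuousOn.mono (ball_subset_ball (min_le_right _ _)))
          · rintro _ ⟨z, hz, rfl⟩
            change ex p (l z) ∈ G
            rw [hl1 z (ball_subset_ball (min_le_right _ _) hz)]
            exact hεG (ball_subset_ball (min_le_left _ _) hz)
          · exact ⟨w, ⟨_, hwb, hl0⟩, hw⟩
        intro z hz
        exact ⟨l z, hsub ⟨z, hz, rfl⟩, hl1 z (ball_subset_ball (min_le_right _ _) hz)⟩
      obtain ⟨_, hb, ⟨w, hw, rfl⟩⟩ := mem_closure_iff_nhds.1 hfr.1 _ (ball_mem_nhds y hδ0)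
      exact hfr.2 (mem_interior.2 ⟨_, key w hw hb, isOpen_ball, mem_ball_self hδ0⟩)
    · exact ⟨_, hLT haL, a, hLT0 haL, rfl⟩
  have hTT : T = T0 := by
    apply Subset.antisymm _ hT0T
    intro w hw
    obtain ⟨t, ht, hte⟩ := himg hw
    have : Complex.exp w = Complex.exp t := by unfold ex at hte; linear_combination -hte
    obtain ⟨n, hn⟩ := Complex.exp_eq_exp_iff_exists_int.1 this
    have hsub : (fun z => z + n * (2 * Real.pi * Complex.I)) '' T0 ⊆ T0 := by
      apply hmax
      · exact hT0c.image _ (by fun_prop)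
      · rintro _ ⟨z, hz, rfl⟩
        have : ex p (z + n * (2 * Real.pi * Complex.I)) = ex p z := by
          unfold ex
          rw [Complex.exp_eq_exp_iff_exists_int.2 ⟨n, rfl⟩]
        change ex p _ ∈ G
        rw [this]; exact hT0T hz
      · refine ⟨_, ⟨a, hLT0 haL, rfl⟩, hLT0 ?_⟩
        simp [hL, ha]
    rw [hn]
    exact hsub ⟨t, ht, rfl⟩
  rw [hTT]; exact hT0c

/-- preimage under exp of `N \ K` is preconnected -/
lemma ex_inter_precon {K N : Set ℂ} {p : ℂ} (hK : IsCompact K) (hKh : hull K = K) (hp : p ∈ K)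
    (hN : IsOpen N) (hNc : IsPreconnected N) (hKN : K ⊆ N) :
    IsPreconnected (ex p ⁻¹' (N ∩ Kᶜ)) := by
  rw [preimage_inter]
  apply unicoherent_open (hN.preimage (ex_diff p).continuous)
    (hK.isClosed.isOpen_compl.preimage (ex_diff p).continuous)
  · have hs : ex p ⁻¹' N = ex p ⁻¹' (N ∩ {p}ᶜ) := by
      ext w; simp [ex_ne]
    rw [hs]
    obtain ⟨r, hr, hrN⟩ := Metric.nhds_basis_closedBall.mem_iff.1 (hN.mem_nhds (hKN hp))
    refine exp_precon (hN.inter isOpen_compl_singleton) ?_ (by simp) hr ?_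
    · apply unicoherent_open hN isOpen_compl_singleton hNc
      · exact (isConnected_compl_singleton_of_one_lt_rank (by
          rw [Complex.rank_real_complex]; norm_num) p).2
      · rw [← compl_subset_iff_union]
        exact compl_subset_compl.2 (singleton_subset_iff.2 (hKN hp))
    · intro z hz
      refine ⟨hrN (sphere_subset_closedBall hz), ?_⟩
      rintro rfl
      simp at hz
      exact hr.ne hz
  · obtain ⟨r, hr⟩ := hK.isBounded.subset_closedBall p
    refine exp_precon (r := max r 0 + 1) hK.isClosed.isOpen_compl ?_ (by simpa using hp)
      (by positivity) ?_
    · have := (isConnected_compl_hull hK).2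
      rwa [hKh] at this
    · intro z hz hzK
      have := hr hzK
      rw [mem_closedBall] at this
      rw [mem_sphere] at hz
      have := le_max_left r 0
      linarith
  · rw [← compl_subset_iff_union]
    intro w hw hwK
    exact hw (hKN hwK)

lemma ex_full {K U : Set ℂ} {p : ℂ} (hK : IsCompact K) (hKc : IsPreconnected K) (hp : p ∈ K)
    (hU : Full U) : Full (ex p ⁻¹' (U ∩ Kᶜ)) := by
  intro L hL hLc w hw
  refine ⟨?_, fun hwK => ?_⟩
  · have h1 := image_hull_subset isOpen_univ (ex_diff p).differentiableOn hLc (subset_univ _)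
      (mem_image_of_mem (ex p) hw)
    refine hU _ ?_ (hLc.image (ex_diff p).continuous) h1
    rintro _ ⟨z, hz, rfl⟩
    exact (hL hz).1
  · set B := connectedComponentIn Lᶜ w with hB
    have hBo : IsOpen B := hLc.isClosed.isOpen_compl.connectedComponentIn
    have hBb : Bornology.IsBounded B := hw
    have hwL : w ∉ L := fun h => (hL h).2 hwK
    have hwB : w ∈ B := mem_connectedComponentIn hwL
    have hBf : frontier B ⊆ L := cc_frontier hLc.isClosed w
    have hcl : closure (ex p '' B) ⊆ ex p '' closure B :=
      closure_minimal (image_mono subset_closure)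
        ((hBb.isCompact_closure.image (ex_diff p).continuous).isClosed)
    have hopen : IsOpen (ex p '' B) := by
      refine isOpen_iff_mem_nhds.2 ?_
      rintro _ ⟨z, hz, rfl⟩
      have hd : HasStrictDerivAt (ex p) (Complex.exp z) z := by
        unfold ex
        exact (Complex.hasStrictDerivAt_exp z).const_add p
      rw [← hd.map_nhds_eq (Complex.exp_ne_zero z)]
      exact image_mem_map (hBo.mem_nhds hz)
    have hsub : K ⊆ ex p '' B := by
      apply precon_subset hKc
      · intro x hx hfr
        rw [hopen.frontier_eq] at hfr
        obtain ⟨z, hz, rfl⟩ := hcl hfr.1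
        have hzB : z ∉ B := fun h => hfr.2 ⟨z, h, rfl⟩
        have : z ∈ frontier B := by rw [hBo.frontier_eq]; exact ⟨hz, hzB⟩
        exact (hL (hBf this)).2 hx
      · exact ⟨_, hwK, w, hwB, rfl⟩
    obtain ⟨z, -, hz⟩ := hsub hp
    exact ex_ne p z hz

lemma open_ne_compact {N K : Set ℂ} (hN : IsOpen N) (hK : IsCompact K) (hne : N.Nonempty)
    (hKN : K ⊆ N) : ∃ z ∈ N, z ∉ K := by
  by_contra h
  push Not at h
  have he : N = K := Subset.antisymm h hKN
  have hcl : IsClopen K := ⟨hK.isClosed, he ▸ hN⟩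
  exact hK.ne_univ (hcl.eq_univ (he ▸ hne))

section dyn
variable {g : ℂ → ℂ} {U' U : Set ℂ} {d : ℕ}

lemma GG_hull_eq (H : PLSetting g U' U d) {K : Set ℂ} (hK : IsCompact K) (hKU : K ⊆ U)
    (hKh : hull K = K) : hull (GG g U' K) = GG g U' K := by
  apply Subset.antisymm _ (subset_hull _)
  have hc := GG_compact H hK hKU
  have hU : hull (GG g U' K) ⊆ U' := fullU' H _ inter_subset_left hc
  intro x hx
  refine ⟨hU hx, ?_⟩
  have := image_hull_subset H.disk'.1 H.holo hc hU (mem_image_of_mem g hx)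
  rw [mem_preimage, ← hKh]
  refine hull_mono ?_ this
  rintro _ ⟨z, hz, rfl⟩
  exact hz.2

lemma GG_diff_precon (H : PLSetting g U' U d) {K N : Set ℂ} (hK : IsCompact K)
    (hKc : IsConnected K) (hKh : hull K = K) (hX : XX g U' ⊆ K) (hN : IsOpen N)
    (hNc : IsPreconnected N) (hKN : K ⊆ N) (hNU : N ⊆ U) :
    IsPreconnected (GG g U' (N ∩ Kᶜ)) := by
  obtain ⟨p, hp⟩ := hKc.nonempty
  have hKU := hKN.trans hNU
  set S := ex p ⁻¹' (U ∩ Kᶜ) with hS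
  have hSo : IsOpen S := (H.disk.1.inter hK.isClosed.isOpen_compl).preimage (ex_diff p).continuous
  have hSp : IsPreconnected S := ex_inter_precon hK hKh hp H.disk.1 H.disk.2.1.2 hKU
  have hSf : Full S := ex_full hK hKc.2 hp (fullU H)
  have hGK := GG_compact H hK hKU
  obtain ⟨x0, hx0, hx0K⟩ := open_ne_compact H.disk'.1 hGK H.disk'.2.1.nonempty inter_subset_left
  have hgx0K : g x0 ∉ K := fun h => hx0K ⟨hx0, h⟩
  have hgx0p : g x0 ≠ p := fun h => hgx0K (h ▸ hp)
  set s0 := Complex.log (g x0 - p) with hs0d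
  have hexs0 : ex p s0 = g x0 := ex_log hgx0p
  have hs0 : s0 ∈ S := by
    change ex p s0 ∈ U ∩ Kᶜ
    rw [hexs0]; exact ⟨H.mapsTo hx0, hgx0K⟩
  have hsc : SimplyConnectedSpace S := fullSC hSo ⟨⟨s0, hs0⟩, hSp⟩ hSf
  obtain ⟨σ, hσ, hσ0, hσ1⟩ := cover_lift H hSo hsc (ex_diff p).differentiableOn
    (fun s hs => ⟨hs.1, fun h => hs.2 (hX h)⟩) hs0 hx0 hexs0.symm
  set A := U' ∩ (GG g U' K)ᶜ with hA
  have hAo : IsOpen A := H.disk'.1.inter hGK.isClosed.isOpen_compl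
  have hAp : IsPreconnected A := by
    apply unicoherent_open H.disk'.1 hGK.isClosed.isOpen_compl H.disk'.2.1.2
    · have := (isConnected_compl_hull hGK).2
      rwa [GG_hull_eq H hK hKU hKh] at this
    · rw [← compl_subset_iff_union]
      exact compl_subset_compl.2 inter_subset_left
  have hAg : ∀ x ∈ A, g x ∈ U ∩ Kᶜ := fun x hx => ⟨H.mapsTo hx.1, fun h => hx.2 ⟨hx.1, h⟩⟩
  have hσA : ∀ s ∈ S, σ s ∈ A := by
    intro s hs
    refine ⟨(hσ1 s hs).1, fun h => hs.2 ?_⟩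
    have := h.2
    rwa [mem_preimage, (hσ1 s hs).2] at this
  have honto : A ⊆ σ '' S := by
    apply precon_subset hAp
    · intro y hy hfr
      have hgy := hAg y hy
      have hyp : g y ≠ p := fun h => hgy.2 (h ▸ hp)
      have hgc : ContinuousAt g y := (H.holo.continuousOn).continuousAt (H.disk'.1.mem_nhds hy.1)
      have hnh : A ∩ g ⁻¹' (ball (g y) ‖g y - p‖) ∈ 𝓝 y := inter_mem (hAo.mem_nhds hy)
        (hgc (ball_mem_nhds _ (norm_pos_iff.2 (sub_ne_zero.2 hyp))))
      obtain ⟨δ, hδ, hδs⟩ := Metric.mem_nhds_iff.1 hnh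
      have key : ∀ s ∈ S, σ s ∈ ball y δ → ball y δ ⊆ σ '' S := by
        intro s hs hsb
        have hgs := (hσ1 s hs).2
        have hwb : ex p s ∈ ball (g y) ‖g y - p‖ := by
          rw [← hgs]; exact (hδs hsb).2
        obtain ⟨l, hl, hl0, hl1⟩ := branch hyp hwb
        have hlS : ∀ z ∈ ball y δ, l (g z) ∈ S := by
          intro z hz
          change ex p _ ∈ U ∩ Kᶜ
          rw [hl1 _ (hδs hz).2]
          exact hAg z (hδs hz).1
        have hBU : ball y δ ⊆ U' := fun z hz => (hδs hz).1.1
        have hF : DifferentiableOn ℂ (fun z => σ (l (g z))) (ball y δ) :=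
          hσ.comp (hl.comp (H.holo.mono hBU) fun z hz => (hδs hz).2) hlS
        have hFg : ∀ z ∈ ball y δ, g (σ (l (g z))) = g z := by
          intro z hz
          rw [(hσ1 _ (hlS z hz)).2, hl1 _ (hδs hz).2]
        have hFb : σ (l (g (σ s))) = σ s := by rw [hgs, hl0]
        have hev : (fun z => σ (l (g z))) =ᶠ[𝓝 (σ s)] id := by
          have hd : deriv g (σ s) ≠ 0 := deriv_ne H (hσ1 s hs).1 (by
            rw [hgs]; exact fun h => hs.2 (hX h))
          have hst : HasStrictDerivAt g (deriv g (σ s)) (σ s) :=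
            (H.holo.analyticAt (H.disk'.1.mem_nhds (hσ1 s hs).1)).hasStrictDerivAt
          obtain ⟨O, hO, hOi⟩ : ∃ O ∈ 𝓝 (σ s), InjOn g O := by
            let e := (hst.hasStrictFDerivAt_equiv hd).toOpenPartialHomeomorph g
            refine ⟨e.source, e.open_source.mem_nhds
              (hst.hasStrictFDerivAt_equiv hd).mem_toOpenPartialHomeomorph_source, ?_⟩
            exact e.injOn
          have hFc : ContinuousAt (fun z => σ (l (g z))) (σ s) :=
            hF.continuousOn.continuousAt (isOpen_ball.mem_nhds hsb)
          have h2 : ∀ᶠ z in 𝓝 (σ s), σ (l (g z)) ∈ O := hFc (by beta_reduce; rw [hFb]; exact hO)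
          filter_upwards [hO, h2, isOpen_ball.mem_nhds hsb] with z hz1 hz2 hz3
          exact hOi hz2 hz1 (hFg z hz3)
        have heq : EqOn (fun z => σ (l (g z))) id (ball y δ) :=
          (hF.analyticOnNhd isOpen_ball).eqOn_of_preconnected_of_eventuallyEq
            (differentiableOn_id.analyticOnNhd isOpen_ball) (convex_ball y δ).isPreconnected hsb hev
        intro z hz
        exact ⟨_, hlS z hz, heq hz⟩
      obtain ⟨_, hb, ⟨w, hw, rfl⟩⟩ := mem_closure_iff_nhds.1 hfr.1 _ (ball_mem_nhds y hδ)
      exact hfr.2 (mem_interior.2 ⟨_, key w hw hb, isOpen_ball, mem_ball_self hδ⟩)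
    · exact ⟨x0, ⟨hx0, hx0K⟩, s0, hs0, hσ0⟩
  have heq : GG g U' (N ∩ Kᶜ) = σ '' (ex p ⁻¹' (N ∩ Kᶜ)) := by
    ext x
    constructor
    · rintro ⟨hx, hxN, hxK⟩
      obtain ⟨s, hs, rfl⟩ := honto ⟨hx, fun h => hxK h.2⟩
      refine ⟨s, ?_, rfl⟩
      change ex p s ∈ N ∩ Kᶜ
      rw [← (hσ1 s hs).2]
      exact ⟨hxN, hxK⟩
    · rintro ⟨s, hs, rfl⟩
      have hsS : s ∈ S := ⟨hNU hs.1, hs.2⟩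
      refine ⟨(hσ1 s hsS).1, ?_⟩
      rw [mem_preimage, (hσ1 s hsS).2]; exact hs
  rw [heq]
  exact (ex_inter_precon hK hKh hp hN hNc hKN).image _
    (hσ.continuousOn.mono fun s hs => ⟨hNU hs.1, hs.2⟩)

lemma GG_piece (H : PLSetting g U' U d) {N u v : Set ℂ} (hN : IsOpen N) (hNc : IsPreconnected N)
    (hNU : N ⊆ U) (hu : IsOpen u) (hv : IsOpen v) (huv : GG g U' N ⊆ u ∪ v)
    (hd : ¬ (GG g U' N ∩ (u ∩ v)).Nonempty) (hne : (GG g U' N ∩ u).Nonempty) :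
    N ⊆ g '' (GG g U' N ∩ u) := by
  have ho : IsOpen (g '' (GG g U' N ∩ u)) :=
    g_openMap H (inter_subset_left.trans inter_subset_left) ((GG_isOpen H hN).inter hu)
  apply precon_subset hNc
  · intro y hy hfr
    rw [ho.frontier_eq] at hfr
    apply hfr.2
    obtain ⟨r, hr, hrN⟩ := Metric.nhds_basis_closedBall.mem_iff.1 (hN.mem_nhds hy)
    set D := closedBall y r with hD
    have hQ : IsCompact (GG g U' D) := GG_compact H (isCompact_closedBall y r) (hrN.trans hNU)
    have hQ2 : IsCompact (GG g U' D ∩ vᶜ) := hQ.inter_right hv.isClosed_compl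
    have him : IsCompact (g '' (GG g U' D ∩ vᶜ)) :=
      hQ2.image_of_continuousOn (H.holo.continuousOn.mono
        (inter_subset_left.trans inter_subset_left))
    have hy2 : y ∈ closure (g '' (GG g U' D ∩ vᶜ)) := by
      rw [mem_closure_iff_nhds]
      intro t ht
      obtain ⟨_, ⟨h1, h2⟩, x, hx, rfl⟩ := mem_closure_iff_nhds.1 hfr.1 _
        (inter_mem ht (closedBall_mem_nhds y hr))
      exact ⟨g x, h1, x, ⟨⟨hx.1.1, h2⟩, fun hxv => hd ⟨x, hx.1, hx.2, hxv⟩⟩, rfl⟩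
    rw [him.isClosed.closure_eq] at hy2
    obtain ⟨x, ⟨hx1, hx2⟩, rfl⟩ := hy2
    have hxN : x ∈ GG g U' N := ⟨hx1.1, hrN hx1.2⟩
    exact ⟨x, ⟨hxN, (huv hxN).resolve_right hx2⟩, rfl⟩
  · obtain ⟨x, hx⟩ := hne
    exact ⟨g x, hx.1.2, x, hx, rfl⟩

/-- CONN: preimages of full domains containing the postcritical set are connected. -/
lemma GG_conn (H : PLSetting g U' U d) {N : Set ℂ} (hN : IsOpen N) (hNc : IsConnected N)
    (hNf : Full N) (hX : XX g U' ⊆ N) (hNU : N ⊆ U) : IsConnected (GG g U' N) := by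
  obtain ⟨x, hx⟩ := postCrit_nonempty H
  refine ⟨⟨x, XX_sub_GG H hX (subset_hull _ hx)⟩, ?_⟩
  obtain ⟨K1, hK1N, hK1, hK1c, hXK1⟩ := exists_compact_connected hN hNc (XX_compact H) hX
  have hKN : hull K1 ⊆ N := hNf K1 hK1N hK1
  have hK := isCompact_hull hK1
  have hp := GG_diff_precon H hK (isConnected_hull hK1 hK1c) (hull_hull hK1)
    (hXK1.trans (subset_hull _)) hN hNc.2 hKN hNU
  obtain ⟨z, hzN, hzK⟩ := open_ne_compact hN hK hNc.nonempty hKN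
  rintro u v hu hv huv hnu hnv
  by_contra hd
  obtain ⟨a, ⟨ha, hau⟩, haz⟩ := GG_piece H hN hNc.2 hNU hu hv huv hd hnu hzN
  obtain ⟨b, ⟨hb, hbv⟩, hbz⟩ := GG_piece H hN hNc.2 hNU hv hu (by rwa [union_comm])
    (by rwa [inter_comm v u]) hnv hzN
  have hsub : GG g U' (N ∩ (hull K1)ᶜ) ⊆ GG g U' N := GG_mono inter_subset_left
  obtain ⟨c, hc, hc2⟩ := hp u v hu hv (hsub.trans huv)
    ⟨a, ⟨ha.1, ha.2, by rw [haz]; exact hzK⟩, hau⟩ ⟨b, ⟨hb.1, hb.2, by rw [hbz]; exact hzK⟩, hbv⟩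
  exact hd ⟨c, hsub hc, hc2⟩

end dyn


def fill (N : Set ℂ) : Set ℂ := {z | ∃ K ⊆ N, IsCompact K ∧ z ∈ hull K}

lemma subset_fill (N : Set ℂ) : N ⊆ fill N := fun z hz =>
  ⟨{z}, singleton_subset_iff.2 hz, isCompact_singleton, subset_hull _ rfl⟩

lemma hull_subset_fill {N K : Set ℂ} (hK : IsCompact K) (hKN : K ⊆ N) : hull K ⊆ fill N :=
  fun z hz => ⟨K, hKN, hK, hz⟩

lemma fill_subset_hull {N C : Set ℂ} (h : N ⊆ C) : fill N ⊆ hull C := by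
  rintro z ⟨K, hKN, hK, hz⟩
  exact hull_mono (hKN.trans h) hz

lemma fill_mem_int {N : Set ℂ} (hN : IsOpen N) {x : ℂ} (hx : x ∈ fill N) :
    ∃ K ⊆ N, IsCompact K ∧ x ∈ interior (hull K) := by
  obtain ⟨K, hKN, hK, hz⟩ := hx
  by_cases hxK : x ∈ K
  · obtain ⟨r, hr, hrN⟩ := Metric.nhds_basis_closedBall.mem_iff.1 (hN.mem_nhds (hKN hxK))
    refine ⟨closedBall x r, hrN, isCompact_closedBall x r, interior_mono (subset_hull _) ?_⟩
    exact mem_interior_iff_mem_nhds.2 (closedBall_mem_nhds x hr)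
  · exact ⟨K, hKN, hK, mem_interior.2 ⟨hull K \ K, sdiff_subset, isOpen_hull_diff hK, hz, hxK⟩⟩

lemma fill_open {N : Set ℂ} (hN : IsOpen N) : IsOpen (fill N) := by
  rw [isOpen_iff_mem_nhds]
  intro x hx
  obtain ⟨K, hKN, hK, hz⟩ := fill_mem_int hN hx
  exact mem_of_superset (mem_interior_iff_mem_nhds.1 hz) (hull_subset_fill hK hKN)

lemma fill_full {N : Set ℂ} (hN : IsOpen N) : Full (fill N) := by
  intro L hL hLc
  have key : ∃ K ⊆ N, IsCompact K ∧ L ⊆ hull K := by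
    refine hLc.induction_on (p := fun S => ∃ K ⊆ N, IsCompact K ∧ S ⊆ hull K) ?_ ?_ ?_ ?_
    · exact ⟨∅, empty_subset _, isCompact_empty, empty_subset _⟩
    · rintro s t hst ⟨K, h1, h2, h3⟩
      exact ⟨K, h1, h2, hst.trans h3⟩
    · rintro s t ⟨K, h1, h2, h3⟩ ⟨K', h1', h2', h3'⟩
      exact ⟨K ∪ K', union_subset h1 h1', h2.union h2', union_subset
        (h3.trans (hull_mono subset_union_left)) (h3'.trans (hull_mono subset_union_right))⟩
    · intro x hx
      obtain ⟨K, hKN, hK, hz⟩ := fill_mem_int hN (hL hx)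
      exact ⟨hull K, mem_nhdsWithin_of_mem_nhds (mem_interior_iff_mem_nhds.1 hz), K, hKN, hK,
        subset_rfl⟩
  obtain ⟨K, hKN, hK, hLK⟩ := key
  have := hull_mono hLK
  rw [hull_hull hK] at this
  exact this.trans (hull_subset_fill hK hKN)

lemma fill_conn {N : Set ℂ} (hN : IsOpen N) (hc : IsConnected N) : IsConnected (fill N) := by
  obtain ⟨x, hx⟩ := hc.nonempty
  refine ⟨⟨x, subset_fill N hx⟩, isPreconnected_of_forall x ?_⟩
  rintro y ⟨K, hKN, hK, hy⟩
  obtain ⟨L, hLN, hL, hLc, hKL⟩ := exists_compact_connected hN hc (hK.insert x)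
    (insert_subset hx hKN)
  exact ⟨hull L, hull_subset_fill hL hLN, subset_hull _ (hKL (mem_insert _ _)),
    hull_mono ((subset_insert _ _).trans hKL) hy, (isConnected_hull hL hLc).2⟩

lemma thick_conn {K : Set ℂ} (hK : IsConnected K) {δ : ℝ} (hδ : 0 < δ) :
    IsConnected (thickening δ K) := by
  obtain ⟨x, hx⟩ := hK.nonempty
  refine ⟨⟨x, self_subset_thickening hδ K hx⟩, isPreconnected_of_forall x ?_⟩
  intro y hy
  obtain ⟨z, hz, hyz⟩ := mem_thickening_iff.1 hy
  refine ⟨K ∪ ball z δ, union_subset (self_subset_thickening hδ K) (ball_subset_thickening hz δ),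
    Or.inl hx, Or.inr hyz, ?_⟩
  exact hK.2.union z hz (mem_ball_self hδ) (convex_ball z δ).isPreconnected

lemma clopen_sep {X : Type*} [TopologicalSpace X] [CompactSpace X] [T2Space X] {A B : Set X}
    (hA : IsClosed A) (hB : IsClosed B) (h : ∀ a ∈ A, ∀ b ∈ B, b ∉ connectedComponent a) :
    ∃ F : Set X, IsClopen F ∧ A ⊆ F ∧ ∀ b ∈ B, b ∉ F := by
  have hc : Continuous (ConnectedComponents.mk : X → ConnectedComponents X) :=
    ConnectedComponents.continuous_coe
  have hA' : IsClosed (ConnectedComponents.mk '' A) := (hA.isCompact.image hc).isClosed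
  have hB' : IsClosed (ConnectedComponents.mk '' B) := (hB.isCompact.image hc).isClosed
  have hsub : ConnectedComponents.mk '' A ⊆ (ConnectedComponents.mk '' B)ᶜ := by
    rintro _ ⟨a, ha, rfl⟩ ⟨b, hb, hab⟩
    exact h a ha b hb (ConnectedComponents.coe_eq_coe'.1 hab)
  obtain ⟨C, hC, h1, h2⟩ := exists_clopen_of_closed_subset_open hA' hB'.isOpen_compl hsub
  refine ⟨_, hC.preimage hc, fun a ha => h1 ⟨a, ha, rfl⟩, fun b hb hbC => h2 hbC ⟨b, hb, rfl⟩⟩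

section dyn
variable {g : ℂ → ℂ} {U' U : Set ℂ} {d : ℕ}

lemma pre_conn (H : PLSetting g U' U d) {N : Set ℂ} (hN : IsOpen N) (hNc : IsConnected N)
    (hNf : Full N) (hX : XX g U' ⊆ N) (hNU : N ⊆ U) (n : ℕ) :
    IsConnected (pre g U' n N) ∧ Full (pre g U' n N) := by
  induction n with
  | zero => exact ⟨hNc, hNf⟩
  | succ n ih =>
    rw [pre_succ']
    exact ⟨GG_conn H (pre_isOpen H hN n) ih.1 ih.2 (XX_sub_pre H hX n) (pre_subset H hNU n),
      F5 H ih.2⟩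

lemma pl_of_nest (H : PLSetting g U' U d) {Hh : Set ℂ} (hHc : IsCompact Hh) (hHn : IsConnected Hh)
    (hX : XX g U' ⊆ Hh) {ε : ℝ} (hε : 0 < ε) (hεU : cthickening ε Hh ⊆ U) {n : ℕ} (hn : 1 ≤ n)
    (hnest : pre g U' n (fill (thickening ε Hh)) ⊆ Hh) :
    ∃ V' V : Set ℂ, IsTopDisk V' ∧ IsTopDisk V ∧ V ⊆ U ∧ postCrit g U' ⊆ V' ∧
      V' = U' ∩ g ⁻¹' V ∧ closure V' ⊆ V := by
  set a : ℕ → ℝ := fun j => ε * ((j + 1 : ℝ) / (n + 1)) with ha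
  have ha0 : ∀ j, 0 < a j := fun j => by simp only [ha]; positivity
  have ham : ∀ j, a j < a (j + 1) := by
    intro j
    simp only [ha]
    push_cast
    gcongr
    linarith
  have han : a n = ε := by
    simp only [ha]
    rw [div_self (by positivity), mul_one]
  have hale : ∀ j, j ≤ n → a j ≤ ε := by
    intro j hj
    rw [← han]
    exact (strictMono_nat_of_lt_succ ham).monotone hj
  set Wj : ℕ → Set ℂ := fun j => fill (thickening (a j) Hh) with hWj
  set Cj : ℕ → Set ℂ := fun j => hull (cthickening (a j) Hh) with hCj
  have hct : ∀ j, IsCompact (cthickening (a j) Hh) := fun j => hHc.cthickening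
  have hCc : ∀ j, IsCompact (Cj j) := fun j => isCompact_hull (hct j)
  have hCU : ∀ j, j ≤ n → Cj j ⊆ U := fun j hj =>
    fullU H _ ((cthickening_mono (hale j hj) _).trans hεU) (hct j)
  have hWC : ∀ j, Wj j ⊆ Cj j := fun j => fill_subset_hull (thickening_subset_cthickening _ _)
  have hCW : ∀ j, Cj j ⊆ Wj (j + 1) := fun j =>
    hull_subset_fill (hct j) (cthickening_subset_thickening' (ha0 _) (ham j) _)
  have hHW : ∀ j, Hh ⊆ Wj j := fun j => (self_subset_thickening (ha0 j) _).trans (subset_fill _)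
  have hWo : ∀ j, IsOpen (Wj j) := fun j => fill_open isOpen_thickening
  have hWn : ∀ j, IsConnected (Wj j) := fun j =>
    fill_conn isOpen_thickening (thick_conn hHn (ha0 j))
  have hWf : ∀ j, Full (Wj j) := fun j => fill_full isOpen_thickening
  have hWU : ∀ j, j ≤ n → Wj j ⊆ U := fun j hj => (hWC j).trans (hCU j hj)
  set W : Set ℂ := ⋃ j ∈ Iio n, pre g U' j (Wj j) with hW
  set K0 : Set ℂ := ⋃ j ∈ Iio n, pre g U' j (Cj j) with hK0
  have hK0c : IsCompact K0 := (finite_Iio n).isCompact_biUnion fun j hj =>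
    pre_compact H (hCc j) (hCU j (le_of_lt hj)) j
  have hK0U : K0 ⊆ U := iUnion₂_subset fun j hj => pre_subset H (hCU j (le_of_lt hj)) j
  have hWK : W ⊆ K0 := iUnion₂_mono fun j hj => pre_mono (hWC j)
  have hWopen : IsOpen W := isOpen_biUnion fun j hj => pre_isOpen H (hWo j) j
  have hXW : ∀ j, XX g U' ⊆ pre g U' j (Wj j) := fun j => XX_sub_pre H (hX.trans (hHW j)) j
  obtain ⟨x, hx⟩ := postCrit_nonempty H
  have hxX : x ∈ XX g U' := subset_hull _ hx
  have hXsW : XX g U' ⊆ W := fun z hz => mem_iUnion₂.2 ⟨0, hn, hXW 0 hz⟩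
  have hWconn : IsConnected W := by
    refine ⟨⟨x, hXsW hxX⟩, isPreconnected_of_forall x ?_⟩
    intro y hy
    obtain ⟨j, hj, hyj⟩ := mem_iUnion₂.1 hy
    exact ⟨pre g U' j (Wj j), fun z hz => mem_iUnion₂.2 ⟨j, hj, hz⟩, hXW j hxX, hyj,
      (pre_conn H (hWo j) (hWn j) (hWf j) (hX.trans (hHW j)) (hWU j (le_of_lt hj)) j).1.2⟩
  have hGK : GG g U' K0 ⊆ W := by
    rintro z ⟨hz, hgz⟩
    obtain ⟨j, hj, hzj⟩ := mem_iUnion₂.1 hgz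
    have h1 : z ∈ pre g U' (j + 1) (Wj (j + 1)) := by
      rw [pre_succ']
      exact ⟨hz, pre_mono (hCW j) hzj⟩
    by_cases hjn : j + 1 < n
    · exact mem_iUnion₂.2 ⟨j + 1, hjn, h1⟩
    · have : j + 1 = n := by
        have : j < n := hj
        omega
      refine mem_iUnion₂.2 ⟨0, hn, hHW 0 (hnest ?_)⟩
      rw [this] at h1
      simp only [hWj] at h1
      rwa [han] at h1
  have hVU : fill W ⊆ hull K0 := fill_subset_hull hWK
  have hKU : hull K0 ⊆ U := fullU H _ hK0U hK0c
  have hGKc : IsCompact (GG g U' K0) := GG_compact H hK0c hK0U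
  have hVo := fill_open hWopen
  have hVc := fill_conn hWopen hWconn
  have hVf := fill_full hWopen
  have hXV : XX g U' ⊆ fill W := hXsW.trans (subset_fill W)
  have hV'c := GG_conn H hVo hVc hVf hXV (hVU.trans hKU)
  have hV'o := GG_isOpen H hVo
  refine ⟨GG g U' (fill W), fill W, ⟨hV'o, hV'c, fullSC hV'o hV'c (F5 H hVf)⟩,
    ⟨hVo, hVc, fullSC hVo hVc hVf⟩, hVU.trans hKU,
    (subset_hull _).trans (XX_sub_GG H hXV), rfl, ?_⟩
  have h1 : GG g U' (fill W) ⊆ hull (GG g U' K0) := (GG_mono hVU).trans (GG_hull H hK0c hK0U)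
  exact (closure_minimal h1 (isCompact_hull hGKc).isClosed).trans (hull_subset_fill hGKc hGK)

lemma pl_of_sep (H : PLSetting g U' U d) {Hh : Set ℂ} (hHc : IsCompact Hh) (hHn : IsConnected Hh)
    (hHh : hull Hh = Hh) (hHU : Hh ⊆ U) (hX : XX g U' ⊆ interior Hh) {q : ℂ} (hq : q ∉ U')
    (hqH : q ∈ Hh) (hfr : ∀ y ∈ frontier Hh, y ∉ closure (repellingPts g U')) :
    ∃ V' V : Set ℂ, IsTopDisk V' ∧ IsTopDisk V ∧ V ⊆ U ∧ postCrit g U' ⊆ V' ∧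
      V' = U' ∩ g ⁻¹' V ∧ closure V' ⊆ V := by
  obtain ⟨ε, hε, hεU⟩ := hHc.exists_cthickening_subset_open H.disk.1 hHU
  set Vb := fill (thickening ε Hh) with hVb
  have hct : IsCompact (cthickening ε Hh) := hHc.cthickening
  have hVbh : Vb ⊆ hull (cthickening ε Hh) := fill_subset_hull (thickening_subset_cthickening _ _)
  have hclV : closure Vb ⊆ hull (cthickening ε Hh) :=
    closure_minimal hVbh (isCompact_hull hct).isClosed
  have hhU : hull (cthickening ε Hh) ⊆ U := fullU H _ hεU hct
  have hVbc : IsCompact (closure Vb) := (isCompact_hull hct).of_isClosed_subset isClosed_closure hclV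
  have hVbo : IsOpen Vb := fill_open isOpen_thickening
  have hVbn : IsConnected Vb := fill_conn isOpen_thickening (thick_conn hHn hε)
  have hVbf : Full Vb := fill_full isOpen_thickening
  have hXH : XX g U' ⊆ Hh := hX.trans interior_subset
  have hXV : XX g U' ⊆ Vb := hXH.trans ((self_subset_thickening hε _).trans (subset_fill _))
  obtain ⟨n0, hn0⟩ := LIM H (Γ := frontier Vb) (Y := frontier Hh)
    (hVbc.of_isClosed_subset isClosed_frontier frontier_subset_closure)
    (hHc.of_isClosed_subset isClosed_frontier hHc.isClosed.frontier_subset)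
    (fun z hz => ⟨hhU (hclV hz.1), fun h => hz.2 (by rw [hVbo.interior_eq]; exact hXV h)⟩)
    (fun z hz => ⟨hHU (hHc.isClosed.frontier_subset hz), fun h => hz.2 (hX h)⟩) hfr
  have hd : ∀ x ∈ frontier Hh, x ∉ frontier (pre g U' (n0 + 1) Vb) := fun x hx hx2 =>
    hn0 (n0 + 1) (by omega) x hx (frontier_pre H hVbc (hclV.trans hhU) _ hx2)
  have hSc := (pre_conn H hVbo hVbn hVbf hXV (hVbh.trans hhU) (n0 + 1)).1
  refine pl_of_nest H hHc hHn hXH hε hεU (n := n0 + 1) (by omega) ?_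
  obtain ⟨x, hx⟩ := postCrit_nonempty H
  have hxX : x ∈ XX g U' := subset_hull _ hx
  apply precon_subset hSc.2 _ ⟨x, XX_sub_pre H hXV _ hxX, hXH hxX⟩
  intro y hy hyf
  have hfc : IsPreconnected (frontier Hh) := by
    have h1 : frontier Hh = Hh ∩ closure Hhᶜ := by
      rw [frontier_eq_closure_inter_closure, hHc.isClosed.closure_eq]
    rw [h1]
    apply unicoherent_closed hHc.isClosed isClosed_closure hHn.2
    · have := (isConnected_compl_hull hHc).2
      rw [hHh] at this
      exact this.closure
    · rw [← compl_subset_iff_union]; exact subset_closure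
  have h2 : frontier Hh ⊆ pre g U' (n0 + 1) Vb := precon_subset hfc hd ⟨y, hyf, hy⟩
  have h3 : frontier Hh ⊆ U' := by
    refine h2.trans ?_
    rw [pre_succ']; exact inter_subset_left
  have h4 : Hh ⊆ hull (frontier Hh) := subset_hull_of_frontier hHc.isBounded subset_rfl
  exact hq (fullU' H _ h3 (hHc.of_isClosed_subset isClosed_frontier hHc.isClosed.frontier_subset)
    (h4 hqH))

lemma main_aux (H : PLSetting g U' U d)
    (hcon : ¬ ∃ C : Set (OnePoint ℂ), C ⊆ sphereRepClosure g U' ∧ IsCompact C ∧ IsConnected C ∧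
      C.Nontrivial ∧ (C ∩ (fun z : ℂ => (z : OnePoint ℂ)) '' U).Nonempty ∧
      (C ∩ frontier ((fun z : ℂ => (z : OnePoint ℂ)) '' U)).Nonempty) :
    ∃ V' V : Set ℂ, IsTopDisk V' ∧ IsTopDisk V ∧ V ⊆ U ∧ postCrit g U' ⊆ V' ∧
      V' = U' ∩ g ⁻¹' V ∧ closure V' ⊆ V := by
  set ι : ℂ → OnePoint ℂ := fun z : ℂ => (z : OnePoint ℂ) with hι
  have hιe : IsOpenEmbedding ι := OnePoint.isOpenEmbedding_coe
  have hιU : IsOpen (ι '' U) := hιe.isOpenMap _ H.disk.1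
  set R := sphereRepClosure g U' with hR
  have hRc : IsClosed R := isClosed_closure
  obtain ⟨q, hqU, hq⟩ := exists_q H
  obtain ⟨E, hEU, hE, hEc, hXE⟩ := exists_compact_connected H.disk.1 H.disk.2.1
    ((XX_compact H).insert q) (insert_subset hqU ((XX_subset H).trans H.subset))
  have hqE : q ∈ E := hXE (mem_insert _ _)
  have hcs : CompactSpace R := isCompact_iff_compactSpace.1 hRc.isCompact
  have hιE : IsClosed (ι '' E) := (hE.image hιe.continuous).isClosed
  obtain ⟨F0, hF0, hEF0, hF0U⟩ := clopen_sep (X := R) (A := Subtype.val ⁻¹' (ι '' E))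
    (B := Subtype.val ⁻¹' (ι '' U)ᶜ) (hιE.preimage continuous_subtype_val)
    (hιU.isClosed_compl.preimage continuous_subtype_val) (by
      intro a ha b hb hab
      apply hcon
      set C : Set (OnePoint ℂ) := Subtype.val '' connectedComponent a with hC
      have hCc : IsConnected C := isConnected_connectedComponent.image _
        continuous_subtype_val.continuousOn
      have haU : (a : OnePoint ℂ) ∈ ι '' U := image_mono hEU ha
      have haC : (a : OnePoint ℂ) ∈ C := ⟨a, mem_connectedComponent, rfl⟩
      have hbC : (b : OnePoint ℂ) ∈ C := ⟨b, hab, rfl⟩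
      have hmeet : (C ∩ frontier (ι '' U)).Nonempty := by
        by_contra hno
        have : C ⊆ ι '' U := precon_subset hCc.2
          (fun x hx hxf => hno ⟨x, hx, hxf⟩) ⟨a, haC, haU⟩
        exact hb (this hbC)
      refine ⟨C, ?_, ?_, hCc, ?_, ⟨a, haC, haU⟩, hmeet⟩
      · rintro _ ⟨x, -, rfl⟩; exact x.2
      · exact isClosed_connectedComponent.isCompact.image continuous_subtype_val
      · exact ⟨a, haC, b, hbC, fun h => hb (by rw [← h]; exact haU)⟩)
  set F : Set (OnePoint ℂ) := Subtype.val '' F0 with hF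
  set G : Set (OnePoint ℂ) := Subtype.val '' F0ᶜ with hG
  have hFc : IsCompact F := hF0.isClosed.isCompact.image continuous_subtype_val
  have hGc : IsCompact G := hF0.compl.isClosed.isCompact.image continuous_subtype_val
  have hRFG : ∀ x ∈ R, x ∈ F ∨ x ∈ G := by
    intro x hx
    by_cases h : (⟨x, hx⟩ : R) ∈ F0
    · exact Or.inl ⟨_, h, rfl⟩
    · exact Or.inr ⟨_, h, rfl⟩
  have hFU : F ⊆ ι '' U := by
    rintro _ ⟨x, hx, rfl⟩
    by_contra h
    exact hF0U x h hx
  have hFG : ∀ x ∈ F, x ∉ G := by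
    rintro _ ⟨x, hx, rfl⟩ ⟨y, hy, hxy⟩
    rw [Subtype.ext hxy] at hy
    exact hy hx
  have hEG : ∀ x ∈ E, ι x ∉ G := by
    rintro x hx ⟨y, hy, hxy⟩
    exact hy (hEF0 ⟨x, hx, hxy.symm⟩)
  have hFpc : IsCompact (ι ⁻¹' F) := by
    rw [hιe.isInducing.isCompact_iff, image_preimage_eq_of_subset
      (hFU.trans (image_subset_range _ _))]
    exact hFc
  have hRep : ∀ x ∈ closure (repellingPts g U'), ι x ∈ R := by
    intro x hx
    have : closure (repellingPts g U') ⊆ ι ⁻¹' R := by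
      refine closure_minimal ?_ (hRc.preimage hιe.continuous)
      intro z hz
      exact subset_closure ⟨z, hz, rfl⟩
    exact this hx
  set Y := ι ⁻¹' F ∪ E with hY
  have hYc : IsCompact Y := hFpc.union hE
  set O := U ∩ (ι ⁻¹' G)ᶜ with hO
  have hOo : IsOpen O := H.disk.1.inter (hGc.isClosed.preimage hιe.continuous).isOpen_compl
  have hYO : Y ⊆ O := by
    rintro x (hx | hx)
    · refine ⟨?_, hFG _ hx⟩
      obtain ⟨u, hu, hux⟩ := hFU hx
      rwa [← hιe.injective hux]
    · exact ⟨hEU hx, hEG x hx⟩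
  obtain ⟨ε, hε, hεO⟩ := hYc.exists_cthickening_subset_open hOo hYO
  set M0 := thickening ε Y with hM0
  have hM0o : IsOpen M0 := isOpen_thickening
  have hEM0 : E ⊆ M0 := subset_union_right.trans (self_subset_thickening hε _)
  have hclM0 : closure M0 ⊆ cthickening ε Y := closure_thickening_subset_cthickening _ _
  have hfrM0 : ∀ x ∈ frontier M0, x ∉ closure (repellingPts g U') := by
    intro x hx hxR
    rw [hM0o.frontier_eq] at hx
    rcases hRFG _ (hRep x hxR) with h | h
    · exact hx.2 (self_subset_thickening hε _ (Or.inl h))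
    · exact (hεO (hclM0 hx.1)).2 h
  set M1 := connectedComponentIn M0 q with hM1
  have hM1o : IsOpen M1 := hM0o.connectedComponentIn
  have hEM1 : E ⊆ M1 := hEc.2.subset_connectedComponentIn hqE hEM0
  have hM1M0 : M1 ⊆ M0 := connectedComponentIn_subset _ _
  have hclM1 : closure M1 ⊆ cthickening ε Y := (closure_mono hM1M0).trans hclM0
  have hM1c : IsCompact (closure M1) :=
    hYc.cthickening.of_isClosed_subset isClosed_closure hclM1
  have hfrM1 : frontier M1 ⊆ frontier M0 := by
    intro x hx
    rw [hM0o.frontier_eq]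
    refine ⟨closure_mono hM1M0 hx.1, ?_⟩
    have := cc_frontier hM0o.isClosed_compl q
    rw [compl_compl] at this
    exact this hx
  have hM1int : M1 ⊆ interior (hull (closure M1)) :=
    interior_maximal (subset_closure.trans (subset_hull _)) hM1o
  refine pl_of_sep H (Hh := hull (closure M1)) (isCompact_hull hM1c)
    (isConnected_hull hM1c (IsConnected.closure ⟨⟨q, hEM1 hqE⟩, isPreconnected_connectedComponentIn⟩))
    (hull_hull hM1c) (fullU H _ (hclM1.trans (hεO.trans inter_subset_left)) hM1c)
    (((subset_insert _ _).trans hXE).trans (hEM1.trans hM1int)) hq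
    (interior_subset (hM1int (hEM1 hqE))) ?_
  intro y hy
  exact hfrM0 y (hfrM1 (frontier_closure_subset (frontier_hull_subset hM1c hy)))

end dyn

/-- **Corollary.** If `g : U' → U` admits no polynomial-like restriction to a neighborhood
of its postcritical set (no topological disks `V', V ⊆ U` with `P_g ⊆ V'`, `V' = g⁻¹(V)`,
`closure V' ⊆ V`), then `R_g` contains a nontrivial continuum which meets the range `U` as
well as its boundary `∂U` (taken in the Riemann sphere). -/
theorem repelling_continuum_of_no_polyLike {g : ℂ → ℂ} {U' U : Set ℂ} {d : ℕ}
    (H : PLSetting g U' U d)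
    (hno : ¬ ∃ V' V : Set ℂ, IsTopDisk V' ∧ IsTopDisk V ∧ V ⊆ U ∧
      postCrit g U' ⊆ V' ∧ V' = U' ∩ g ⁻¹' V ∧ closure V' ⊆ V) :
    ∃ C : Set (OnePoint ℂ), C ⊆ sphereRepClosure g U' ∧ IsCompact C ∧ IsConnected C ∧
      C.Nontrivial ∧
      (C ∩ (fun z : ℂ => (z : OnePoint ℂ)) '' U).Nonempty ∧
      (C ∩ frontier ((fun z : ℂ => (z : OnePoint ℂ)) '' U)).Nonempty := by
  by_contra hcon
  exact hno (main_aux H hcon)
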